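/- arXiv:0712.2153 — 5 statements merged into one kernel-verified Lean document; each statement's English description precedes it below -/
import Mathlib

section
/- Let ρ ≥ 3 be an integer and set n = 2ρ+2. Let G be a group containing elements t_0, t_1, …, t_{2ρ+1} such that: (i) t_i t_j = t_j t_i for all 1 ≤ i, j ≤ 2ρ+1 with |i−j| ≥ 2; (ii) t_i t_{i+1} t_i = t_{i+1} t_i t_{i+1} for all 1 ≤ i ≤ 2ρ; (iii) t_0 t_i = t_i t_0 for all 1 ≤ i ≤ 2ρ+1 with i ≠ 4; (iv) t_0 t_4 t_0 = t_4 t_0 t_4; (v) G is generated by t_0, t_1, …, t_{2ρ}; (vi) G is perfect, i.e. G equals its commutator subgroup. Then every group homomorphism φ : G → Sym_{4ρ+4} is trivial. -/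
open Equiv

structure BrChain {G : Type*} [Group G] (M : ℕ) (b : ℕ → G) : Prop where
  comm : ∀ i j, i + 2 ≤ j → j < M → b i * b j = b j * b i
  braid : ∀ i, i + 1 < M → b i * b (i+1) * b i = b (i+1) * b i * b (i+1)

lemma eq_of_braid_comm {G : Type*} [Group G] {x y : G} (h : x * y * x = y * x * y)
    (hc : x * y = y * x) : x = y := by
  rw [hc] at h
  have h2 : y * x * x = y * x * y := h
  exact mul_left_cancel h2

/-- collapse: two adjacent equal implies all equal -/
lemma BrChain.collapse {G : Type*} [Group G] {M : ℕ} {b : ℕ → G} (hb : BrChain M b)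
    (k : ℕ) (hk : k + 1 < M) (h : b k = b (k+1)) : ∀ i j, i < M → j < M → b i = b j := by
  have up : ∀ k, k + 2 < M → b k = b (k+1) → b (k+1) = b (k+2) := by
    intro k hk h
    refine eq_of_braid_comm (hb.braid (k+1) (by omega)) ?_
    rw [← h]; exact hb.comm k (k+2) (by omega) (by omega)
  have down : ∀ k, k + 2 < M → b (k+1) = b (k+2) → b k = b (k+1) := by
    intro k hk h
    refine eq_of_braid_comm (hb.braid k (by omega)) ?_
    rw [h]; exact hb.comm k (k+2) (by omega) (by omega)
  have h0 : b 0 = b 1 := by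
    revert hk h
    induction k with
    | zero => intro _ h; exact h
    | succ n ih => intro hk h; exact ih (by omega) (down n (by omega) h)
  have h1 : ∀ i, i + 1 < M → b i = b (i+1) := by
    intro i
    induction i with
    | zero => intro _; exact h0
    | succ n ih => intro hi; exact up n (by omega) (ih (by omega))
  have h2 : ∀ i, i < M → b i = b 0 := by
    intro i
    induction i with
    | zero => intro _; rfl
    | succ n ih => intro hi; rw [← h1 n hi]; exact ih (by omega)
  intro i j hi hj
  rw [h2 i hi, h2 j hj]

def ArtinL (M : ℕ) : Prop := ∀ (Y : Type) [Fintype Y] (b : ℕ → Perm Y), BrChain M b →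
  Fintype.card Y ≤ M → ∀ i j, i < M → j < M → b i = b j

section orb
variable {X : Type} (A : Subgroup (Perm X)) (p : X → Prop)

def orbS : Setoid {x // p x} where
  r x y := ∃ f ∈ A, f x.1 = y.1
  iseqv := {
    refl := fun x => ⟨1, A.one_mem, rfl⟩
    symm := by
      rintro x y ⟨f, hf, h⟩
      exact ⟨f⁻¹, A.inv_mem hf, by rw [← h]; simp⟩
    trans := by
      rintro x y z ⟨f, hf, h⟩ ⟨g, hg, h'⟩
      exact ⟨g * f, A.mul_mem hg hf, by rw [← h', ← h]; rfl⟩ }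

def orbPerm (b : Perm X) (hp : ∀ x, p (b x) ↔ p x) (hA : ∀ f ∈ A, f * b = b * f) :
    Perm (Quotient (orbS A p)) :=
  Quotient.congr (b.subtypePerm hp) (by
    intro x y
    constructor
    · rintro ⟨f, hf, h⟩
      refine ⟨f, hf, ?_⟩
      have := congrArg (fun g : Perm X => g x.1) (hA f hf)
      simp only [Perm.mul_apply] at this
      simp [this, h]
    · rintro ⟨f, hf, h⟩
      refine ⟨f, hf, ?_⟩
      have := congrArg (fun g : Perm X => g x.1) (hA f hf)
      simp only [Perm.mul_apply] at this
      simp [this] at h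
      exact h)

lemma orbPerm_mk (b : Perm X) (hp : ∀ x, p (b x) ↔ p x) (hA : ∀ f ∈ A, f * b = b * f)
    (x : {x // p x}) : orbPerm A p b hp hA (Quotient.mk _ x) =
      Quotient.mk _ (⟨b x.1, (hp x.1).2 x.2⟩ : {x // p x}) := rfl

lemma orb_card [Fintype X] (q N : ℕ) [Fintype {x // p x}] [Fintype (Quotient (orbS A p))]
    (hpA : ∀ f ∈ A, ∀ x, p x → p (f x))
    (hT : ∀ x, p x → ∃ T : Finset X, q ≤ T.card ∧ ∀ y ∈ T, ∃ f ∈ A, f x = y)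
    (hc : Fintype.card {x // p x} < q * (N + 1)) : Fintype.card (Quotient (orbS A p)) ≤ N := by
  classical
  have h1 : q * Fintype.card (Quotient (orbS A p)) ≤ Fintype.card {x // p x} := by
    have := Finset.mul_card_image_le_card_of_maps_to (s := (Finset.univ : Finset {x // p x}))
      (t := (Finset.univ : Finset (Quotient (orbS A p)))) (f := fun x => Quotient.mk _ x)
      (fun _ _ => Finset.mem_univ _) q ?_
    · simpa using this
    · intro y _
      induction y using Quotient.inductionOn with
      | h x =>
        obtain ⟨T, hTc, hTm⟩ := hT x.1 x.2
        have hTp : ∀ y ∈ T, p y := by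
          intro y hy
          obtain ⟨f, hf, rfl⟩ := hTm y hy
          exact hpA f hf _ x.2
        have e : (T.subtype p).card = T.card := by
          rw [Finset.card_subtype, Finset.filter_true_of_mem hTp]
        rw [← e] at hTc
        refine hTc.trans (Finset.card_le_card ?_)
        intro z hz
        rw [Finset.mem_subtype] at hz
        simp only [Finset.mem_filter, Finset.mem_univ, true_and]
        obtain ⟨f, hf, h⟩ := hTm _ hz
        exact (Quotient.sound ⟨f, hf, h⟩ : Quotient.mk (orbS A p) x = Quotient.mk _ z).symm
  by_contra hh
  have : q * (N+1) ≤ q * Fintype.card (Quotient (orbS A p)) := Nat.mul_le_mul_left _ (by omega)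
  omega
end orb

lemma pcomm {X : Type} {f g : Perm X} (h : f * g = g * f) (x : X) : f (g x) = g (f x) :=
  congrArg (fun k : Perm X => k x) h

lemma pbraid {X : Type} {f g : Perm X} (h : f * g * f = g * f * g) (x : X) :
    f (g (f x)) = g (f (g x)) :=
  congrArg (fun k : Perm X => k x) h

lemma agree_aux {X : Type} [Fintype X] {M q : ℕ} (hL : ArtinL M) (hM : 4 ≤ M) {b : ℕ → Perm X}
    (hb : BrChain M b) (A : Subgroup (Perm X)) (hAc : ∀ f ∈ A, ∀ g ∈ A, f * g = g * f)
    (hAb : ∀ i, ∀ f ∈ A, f * b i = b i * f) (p : X → Prop)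
    (hpA : ∀ f ∈ A, ∀ x, p x → p (f x)) (hpb : ∀ i x, p (b i x) ↔ p x)
    (hT : ∀ x, p x → ∃ T : Finset X, q ≤ T.card ∧ ∀ y ∈ T, ∃ f ∈ A, f x = y)
    (hc : Nat.card {x // p x} < q * (M + 1)) :
    ∀ i j, i < M → j < M → ∀ x, p x → b i x = b j x := by
  classical
  rw [Nat.card_eq_fintype_card] at hc
  have hcard := orb_card A p q M hpA hT hc
  have hq : BrChain M (fun i => orbPerm A p (b i) (hpb i) (hAb i)) := by
    constructor
    · intro i j hij hj
      ext y
      induction y using Quotient.inductionOn with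
      | h x =>
        simp only [Perm.mul_apply, orbPerm_mk, pcomm (hb.comm i j hij hj)]
    · intro i hi
      ext y
      induction y using Quotient.inductionOn with
      | h x =>
        simp only [Perm.mul_apply, orbPerm_mk, pbraid (hb.braid i hi)]
  have hall := hL _ _ hq hcard
  have key : ∀ i j, i < M → j < M → ∀ x, p x → ∃ f ∈ A, f (b i x) = b j x := by
    intro i j hi hj x hx
    have := congrArg (fun g : Perm _ => g (Quotient.mk _ (⟨x, hx⟩ : {x // p x}))) (hall i j hi hj)
    simp only [orbPerm_mk] at this
    exact Quotient.exact this
  let r : ℕ → Perm {x // p x} := fun i => (b i).subtypePerm (hpb i)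
  have hr : BrChain M r := by
    constructor
    · intro i j hij hj
      ext x
      exact pcomm (hb.comm i j hij hj) x.1
    · intro i hi
      ext x
      exact pbraid (hb.braid i hi) x.1
  have h23 : r 2 = r 3 := by
    refine eq_of_braid_comm (hr.braid 2 (by omega)) ?_
    ext ⟨x, hx⟩
    simp only [r, Perm.mul_apply, Perm.subtypePerm_apply]
    obtain ⟨f, hf, h3⟩ := key 0 3 (by omega) (by omega) x hx
    obtain ⟨g, hg, h2⟩ := key 0 2 (by omega) (by omega) x hx
    have c2 := pcomm (hb.comm 0 2 (by omega) (by omega))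
    have c3 := pcomm (hb.comm 0 3 (by omega) (by omega))
    rw [← h3, ← h2, ← pcomm (hAb 2 f hf), ← pcomm (hAb 3 g hg), ← c2, ← c3, ← h2, ← h3,
      ← pcomm (hAb 0 f hf), ← pcomm (hAb 0 g hg), pcomm (hAc f hf g hg)]
  intro i j hi hj x hx
  have := hr.collapse 2 (by omega) h23 i j hi hj
  have := congrArg (fun g : Perm _ => (g ⟨x, hx⟩).1) this
  simpa [r] using this

lemma agree_on {X : Type} [Fintype X] {M : ℕ} (q : ℕ) (hL : ArtinL M) (hM : 4 ≤ M) {b : ℕ → Perm X}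
    (hb : BrChain M b) (A : Subgroup (Perm X)) (hAc : ∀ f ∈ A, ∀ g ∈ A, f * g = g * f)
    (hAb : ∀ i < M, ∀ f ∈ A, f * b i = b i * f) (p : X → Prop)
    (hpA : ∀ f ∈ A, ∀ x, p x → p (f x)) (hpb : ∀ i < M, ∀ x, p (b i x) ↔ p x)
    (hT : ∀ x, p x → ∃ T : Finset X, q ≤ T.card ∧ ∀ y ∈ T, ∃ f ∈ A, f x = y)
    (hc : Nat.card {x // p x} < q * (M + 1)) :
    ∀ i j, i < M → j < M → ∀ x, p x → b i x = b j x := by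
  have := agree_aux (q := q) hL hM (b := fun i => if i < M then b i else 1) (by
    constructor
    · intro i j hij hj
      simp only [hj, show i < M by omega, if_true]
      exact hb.comm i j hij hj
    · intro i hi
      simp only [hi, show i < M by omega, if_true]
      exact hb.braid i hi) A hAc (by
    intro i f hf
    split_ifs with h
    · exact hAb i h f hf
    · simp) p hpA (by
    intro i x
    split_ifs with h
    · exact hpb i h x
    · simp) hT hc
  intro i j hi hj x hx
  simpa [hi, hj] using this i j hi hj x hx

/-- the base case -/
lemma base5 {Y : Type} [Fintype Y] (hY : Fintype.card Y ≤ 5) {w x y : Perm Y}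
    (hw : ∀ z, w z ≠ z) (hx : w * x = x * w) (hy : w * y = y * w)
    (hxy : x * y * x = y * x * y) : x = y := by
  classical
  let A := Subgroup.zpowers w
  let p : Y → Prop := fun _ => True
  have hAx : ∀ f ∈ A, f * x = x * f := by
    rintro _ ⟨k, rfl⟩
    exact ((show Commute w x from hx).zpow_left k)
  have hAy : ∀ f ∈ A, f * y = y * f := by
    rintro _ ⟨k, rfl⟩
    exact ((show Commute w y from hy).zpow_left k)
  have hAA : ∀ f ∈ A, ∀ g ∈ A, f * g = g * f := by
    rintro _ ⟨k, rfl⟩ _ ⟨l, rfl⟩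
    exact ((Commute.refl w).zpow_zpow k l)
  have hcard : Fintype.card (Quotient (orbS A p)) ≤ 2 := by
    refine orb_card A p 2 2 (fun _ _ _ _ => trivial) ?_ ?_
    · intro z _
      refine ⟨{z, w z}, by rw [Finset.card_pair (hw z).symm], ?_⟩
      intro t ht
      simp only [Finset.mem_insert, Finset.mem_singleton] at ht
      rcases ht with rfl | rfl
      · exact ⟨1, A.one_mem, rfl⟩
      · exact ⟨w, Subgroup.mem_zpowers w, rfl⟩
    · have := Fintype.card_subtype_le p
      omega
  have two : ∀ (Q : Type) [Fintype Q], Fintype.card Q ≤ 2 → ∀ f g : Perm Q,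
      f * g * f = g * f * g → f = g ∧ f * f = 1 := by
    intro Q _ hQ f g h
    have e : ∀ n ≤ 2, ∀ f g : Perm (Fin n), f * g * f = g * f * g → f = g ∧ f * f = 1 := by
      intro n hn
      interval_cases n <;> decide
    let E := (Fintype.equivFin Q).permCongrHom
    have := e _ hQ (E f) (E g) (by rw [← map_mul, ← map_mul, h, map_mul, map_mul])
    refine ⟨E.injective this.1, E.injective ?_⟩
    rw [map_mul, this.2, map_one]
  let X' := orbPerm A p x (fun _ => Iff.rfl) hAx
  let Y' := orbPerm A p y (fun _ => Iff.rfl) hAy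
  obtain ⟨h1, h2⟩ := two _ hcard X' Y' (by
    ext z
    induction z using Quotient.inductionOn with
    | h z => simp only [X', Y', Perm.mul_apply, orbPerm_mk, pbraid hxy])
  have exy : ∀ z, ∃ f ∈ A, f z = x (y z) := by
    intro z
    have : X' (Y' (Quotient.mk _ (⟨z, trivial⟩ : {x // p x}))) = Quotient.mk _ ⟨z, trivial⟩ := by
      rw [← h1, ← Perm.mul_apply, h2]; rfl
    simp only [X', Y', orbPerm_mk] at this
    exact Quotient.exact this.symm
  have exx : ∀ z, ∃ f ∈ A, f z = x (x z) := by
    intro z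
    have : X' (X' (Quotient.mk _ (⟨z, trivial⟩ : {x // p x}))) = Quotient.mk _ ⟨z, trivial⟩ := by
      rw [← Perm.mul_apply, h2]; rfl
    simp only [X', orbPerm_mk] at this
    exact Quotient.exact this.symm
  have exq : ∀ z, ∃ f ∈ A, f (x z) = y z := by
    intro z
    have : X' (Quotient.mk _ (⟨z, trivial⟩ : {x // p x})) = Y' (Quotient.mk _ ⟨z, trivial⟩) := by
      rw [h1]
    simp only [X', Y', orbPerm_mk] at this
    exact Quotient.exact this
  by_cases hpres : ∀ z, ∃ f ∈ A, f z = x z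
  · apply eq_of_braid_comm hxy
    ext z
    obtain ⟨f, hf, hfz⟩ := hpres z
    obtain ⟨g, hg, hgz⟩ := exq z
    simp only [Perm.mul_apply]
    rw [← hgz, ← pcomm (hAx g hg), ← hfz, ← pcomm (hAx f hf), ← pcomm (hAy f hf), ← hgz,
       ← hfz, pcomm (hAA g hg f hf)]
  · push Not at hpres
    obtain ⟨z, hz⟩ := hpres
    -- w^2 = 1 on z
    have hcase : ∀ t, (∃ f ∈ A, f z = t) ∨ (∃ f ∈ A, f (x z) = t) := by
      by_contra hh
      push Not at hh
      obtain ⟨t, ht1, ht2⟩ := hh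
      have : 2 < Fintype.card (Quotient (orbS A p)) := by
        rw [Fintype.two_lt_card_iff]
        refine ⟨Quotient.mk _ ⟨z, trivial⟩, Quotient.mk _ ⟨x z, trivial⟩, Quotient.mk _ ⟨t, trivial⟩, ?_, ?_, ?_⟩
        · intro h
          obtain ⟨f, hf, h⟩ := Quotient.exact h
          exact hz f hf h
        · intro h
          obtain ⟨f, hf, h⟩ := Quotient.exact h
          exact ht1 f hf h
        · intro h
          obtain ⟨f, hf, h⟩ := Quotient.exact h
          exact ht2 f hf h
      omega
    have wz : w (w z) = z := by
      by_contra hne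
      have hd : ∀ k l : ℕ, (w^k) z ≠ (w^l) (x z) := by
        intro k l h
        refine hz ((w^l)⁻¹ * w^k) (A.mul_mem (A.inv_mem (A.pow_mem (Subgroup.mem_zpowers w) _)) (A.pow_mem (Subgroup.mem_zpowers w) _)) ?_
        rw [Perm.mul_apply, h]; simp
      have n1 := hw z
      have n2 := hw (w z)
      have i1 : w (x z) = x (w z) := pcomm hx z
      have i2 : w (w (x z)) = x (w (w z)) := by rw [i1]; exact pcomm hx _
      have n3 : w (w (x z)) ≠ x z := by rw [i2]; exact fun h => hne (x.injective h)
      have n4 := hw (x z)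
      have n5 := hw (w (x z))
      have d00 := hd 0 0
      have d01 := hd 0 1
      have d02 := hd 0 2
      have d10 := hd 1 0
      have d11 := hd 1 1
      have d12 := hd 1 2
      have d20 := hd 2 0
      have d21 := hd 2 1
      have d22 := hd 2 2
      simp only [pow_zero, pow_one, pow_two, Perm.mul_apply, Perm.one_apply] at d00 d01 d02 d10 d11 d12 d20 d21 d22
      have : ({z, w z, w (w z), x z, w (x z), w (w (x z))} : Finset Y).card = 6 := by
        rw [Finset.card_insert_of_notMem, Finset.card_insert_of_notMem, Finset.card_insert_of_notMem,
          Finset.card_insert_of_notMem, Finset.card_pair]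
        all_goals try simp only [Finset.mem_insert, Finset.mem_singleton, not_or]
        · exact n5.symm
        · exact ⟨n4.symm, n3.symm⟩
        · exact ⟨d20, d21, d22⟩
        · exact ⟨n2.symm, d10, d11, d12⟩
        · exact ⟨n1.symm, fun h => hne h.symm, d00, d01, d02⟩
      have := Finset.card_le_univ ({z, w z, w (w z), x z, w (x z), w (w (x z))} : Finset Y)
      omega
    have ww : w * w = 1 := by
      ext t
      have hwA : w ∈ A := Subgroup.mem_zpowers w
      rw [Perm.mul_apply, Perm.one_apply]
      rcases hcase t with ⟨f, hf, rfl⟩ | ⟨f, hf, rfl⟩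
      · rw [pcomm (hAA w hwA f hf), pcomm (hAA w hwA f hf), wz]
      · rw [pcomm (hAA w hwA f hf), pcomm (hAA w hwA f hf), pcomm hx, pcomm hx, wz]
    have sq : ∀ f ∈ A, f * f = 1 := by
      rintro _ ⟨k, rfl⟩
      show w^k * w^k = 1
      rw [← (Commute.refl w).mul_zpow, ww, one_zpow]
    have e1 : (x * y) * (x * y) = 1 := by
      ext t
      obtain ⟨f, hf, h⟩ := exy t
      simp only [Perm.mul_apply]
      rw [← h, ← pcomm (hAy f hf), ← pcomm (hAx f hf), ← h, ← Perm.mul_apply, sq f hf]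
    have e2 : (x * x) * (x * x) = 1 := by
      ext t
      obtain ⟨f, hf, h⟩ := exx t
      simp only [Perm.mul_apply]
      rw [← h, ← pcomm (hAx f hf), ← pcomm (hAx f hf), ← h, ← Perm.mul_apply, sq f hf]
    have e3 : (x * x) * (y * x) = 1 := by
      rw [← e1]
      calc (x * x) * (y * x) = x * (x * y * x) := by group
        _ = x * (y * x * y) := by rw [hxy]
        _ = _ := by group
    have e4 : x * x = y * x := mul_left_cancel (e2.trans e3.symm)
    exact mul_right_cancel e4

lemma BrChain.rev {G : Type*} [Group G] {M : ℕ} {b : ℕ → G} (hb : BrChain M b) :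
    BrChain M (fun i => b (M - 1 - i)) := by
  constructor
  · intro i j hij hj
    exact (hb.comm (M-1-j) (M-1-i) (by omega) (by omega)).symm
  · intro i hi
    have := hb.braid (M-1-(i+1)) (by omega)
    rw [show M-1-(i+1)+1 = M-1-i by omega] at this
    exact this.symm

lemma BrChain.shift {G : Type*} [Group G] {M : ℕ} {b : ℕ → G} (hb : BrChain M b) (k : ℕ) :
    BrChain (M-k) (fun i => b (i+k)) := by
  constructor
  · intro i j hij hj
    exact hb.comm (i+k) (j+k) (by omega) (by omega)
  · intro i hi
    have := hb.braid (i+k) (by omega)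
    rw [show i+k+1 = i+1+k by omega] at this
    exact this

lemma artin_claimA {M : ℕ} (hM : 5 ≤ M) (ih : 7 ≤ M → ArtinL (M-2)) (hodd : M ≠ 6) {Y : Type} [Fintype Y]
    {b : ℕ → Perm Y} (hb : BrChain M b) (hY : Fintype.card Y ≤ M) :
    ∀ i j, 2 ≤ i → i < M → 2 ≤ j → j < M → ∀ x, b 0 x ≠ x → b i x = b j x := by
  classical
  have hinv : ∀ i, 2 ≤ i → i < M → ∀ x, b 0 (b i x) ≠ b i x ↔ b 0 x ≠ x := by
    intro i h2 hi x
    rw [pcomm (hb.comm 0 i (by omega) hi)]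
    simp
  have hle : Fintype.card {x // b 0 x ≠ x} ≤ M := (Fintype.card_subtype_le _).trans hY
  by_cases h7 : 7 ≤ M
  · have := agree_on 2 (ih h7) (by omega) (hb.shift 2) (Subgroup.zpowers (b 0)) (by
      rintro _ ⟨k, rfl⟩ _ ⟨l, rfl⟩
      exact ((Commute.refl (b 0)).zpow_zpow k l)) (by
      rintro i hi _ ⟨k, rfl⟩
      exact (show Commute (b 0) (b (i+2)) from hb.comm 0 (i+2) (by omega) (by omega)).zpow_left k)
      (fun x => b 0 x ≠ x) (by
      rintro _ ⟨k, rfl⟩ x hx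
      show b 0 ((b 0 ^ k) x) ≠ (b 0 ^ k) x
      rw [pcomm ((Commute.refl (b 0)).zpow_right k : b 0 * b 0 ^ k = b 0 ^ k * b 0)]
      simpa using hx) (fun i hi x => hinv (i+2) (by omega) (by omega) x) (by
      intro x hx
      refine ⟨{x, b 0 x}, by rw [Finset.card_pair hx.symm], ?_⟩
      intro t ht
      simp only [Finset.mem_insert, Finset.mem_singleton] at ht
      rcases ht with rfl | rfl
      · exact ⟨1, Subgroup.one_mem _, rfl⟩
      · exact ⟨b 0, Subgroup.mem_zpowers _, rfl⟩) (by
      rw [Nat.card_eq_fintype_card]; omega)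
    intro i j hi hi' hj hj' x hx
    have := this (i-2) (j-2) (by omega) (by omega) x hx
    simpa [show i - 2 + 2 = i by omega, show j - 2 + 2 = j by omega] using this
  · have hM5 : M = 5 := by omega
    subst hM5
    have hadj : ∀ i, 2 ≤ i → i + 1 < 5 → ∀ x, b 0 x ≠ x → b i x = b (i+1) x := by
      intro i h2 hi x hx
      have := base5 (Y := {x // b 0 x ≠ x}) hle
        (w := (b 0).subtypePerm (p := fun x => b 0 x ≠ x) (by intro x; simp))
        (x := (b i).subtypePerm (p := fun x => b 0 x ≠ x) (hinv i h2 (by omega)))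
        (y := (b (i+1)).subtypePerm (p := fun x => b 0 x ≠ x) (hinv (i+1) (by omega) (by omega)))
        (by
          rintro ⟨z, hz⟩ h
          exact hz (congrArg Subtype.val h))
        (by ext z; exact pcomm (hb.comm 0 i (by omega) (by omega)) z.1)
        (by ext z; exact pcomm (hb.comm 0 (i+1) (by omega) (by omega)) z.1)
        (by ext z; exact pbraid (hb.braid i hi) z.1)
      exact congrArg (fun g : Perm {x // b 0 x ≠ x} => (g ⟨x, hx⟩).1) this
    have h23 := hadj 2 (by omega) (by omega)
    have h34 := hadj 3 (by omega) (by omega)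
    intro i j hi hi' hj hj' x hx
    have e1 := h23 x hx
    have e2 := h34 x hx
    interval_cases i <;> interval_cases j <;> simp_all

lemma conj_braid {X : Type} {f g : Perm X} (h : f * g * f = g * f * g) (x : X) :
    f (g (f x)) = g (f (g x)) := pbraid h x

lemma artin_step {M : ℕ} (hM : 5 ≤ M) (ih : 7 ≤ M → ArtinL (M-2)) (hodd : Odd M) : ArtinL M := by
  intro Y _ b hb hY
  classical
  have h6 : M ≠ 6 := by rintro rfl; revert hodd; decide
  refine hb.collapse 0 (by omega) ?_
  have cA := artin_claimA hM ih h6 hb hY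
  have cB : ∀ i j, i + 3 ≤ M → j + 3 ≤ M → ∀ x, b (M-1) x ≠ x → b i x = b j x := by
    intro i j hi hj x hx
    have := artin_claimA hM ih h6 hb.rev hY (M-1-i) (M-1-j) (by omega) (by omega) (by omega) (by omega) x
      (by simpa using hx)
    simpa [show M-1-(M-1-i) = i by omega, show M-1-(M-1-j) = j by omega] using this
  let D : Y → Prop := fun x => b 0 x ≠ x ∧ b (M-1) x ≠ x
  have hDall : ∀ x, D x → ∀ i, i < M → b i x = b 2 x := by
    rintro x ⟨h0, h1⟩ i hi
    by_cases h : 2 ≤ i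
    · exact cA i 2 h hi le_rfl (by omega) x h0
    · exact cB i 2 (by omega) (by omega) x h1
  have hD2 : ∀ x, D (b 2 x) ↔ D x := by
    intro x
    show (b 0 (b 2 x) ≠ b 2 x ∧ b (M-1) (b 2 x) ≠ b 2 x) ↔ (b 0 x ≠ x ∧ b (M-1) x ≠ x)
    rw [pcomm (hb.comm 0 2 (by omega) (by omega)), ← pcomm (hb.comm 2 (M-1) (by omega) (by omega))]
    simp
  have hD : ∀ i, i < M → ∀ x, D (b i x) ↔ D x := by
    intro i hi x
    constructor
    · intro h
      obtain ⟨y, hy⟩ := (b 2).surjective (b i x)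
      have hDy : D y := by rw [← hD2, hy]; exact h
      have := hDall y hDy i hi
      rw [hy] at this
      rw [← (b i).injective this]; exact hDy
    · intro h
      rw [hDall x h i hi, hD2]; exact h
  -- g = b i * b (i+1) conjugates b i to b (i+1)
  have hconj : ∀ i, i + 1 < M → ∀ x, b (i+1) (b i (b (i+1) x)) = b i (b (i+1) (b i x)) :=
    fun i hi x => (pbraid (hb.braid i hi) x).symm
  have hdisj : ∀ i j, i + 2 ≤ j → j < M → ∀ x, b i x ≠ x → b j x ≠ x → D x := by
    intro i
    induction i with
    | zero =>
      intro j hj hjM x h0 h1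
      refine ⟨h0, ?_⟩
      rw [cA (M-1) j (by omega) (by omega) (by omega) hjM x h0]
      exact h1
    | succ n ihn =>
      intro j hj hjM x h0 h1
      obtain ⟨y, rfl⟩ := (b n * b (n+1)).surjective x
      simp only [Perm.mul_apply] at h0 h1 ⊢
      rw [hconj n (by omega)] at h0
      rw [← pcomm (hb.comm n j (by omega) hjM), ← pcomm (hb.comm (n+1) j (by omega) hjM)] at h1
      rw [hD n (by omega), hD (n+1) (by omega)]
      exact ihn j (by omega) hjM y (fun h => h0 (by rw [h])) (fun h => h1 (by rw [h]))
  by_cases hS : ∃ x, b 0 x ≠ x ∧ ¬ D x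
  · exfalso
    have hex : ∀ i, i < M → ∃ x, b i x ≠ x ∧ ¬ D x := by
      intro i
      induction i with
      | zero => intro _; exact hS
      | succ n ihn =>
        intro hn
        obtain ⟨x, hx, hDx⟩ := ihn (by omega)
        refine ⟨b n (b (n+1) x), ?_, ?_⟩
        · rw [hconj n hn]
          intro h
          exact hx ((b (n+1)).injective ((b n).injective h))
        · rw [hD n (by omega), hD (n+1) hn]; exact hDx
    obtain ⟨m, rfl⟩ := hodd
    have hex' : ∀ k : Fin (m+1), ∃ x, b (2*k.1) x ≠ x ∧ ¬ D x := fun k => hex _ (by omega)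
    choose pt hpt hptD using hex'
    let F : Fin (m+1) × Bool → Y := fun k => if k.2 then b (2*k.1.1) (pt k.1) else pt k.1
    have hF1 : ∀ k, b (2*k.1.1) (F k) ≠ F k := by
      rintro ⟨k, c⟩
      cases c
      · simpa [F] using hpt k
      · simpa [F] using hpt k
    have hF2 : ∀ k, ¬ D (F k) := by
      rintro ⟨k, c⟩
      cases c
      · simpa [F] using hptD k
      · simp only [F, if_true]
        rw [hD _ (by omega)]; exact hptD k
    have hinj : Function.Injective F := by
      intro k l hkl
      have e : k.1 = l.1 := by
        by_contra hne
        have h1 := hF1 k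
        have h2 := hF1 l
        rw [← hkl] at h2
        have hne' : k.1.1 ≠ l.1.1 := fun h => hne (Fin.ext h)
        rcases Nat.lt_or_gt_of_ne hne' with h | h
        · exact hF2 k (hdisj _ _ (by omega) (by omega) _ h1 h2)
        · exact hF2 k (hdisj _ _ (by omega) (by omega) _ h2 h1)
      obtain ⟨k, c⟩ := k
      obtain ⟨l, d⟩ := l
      dsimp only at e
      subst e
      cases c <;> cases d <;> simp only [F, if_true, Bool.false_eq_true, if_false] at hkl
      · rfl
      · exact absurd hkl.symm (hpt k)
      · exact absurd hkl (hpt k)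
      · rfl
    have := Fintype.card_le_of_injective F hinj
    simp at this
    omega
  · push Not at hS
    ext x
    by_cases hx : D x
    · rw [hDall x hx 0 (by omega), hDall x hx 1 (by omega)]
    · have h0 : b 0 x = x := by
        by_contra h; exact hx (hS x h)
      have h1 : b 1 x = x := by
        by_contra h
        obtain ⟨y, rfl⟩ := (b 0 * b 1).surjective x
        simp only [Perm.mul_apply] at h hx
        rw [hconj 0 (by omega)] at h
        rw [hD 0 (by omega), hD 1 (by omega)] at hx
        exact hx (hS y (fun h' => h (by rw [h'])))
      rw [h0, h1]

lemma artin (m : ℕ) : ArtinL (2*m+5) := by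
  induction m with
  | zero => exact artin_step (by omega) (by omega) (by decide)
  | succ n ih =>
    refine artin_step (by omega) (fun _ => ?_) ⟨n+3, by omega⟩
    rw [show 2*(n+1)+5-2 = 2*n+5 by omega]; exact ih

lemma star {X : Type} [Fintype X] {M : ℕ} (hL : ArtinL M) (hM : 5 ≤ M)
    (hX : Fintype.card X ≤ 2*M+6) {a b : Perm X} (hab : a * b * a = b * a * b) {c : ℕ → Perm X}
    (hc : BrChain M c) (hca : ∀ i < M, a * c i = c i * a) (hcb : ∀ i < M, b * c i = c i * b)
    (g : Perm X) (hga : g * a = c 1 * g) (hgb : g * b = c 2 * g) :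
    ∀ i j, i < M → j < M → ∀ x, a x ≠ b x → c i x = c j x := by
  classical
  obtain ⟨w, hw⟩ : ∃ w, w = b⁻¹ * a := ⟨_, rfl⟩
  have hwc : ∀ i < M, w * c i = c i * w := by
    intro i hi
    rw [hw]
    exact ((show Commute b (c i) from hcb i hi).inv_left.mul_left (hca i hi))
  have hwx : ∀ x, w x = x ↔ a x = b x := by
    intro x
    rw [hw, Perm.mul_apply, Perm.inv_eq_iff_eq]
  have hwi : ∀ i < M, ∀ x, w (c i x) = c i x ↔ w x = x := by
    intro i hi x
    rw [pcomm (hwc i hi)]; simp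
  have hwwi : ∀ i < M, ∀ x, w (w (c i x)) = c i x ↔ w (w x) = x := by
    intro i hi x
    rw [pcomm (hwc i hi), pcomm (hwc i hi)]; simp
  have hZc : ∀ f ∈ Subgroup.zpowers w, ∀ g ∈ Subgroup.zpowers w, f * g = g * f := by
    rintro _ ⟨k, rfl⟩ _ ⟨l, rfl⟩
    exact ((Commute.refl w).zpow_zpow k l)
  have hZb : ∀ i < M, ∀ f ∈ Subgroup.zpowers w, f * c i = c i * f := by
    rintro i hi _ ⟨k, rfl⟩
    exact (show Commute w (c i) from hwc i hi).zpow_left k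
  have hZw : ∀ f ∈ Subgroup.zpowers w, ∀ x, w (f x) = f (w x) := by
    intro f hf x
    exact pcomm (hZc w (Subgroup.mem_zpowers w) f hf) x
  have hsub : ∀ p : X → Prop, Nat.card {x // p x} ≤ 2*M+6 := by
    intro p
    rw [Nat.card_eq_fintype_card]
    exact (Fintype.card_subtype_le p).trans hX
  have h3 := agree_on 3 hL (by omega) hc (Subgroup.zpowers w) hZc hZb (fun x => w (w x) ≠ x)
    (by
      intro f hf x hx
      rw [hZw f hf, hZw f hf]; simpa using hx)
    (fun i hi x => not_congr (hwwi i hi x))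
    (by
      intro x hx
      have n1 : w x ≠ x := by
        intro h; apply hx; rw [h, h]
      refine ⟨{x, w x, w (w x)}, ?_, ?_⟩
      · rw [Finset.card_insert_of_notMem, Finset.card_pair]
        · exact fun h => n1 (w.injective h).symm
        · simp only [Finset.mem_insert, Finset.mem_singleton, not_or]
          exact ⟨n1.symm, fun h => hx h.symm⟩
      · intro t ht
        simp only [Finset.mem_insert, Finset.mem_singleton] at ht
        rcases ht with rfl | rfl | rfl
        · exact ⟨1, Subgroup.one_mem _, rfl⟩
        · exact ⟨w, Subgroup.mem_zpowers _, rfl⟩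
        · exact ⟨w * w, Subgroup.mul_mem _ (Subgroup.mem_zpowers _) (Subgroup.mem_zpowers _), rfl⟩)
    (by have := hsub (fun x => w (w x) ≠ x); omega)
  by_cases h2c : Nat.card {x // w (w x) = x ∧ w x ≠ x} < 2 * (M+1)
  · have h2 := agree_on 2 hL (by omega) hc (Subgroup.zpowers w) hZc hZb
      (fun x => w (w x) = x ∧ w x ≠ x)
      (by
        intro f hf x hx
        rw [hZw f hf, hZw f hf]; simpa using hx)
      (fun i hi x => and_congr (hwwi i hi x) (not_congr (hwi i hi x)))
      (by
        rintro x ⟨-, hx⟩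
        refine ⟨{x, w x}, by rw [Finset.card_pair hx.symm], ?_⟩
        intro t ht
        simp only [Finset.mem_insert, Finset.mem_singleton] at ht
        rcases ht with rfl | rfl
        · exact ⟨1, Subgroup.one_mem _, rfl⟩
        · exact ⟨w, Subgroup.mem_zpowers _, rfl⟩) h2c
    intro i j hi hj x hx
    by_cases hxx : w (w x) = x
    · exact h2 i j hi hj x ⟨hxx, fun h => hx ((hwx x).1 h)⟩
    · exact h3 i j hi hj x hxx
  · have hRc : Nat.card {x // ¬ (w (w x) = x ∧ w x ≠ x)} < 1 * (M+1) := by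
      rw [Nat.card_eq_fintype_card] at h2c ⊢
      rw [Fintype.card_subtype_compl]
      omega
    have h1 := agree_on 1 hL (by omega) hc ⊥ (by simp) (by simp)
      (fun x => ¬ (w (w x) = x ∧ w x ≠ x)) (by simp)
      (fun i hi x => not_congr (and_congr (hwwi i hi x) (not_congr (hwi i hi x))))
      (by
        intro x hx
        exact ⟨{x}, by simp, by simp⟩) hRc
    let R : Finset X := Finset.univ.filter (fun x => ¬ (w (w x) = x ∧ w x ≠ x))
    let Fw : Finset X := Finset.univ.filter (fun x => w x = x)
    let Fv : Finset X := Finset.univ.filter (fun x => c 1 x = c 2 x)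
    have s1 : R ⊆ Fv := by
      intro x hx
      simp only [R, Fv, Finset.mem_filter, Finset.mem_univ, true_and] at hx ⊢
      exact h1 1 2 (by omega) (by omega) x hx
    have s2 : Fw ⊆ R := by
      intro x hx
      simp only [R, Fw, Finset.mem_filter, Finset.mem_univ, true_and] at hx ⊢
      exact fun h => h.2 hx
    have s3 : Fv.card ≤ Fw.card := by
      refine Finset.card_le_card_of_injOn (fun x => g⁻¹ x) ?_ (g⁻¹.injective.injOn)
      intro x hx
      obtain ⟨y, rfl⟩ := g.surjective x
      simp only [Fv, Fw, Finset.coe_filter, Set.mem_setOf_eq, Finset.mem_univ, true_and] at hx ⊢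
      have hgy : g⁻¹ (g y) = y := by simp
      rw [hgy, hwx]
      have e1 : g (a y) = c 1 (g y) := congrArg (fun k : Perm X => k y) hga
      have e2 : g (b y) = c 2 (g y) := congrArg (fun k : Perm X => k y) hgb
      rw [← e1, ← e2] at hx
      exact g.injective hx
    have s4 := Finset.card_le_card s1
    have s5 := Finset.card_le_card s2
    have t1 : R = Fv := Finset.eq_of_subset_of_card_le s1 (by omega)
    have t2 : Fw = R := Finset.eq_of_subset_of_card_le s2 (by omega)
    have f1 : ∀ x, w x = x ↔ c 1 x = c 2 x := by
      intro x
      have : x ∈ Fw ↔ x ∈ Fv := by rw [t2, t1]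
      simpa [Fw, Fv] using this
    have f2 : w * w = 1 := by
      ext x
      show w (w x) = x
      have : x ∈ Fw ↔ x ∈ R := by rw [t2]
      simp only [Fw, R, Finset.mem_filter, Finset.mem_univ, true_and] at this
      by_cases h : w x = x
      · rw [h, h]
      · by_contra h'
        exact h (this.2 (fun h'' => h' h''.1))
    have fa : ∀ x, w (a x) = a x ↔ w x = x := by
      intro x
      rw [f1, f1, ← pcomm (hca 1 (by omega)), ← pcomm (hca 2 (by omega))]; simp
    have fa' : ∀ x, w (a⁻¹ x) = a⁻¹ x ↔ w x = x := by
      intro x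
      rw [← fa]; simp
    obtain ⟨u, hu⟩ : ∃ u, u = a * w * a⁻¹ := ⟨_, rfl⟩
    have hu2 : u * u = 1 := by
      rw [hu]
      calc a * w * a⁻¹ * (a * w * a⁻¹) = a * (w * w) * a⁻¹ := by group
        _ = 1 := by rw [f2]; group
    have huc : ∀ i < M, u * c i = c i * u := by
      intro i hi
      rw [hu]
      have h : Commute a (c i) := hca i hi
      exact ((h.mul_left (hwc i hi)).mul_left h.inv_left)
    have hux : ∀ x, u x = x ↔ w x = x := by
      intro x
      rw [hu, Perm.mul_apply, Perm.mul_apply, ← fa' x]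
      constructor
      · intro h
        conv_rhs => rw [← h]
        simp
      · intro h
        rw [h]; simp
    have huw : u⁻¹ * w = a⁻¹ * a⁻¹ * u * (a * a) := by
      rw [hu, hw]
      have e : b * a⁻¹ * b⁻¹ = a⁻¹ * b⁻¹ * a := by
        have : a⁻¹ * (a * b * a) * a⁻¹ * b⁻¹ = a⁻¹ * (b * a * b) * a⁻¹ * b⁻¹ := by rw [hab]
        have e' : b * a⁻¹ * b⁻¹ * (a⁻¹ * b⁻¹ * a)⁻¹ = b * (a * b * a)⁻¹ * (b * a * b) * b⁻¹ := by
          group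
        rw [hab] at e'
        apply eq_of_mul_inv_eq_one
        rw [e']; group
      calc (a * (b⁻¹ * a) * a⁻¹)⁻¹ * (b⁻¹ * a) = (b * a⁻¹ * b⁻¹) * a := by group
        _ = (a⁻¹ * b⁻¹ * a) * a := by rw [e]
        _ = _ := by group
    have hui : u⁻¹ = u := inv_eq_of_mul_eq_one_left hu2
    have hwi' : w⁻¹ = w := inv_eq_of_mul_eq_one_left f2
    rw [hui] at huw
    have huwsq : (u * w) * (u * w) = 1 := by
      rw [huw]
      calc a⁻¹ * a⁻¹ * u * (a * a) * (a⁻¹ * a⁻¹ * u * (a * a)) = a⁻¹ * a⁻¹ * (u * u) * (a * a) := by group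
        _ = 1 := by rw [hu2]; group
    have hcom : u * w = w * u := by
      have := inv_eq_of_mul_eq_one_left huwsq
      rw [← this, mul_inv_rev, hui, hwi']
    have huwx : ∀ x, u (w x) = x ↔ w x = x := by
      intro x
      have : u (w x) = a⁻¹ (a⁻¹ (u (a (a x)))) := congrArg (fun k : Perm X => k x) huw
      rw [this, Perm.inv_eq_iff_eq, Perm.inv_eq_iff_eq, hux, fa, fa]
    have hxu : ∀ x, w (u x) = u x ↔ w x = x := by
      intro x
      rw [← pcomm hcom]; simp
    let A := Subgroup.closure ({w, u} : Set (Perm X))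
    have hwA : w ∈ A := Subgroup.subset_closure (by simp)
    have huA : u ∈ A := Subgroup.subset_closure (by simp)
    have hcent : ∀ k : Perm X, w * k = k * w → u * k = k * u → ∀ f ∈ A, f * k = k * f := by
      intro k hk1 hk2 f hf
      have : A ≤ Subgroup.centralizer {k} := by
        rw [Subgroup.closure_le]
        rintro z (rfl | rfl)
        · rw [SetLike.mem_coe, Subgroup.mem_centralizer_singleton_iff]; first | exact hk1 | exact hk1.symm
        · rw [SetLike.mem_coe, Subgroup.mem_centralizer_singleton_iff]; first | exact hk2 | exact hk2.symm
      have := this hf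
      rw [Subgroup.mem_centralizer_singleton_iff] at this
      first | exact this | exact this.symm
    have hAw := hcent w rfl hcom
    have hAu := hcent u hcom.symm rfl
    have h4 := agree_on 4 hL (by omega) hc A
      (fun f hf k hk => hcent k (hAw k hk).symm (hAu k hk).symm f hf)
      (fun i hi => hcent (c i) (hwc i hi) (huc i hi))
      (fun x => w x ≠ x)
      (by
        intro f hf x hx
        rw [← pcomm (hAw f hf)]; simpa using hx)
      (fun i hi x => not_congr (hwi i hi x))
      (by
        intro x hx
        have n1 : u x ≠ x := fun h => hx ((hux x).1 h)
        have n2 : u (w x) ≠ x := fun h => hx ((huwx x).1 h)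
        have uu : ∀ y, u (u y) = y := fun y => congrArg (fun k : Perm X => k y) hu2
        refine ⟨{x, w x, u x, u (w x)}, ?_, ?_⟩
        · rw [Finset.card_insert_of_notMem, Finset.card_insert_of_notMem, Finset.card_pair]
          · exact fun h => hx (u.injective h).symm
          · simp only [Finset.mem_insert, Finset.mem_singleton, not_or]
            refine ⟨fun h => n2 (by rw [h, uu]), fun h => ?_⟩
            have h' := (hux (w x)).1 h.symm
            exact hx (w.injective h')
          · simp only [Finset.mem_insert, Finset.mem_singleton, not_or]
            exact ⟨hx.symm, n1.symm, n2.symm⟩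
        · intro t ht
          simp only [Finset.mem_insert, Finset.mem_singleton] at ht
          rcases ht with rfl | rfl | rfl | rfl
          · exact ⟨1, A.one_mem, rfl⟩
          · exact ⟨w, hwA, rfl⟩
          · exact ⟨u, huA, rfl⟩
          · exact ⟨u * w, A.mul_mem huA hwA, rfl⟩)
      (by have := hsub (fun x => w x ≠ x); omega)
    intro i j hi hj x hx
    exact h4 i j hi hj x (fun h => hx ((hwx x).1 h))

/-- wherever `c` and `d` differ, `a` and `b` agree -/
def Ag {X : Type} (a b c d : Perm X) : Prop := ∀ x, c x ≠ d x → a x = b x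

lemma Ag.symm_edge {X : Type} {a b c d : Perm X} (h : Ag a b c d) : Ag a b d c :=
  fun x hx => h x hx.symm

lemma Ag.swap {X : Type} {a b c d : Perm X} (h : Ag a b c d) : Ag c d a b := by
  intro x hx
  by_contra h'
  exact hx (h x h')

lemma Ag.trans {X : Type} {a b e c d : Perm X} (h : Ag a b c d) (h' : Ag b e c d) : Ag a e c d :=
  fun x hx => (h x hx).trans (h' x hx)

lemma Ag.conj {X : Type} {a b c d a' b' c' d' : Perm X} (h : Ag a b c d) (g : Perm X)
    (ha : g * a = a' * g) (hb : g * b = b' * g) (hc : g * c = c' * g) (hd : g * d = d' * g) :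
    Ag a' b' c' d' := by
  intro x hx
  obtain ⟨y, rfl⟩ := g.surjective x
  have e : ∀ {k k' : Perm X}, g * k = k' * g → k' (g y) = g (k y) :=
    fun hk => (congrArg (fun k : Perm X => k y) hk).symm
  rw [e ha, e hb]
  rw [e hc, e hd] at hx
  rw [h y (fun h => hx (by rw [h]))]

lemma slide_eq {G : Type*} [Group G] {k l m : G} (h1 : k * l * k = l * k * l)
    (h2 : l * m * l = m * l * m) (h3 : k * m = m * k) :
    (k * l * m) * k = l * (k * l * m) ∧ (k * l * m) * l = m * (k * l * m) := by
  constructor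
  · calc (k * l * m) * k = k * l * (m * k) := by group
      _ = k * l * (k * m) := by rw [h3]
      _ = (k * l * k) * m := by group
      _ = (l * k * l) * m := by rw [h1]
      _ = _ := by group
  · calc (k * l * m) * l = k * (l * m * l) := by group
      _ = k * (m * l * m) := by rw [h2]
      _ = (k * m) * l * m := by group
      _ = (m * k) * l * m := by rw [h3]
      _ = _ := by group

lemma Ag.slide {X : Type} {a b k l m : Perm X} (h : Ag a b k l) (h1 : k * l * k = l * k * l)
    (h2 : l * m * l = m * l * m) (h3 : k * m = m * k)
    (ak : a * k = k * a) (al : a * l = l * a) (am : a * m = m * a)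
    (bk : b * k = k * b) (bl : b * l = l * b) (bm : b * m = m * b) : Ag a b l m := by
  have e := slide_eq h1 h2 h3
  refine h.conj (k * l * m) ?_ ?_ e.1 e.2
  · exact (((show Commute a k from ak).mul_right al).mul_right am).symm
  · exact (((show Commute b k from bk).mul_right bl).mul_right bm).symm

lemma supp_half {X : Type} [Fintype X] [DecidableEq X] {s t : Perm X} (h : s * t * s = t * s * t)
    (Z : X → Prop) [DecidablePred Z] (hZ : ∀ x, Z x → Z (t x)) :
    (Finset.univ.filter (fun x => Z x ∧ t x ≠ x)).card ≤
      2 * (Finset.univ.filter (fun x => (Z x ∧ t x ≠ x) ∧ s x ≠ x)).card := by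
  have e := Finset.card_filter_add_card_filter_not (s := Finset.univ.filter (fun x => Z x ∧ t x ≠ x))
    (fun x => s x ≠ x)
  rw [Finset.filter_filter, Finset.filter_filter] at e
  have : (Finset.univ.filter (fun x => (Z x ∧ t x ≠ x) ∧ ¬ (s x ≠ x))).card ≤
      (Finset.univ.filter (fun x => (Z x ∧ t x ≠ x) ∧ s x ≠ x)).card := by
    refine Finset.card_le_card_of_injOn t ?_ t.injective.injOn
    intro x hx
    simp only [Finset.coe_filter, Set.mem_setOf_eq, Finset.mem_univ, true_and, not_not] at hx ⊢
    obtain ⟨⟨hz, ht⟩, hs⟩ := hx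
    refine ⟨⟨hZ x hz, fun h' => ht (t.injective h')⟩, fun h' => ?_⟩
    have := pbraid h x
    rw [hs, h'] at this
    exact ht (t.injective this).symm
  omega

lemma final {X : Type} [Fintype X] {s0 s1 s3 s4 s5 s7 : Perm X}
    (b0 : s0 * s4 * s0 = s4 * s0 * s4) (b3 : s3 * s4 * s3 = s4 * s3 * s4)
    (b5 : s5 * s4 * s5 = s4 * s5 * s4)
    (c10 : s1 * s0 = s0 * s1) (c13 : s1 * s3 = s3 * s1) (c14 : s1 * s4 = s4 * s1)
    (c15 : s1 * s5 = s5 * s1) (c17 : s1 * s7 = s7 * s1)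
    (c74 : s7 * s4 = s4 * s7) (c70 : s7 * s0 = s0 * s7)
    (hW : Ag s1 s7 s0 s4)
    (h13_5 : Ag s5 s7 s1 s3) (h13_0 : Ag s0 s7 s1 s3) (h57_0 : Ag s0 s1 s5 s7) : s0 = s4 := by
  classical
  let Z : X → Prop := fun x => s1 x = s7 x
  have hbr : ∀ {y z : Perm X}, y * z * y = z * y * z → s1 * y = y * s1 → s1 * z = z * s1 →
      (s1⁻¹ * y) * (s1⁻¹ * z) * (s1⁻¹ * y) = (s1⁻¹ * z) * (s1⁻¹ * y) * (s1⁻¹ * z) := by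
    intro y z h hy hz
    have hy' : y * s1⁻¹ = s1⁻¹ * y := ((show Commute s1 y from hy).inv_left).symm
    have hz' : z * s1⁻¹ = s1⁻¹ * z := ((show Commute s1 z from hz).inv_left).symm
    have gen : ∀ {p q : Perm X}, p * s1⁻¹ = s1⁻¹ * p → q * s1⁻¹ = s1⁻¹ * q →
        (s1⁻¹ * p) * (s1⁻¹ * q) * (s1⁻¹ * p) = s1⁻¹ * s1⁻¹ * s1⁻¹ * (p * q * p) := by
      intro p q hp hq
      calc (s1⁻¹ * p) * (s1⁻¹ * q) * (s1⁻¹ * p) = s1⁻¹ * (p * s1⁻¹) * (q * s1⁻¹) * p := by group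
        _ = s1⁻¹ * (s1⁻¹ * p) * (s1⁻¹ * q) * p := by rw [hp, hq]
        _ = s1⁻¹ * s1⁻¹ * (p * s1⁻¹) * q * p := by group
        _ = s1⁻¹ * s1⁻¹ * (s1⁻¹ * p) * q * p := by rw [hp]
        _ = _ := by group
    rw [gen hy' hz', gen hz' hy', h]
  have hZgen : ∀ {y : Perm X}, s1 * y = y * s1 → s7 * y = y * s7 → ∀ x, Z x → Z ((s1⁻¹ * y) x) := by
    intro y hy hy7 x hx
    have hx' : s1 x = s7 x := hx
    have c : s7 * s1⁻¹ = s1⁻¹ * s7 := ((show Commute s1 s7 from c17).inv_left).symm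
    show s1 (s1⁻¹ (y x)) = s7 (s1⁻¹ (y x))
    rw [pcomm c, pcomm hy7, ← hx', ← pcomm hy]; simp
  have fx : ∀ (y : Perm X) x, (s1⁻¹ * y) x = x ↔ y x = s1 x := by
    intro y x
    rw [Perm.mul_apply, Perm.inv_eq_iff_eq]
  have H0 := supp_half (hbr b0 c10 c14) Z (hZgen c14 c74)
  have H3 := supp_half (hbr b3 c13 c14) Z (hZgen c14 c74)
  have H5 := supp_half (hbr b5 c15 c14) Z (hZgen c14 c74)
  have H0' := supp_half (hbr b0.symm c14 c10) Z (hZgen c10 c70)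
  simp only [ne_eq, fx] at H0 H3 H5 H0'
  let T4 : Finset X := Finset.univ.filter (fun x => Z x ∧ s4 x ≠ s1 x)
  let U : Perm X → Finset X := fun y => Finset.univ.filter (fun x => (Z x ∧ s4 x ≠ s1 x) ∧ y x ≠ s1 x)
  have d35 : Disjoint (U s3) (U s5) := by
    rw [Finset.disjoint_left]
    intro x h h'
    simp only [U, Finset.mem_filter, Finset.mem_univ, true_and] at h h'
    have hz : s1 x = s7 x := h.1.1
    exact h'.2 (by rw [hz]; exact h13_5 x (Ne.symm h.2))
  have d30 : Disjoint (U s3) (U s0) := by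
    rw [Finset.disjoint_left]
    intro x h h'
    simp only [U, Finset.mem_filter, Finset.mem_univ, true_and] at h h'
    have hz : s1 x = s7 x := h.1.1
    exact h'.2 (by rw [hz]; exact h13_0 x (Ne.symm h.2))
  have d50 : Disjoint (U s5) (U s0) := by
    rw [Finset.disjoint_left]
    intro x h h'
    simp only [U, Finset.mem_filter, Finset.mem_univ, true_and] at h h'
    have hz : s1 x = s7 x := h.1.1
    exact h'.2 (h57_0 x (by rw [← hz]; exact h.2))
  have hU : ∀ y, U y ⊆ T4 := by
    intro y x h
    simp only [U, T4, Finset.mem_filter, Finset.mem_univ, true_and] at h ⊢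
    exact h.1
  have hcard : (U s3).card + (U s5).card + (U s0).card ≤ T4.card := by
    rw [← Finset.card_union_of_disjoint d35, ← Finset.card_union_of_disjoint
      (Finset.disjoint_union_left.2 ⟨d30, d50⟩)]
    exact Finset.card_le_card (Finset.union_subset (Finset.union_subset (hU _) (hU _)) (hU _))
  change T4.card ≤ 2 * (U s0).card at H0
  change T4.card ≤ 2 * (U s3).card at H3
  change T4.card ≤ 2 * (U s5).card at H5
  have hT4 : T4.card = 0 := by omega
  rw [Finset.card_eq_zero] at hT4
  have h4 : ∀ x, Z x → s4 x = s1 x := by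
    intro x hx
    by_contra h
    have : x ∈ T4 := by simp [T4, hx, h]
    rw [hT4] at this
    simp at this
  have h0 : ∀ x, Z x → s0 x = s1 x := by
    intro x hx
    by_contra h
    have e : Finset.univ.filter (fun x => (Z x ∧ ¬ s0 x = s1 x) ∧ ¬ s4 x = s1 x) = ∅ := by
      rw [Finset.filter_eq_empty_iff]
      rintro z - ⟨⟨hz, -⟩, hz'⟩
      exact hz' (h4 z hz)
    rw [e] at H0'
    simp only [Finset.card_empty, mul_zero, nonpos_iff_eq_zero, Finset.card_eq_zero] at H0'
    have : x ∈ Finset.univ.filter (fun x => Z x ∧ ¬ s0 x = s1 x) := by simp [hx, h]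
    rw [H0'] at this
    simp at this
  ext x
  by_cases hx : Z x
  · rw [h0 x hx, h4 x hx]
  · by_contra h
    exact hx (hW x h)

lemma hum_eq {X : Type} [Fintype X] (ρ : ℕ) (hρ : 3 ≤ ρ) (hX : Fintype.card X = 4 * ρ + 4)
    (s : ℕ → Perm X)
    (hcomm : ∀ i j : ℕ, 1 ≤ i → i ≤ 2 * ρ + 1 → 1 ≤ j → j ≤ 2 * ρ + 1 →
      (i + 2 ≤ j ∨ j + 2 ≤ i) → s i * s j = s j * s i)
    (hbraid : ∀ i : ℕ, 1 ≤ i → i ≤ 2 * ρ →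
      s i * s (i + 1) * s i = s (i + 1) * s i * s (i + 1))
    (hcomm0 : ∀ i : ℕ, 1 ≤ i → i ≤ 2 * ρ + 1 → i ≠ 4 → s 0 * s i = s i * s 0)
    (hbraid0 : s 0 * s 4 * s 0 = s 4 * s 0 * s 4) : s 0 = s 4 := by
  have C : ∀ i j : ℕ, 1 ≤ i → i ≤ 7 → 1 ≤ j → j ≤ 7 →
      (i + 2 ≤ j ∨ j + 2 ≤ i) → s i * s j = s j * s i :=
    fun i j h1 h2 h3 h4 h => hcomm i j h1 (by omega) h3 (by omega) h
  have B : ∀ i : ℕ, 1 ≤ i → i ≤ 6 →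
      s i * s (i + 1) * s i = s (i + 1) * s i * s (i + 1) :=
    fun i h1 h2 => hbraid i h1 (by omega)
  have Z : ∀ i : ℕ, 1 ≤ i → i ≤ 7 → i ≠ 4 → s 0 * s i = s i * s 0 :=
    fun i h1 h2 h3 => hcomm0 i h1 (by omega) h3
  have e123 := slide_eq (B 1 (by omega) (by omega)) (B 2 (by omega) (by omega))
    (C 1 3 (by omega) (by omega) (by omega) (by omega) (by omega))
  have e234 := slide_eq (B 2 (by omega) (by omega)) (B 3 (by omega) (by omega))
    (C 2 4 (by omega) (by omega) (by omega) (by omega) (by omega))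
  have e345 := slide_eq (B 3 (by omega) (by omega)) (B 4 (by omega) (by omega))
    (C 3 5 (by omega) (by omega) (by omega) (by omega) (by omega))
  simp only [Nat.reduceAdd] at e123 e234 e345
  have comp : ∀ {g h x y z : Perm X}, h * x = y * h → g * y = z * g → (g * h) * x = z * (g * h) := by
    intro g h x y z h1 h2
    rw [mul_assoc, h1, ← mul_assoc, h2, mul_assoc]
  let c : ℕ → Perm X := fun i => if i = 0 then s 0 else s (i + 3)
  have c0 : c 0 = s 0 := rfl
  have cs : ∀ i, c (i + 1) = s (i + 4) := fun i => rfl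
  have hc : BrChain (2 * ρ - 1) c := by
    constructor
    · intro i j hij hj
      obtain ⟨j, rfl⟩ : ∃ k, j = k + 1 := ⟨j - 1, by omega⟩
      rcases i with _ | i
      · rw [c0, cs]; exact hcomm0 _ (by omega) (by omega) (by omega)
      · rw [cs, cs]; exact hcomm _ _ (by omega) (by omega) (by omega) (by omega) (by omega)
    · intro i hi
      rcases i with _ | i
      · rw [c0, cs]; exact hbraid0
      · rw [cs, cs]; exact hbraid (i + 4) (by omega) (by omega)
  have hL : ArtinL (2 * ρ - 1) := by
    have := artin (ρ - 3)
    rwa [show 2 * (ρ - 3) + 5 = 2 * ρ - 1 by omega] at this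
  have S := star hL (by omega) (by omega) (B 1 (by omega) (by omega)) hc
    (by
      intro i hi
      rcases i with _ | i
      · rw [c0]; exact (hcomm0 1 (by omega) (by omega) (by omega)).symm
      · rw [cs]; exact hcomm _ _ (by omega) (by omega) (by omega) (by omega) (by omega))
    (by
      intro i hi
      rcases i with _ | i
      · rw [c0]; exact (hcomm0 2 (by omega) (by omega) (by omega)).symm
      · rw [cs]; exact hcomm _ _ (by omega) (by omega) (by omega) (by omega) (by omega))
    ((s 3 * s 4 * s 5) * ((s 2 * s 3 * s 4) * (s 1 * s 2 * s 3)))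
    (comp (comp e123.1 e234.1) e345.1) (comp (comp e123.2 e234.2) e345.2)
  have A57 : Ag (s 5) (s 7) (s 1) (s 2) := S 2 4 (by omega) (by omega)
  have A07 : Ag (s 0) (s 7) (s 1) (s 2) := S 0 4 (by omega) (by omega)
  have A47 : Ag (s 4) (s 7) (s 1) (s 2) := S 1 4 (by omega) (by omega)
  have A67 : Ag (s 6) (s 7) (s 1) (s 2) := S 3 4 (by omega) (by omega)
  have join : ∀ {a b k l m : Perm X}, Ag a b k l → Ag a b l m → Ag a b k m := by
    intro a b k l m h1 h2 x hx
    by_cases h : k x = l x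
    · exact h2 x (by rw [← h]; exact hx)
    · exact h1 x h
  have B1 := B 1 (by omega) (by omega)
  have B2 := B 2 (by omega) (by omega)
  have B3 := B 3 (by omega) (by omega)
  have B4 := B 4 (by omega) (by omega)
  have B5 := B 5 (by omega) (by omega)
  have B6 := B 6 (by omega) (by omega)
  simp only [Nat.reduceAdd] at B1 B2 B3 B4 B5 B6
  have D : ∀ i j : ℕ, 1 ≤ i ∧ i ≤ 7 ∧ 1 ≤ j ∧ j ≤ 7 ∧ (i + 2 ≤ j ∨ j + 2 ≤ i) →
      s i * s j = s j * s i := fun i j h => C i j h.1 h.2.1 h.2.2.1 h.2.2.2.1 h.2.2.2.2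
  have h13_5 : Ag (s 5) (s 7) (s 1) (s 3) :=
    join A57 (A57.slide B1 B2 (D _ _ (by omega)) (D _ _ (by omega)) (D _ _ (by omega))
      (D _ _ (by omega)) (D _ _ (by omega)) (D _ _ (by omega)) (D _ _ (by omega)))
  have h13_0 : Ag (s 0) (s 7) (s 1) (s 3) :=
    join A07 (A07.slide B1 B2 (D _ _ (by omega)) (Z _ (by omega) (by omega) (by omega))
      (Z _ (by omega) (by omega) (by omega)) (Z _ (by omega) (by omega) (by omega))
      (D _ _ (by omega)) (D _ _ (by omega)) (D _ _ (by omega)))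
  have z1 := Z 1 (by omega) (by omega) (by omega)
  have z2 := Z 2 (by omega) (by omega) (by omega)
  have z3 := Z 3 (by omega) (by omega) (by omega)
  have z5 := Z 5 (by omega) (by omega) (by omega)
  have z6 := Z 6 (by omega) (by omega) (by omega)
  have z7 := Z 7 (by omega) (by omega) (by omega)
  have hW : Ag (s 1) (s 7) (s 0) (s 4) := by
    have h1 : Ag (s 1) (s 7) (s 3) (s 4) := by
      refine A47.conj ((s 2 * s 3 * s 4) * (s 1 * s 2 * s 3)) ?_ ?_
        (comp e123.1 e234.1) (comp e123.2 e234.2)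
      · have c13 := D 1 3 (by omega)
        have c14 := D 1 4 (by omega)
        have c24 := D 2 4 (by omega)
        calc s 2 * s 3 * s 4 * (s 1 * s 2 * s 3) * s 4
            = s 2 * s 3 * (s 4 * s 1) * s 2 * s 3 * s 4 := by group
          _ = s 2 * (s 3 * s 1) * (s 4 * s 2) * s 3 * s 4 := by rw [← c14]; group
          _ = s 2 * s 1 * s 3 * s 2 * (s 4 * s 3 * s 4) := by rw [← c13, ← c24]; group
          _ = s 2 * s 1 * (s 3 * s 2 * s 3) * s 4 * s 3 := by rw [← B3]; group
          _ = (s 2 * s 1 * s 2) * s 3 * s 2 * s 4 * s 3 := by rw [← B2]; group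
          _ = s 1 * s 2 * (s 1 * s 3) * (s 2 * s 4) * s 3 := by rw [← B1]; group
          _ = s 1 * s 2 * s 3 * (s 1 * s 4) * s 2 * s 3 := by rw [c13, c24]; group
          _ = _ := by rw [c14]; group
      · have k1 : Commute (s 7) (s 1) := D 7 1 (by omega)
        have k2 : Commute (s 7) (s 2) := D 7 2 (by omega)
        have k3 : Commute (s 7) (s 3) := D 7 3 (by omega)
        have k4 : Commute (s 7) (s 4) := D 7 4 (by omega)
        exact (((k2.mul_right k3).mul_right k4).mul_right ((k1.mul_right k2).mul_right k3)).symm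
    exact (h1.slide B3 hbraid0.symm z3.symm (D _ _ (by omega)) (D _ _ (by omega)) z1.symm
      (D _ _ (by omega)) (D _ _ (by omega)) z7.symm).symm_edge
  have h57_0 : Ag (s 0) (s 1) (s 5) (s 7) := by
    have q2 := A67.slide B1 B2 (D _ _ (by omega)) (D _ _ (by omega)) (D _ _ (by omega))
      (D _ _ (by omega)) (D _ _ (by omega)) (D _ _ (by omega)) (D _ _ (by omega))
    have q3 := q2.slide B2 B3 (D _ _ (by omega)) (D _ _ (by omega)) (D _ _ (by omega))
      (D _ _ (by omega)) (D _ _ (by omega)) (D _ _ (by omega)) (D _ _ (by omega))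
    have q4 := q3.slide B3 hbraid0.symm z3.symm (D _ _ (by omega)) (D _ _ (by omega))
      z6.symm (D _ _ (by omega)) (D _ _ (by omega)) z7.symm
    have q : Ag (s 0) (s 1) (s 7) (s 6) := (join (join (join A67 q2) q3) q4).symm_edge.swap.symm_edge
    have r := q.slide B6.symm B5.symm (D _ _ (by omega)) z7 z6 z5 (D _ _ (by omega))
      (D _ _ (by omega)) (D _ _ (by omega))
    exact (join q r).symm_edge
  exact final hbraid0 B3 B4.symm z1.symm (D _ _ (by omega)) (D _ _ (by omega)) (D _ _ (by omega))
    (D _ _ (by omega)) (D _ _ (by omega)) z7.symm hW h13_5 h13_0 h57_0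

/-- Let `ρ ≥ 3` be an integer. Let `G` be a group containing elements
`t 0, t 1, …, t (2ρ+1)` satisfying the braid/commutation relations of the Humphries–Dehn
twist generators of the mapping class group, generated by `t 0, …, t (2ρ)`, and perfect.
Then every group homomorphism `φ : G → Sym_{4ρ+4}` is trivial. -/
theorem mcg_hom_to_sym_trivial (ρ : ℕ) (hρ : 3 ≤ ρ) (G : Type*) [Group G] (t : ℕ → G)
    (hcomm : ∀ i j : ℕ, 1 ≤ i → i ≤ 2 * ρ + 1 → 1 ≤ j → j ≤ 2 * ρ + 1 →
      (i + 2 ≤ j ∨ j + 2 ≤ i) → t i * t j = t j * t i)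
    (hbraid : ∀ i : ℕ, 1 ≤ i → i ≤ 2 * ρ →
      t i * t (i + 1) * t i = t (i + 1) * t i * t (i + 1))
    (hcomm0 : ∀ i : ℕ, 1 ≤ i → i ≤ 2 * ρ + 1 → i ≠ 4 → t 0 * t i = t i * t 0)
    (hbraid0 : t 0 * t 4 * t 0 = t 4 * t 0 * t 4)
    (hgen : Subgroup.closure (t '' {i : ℕ | i ≤ 2 * ρ}) = ⊤)
    (hperfect : commutator G = ⊤) :
    ∀ φ : G →* Equiv.Perm (Fin (4 * ρ + 4)), ∀ g : G, φ g = 1 := by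

  intro φ g
  have hc1 : ∀ i j : ℕ, 1 ≤ i → i ≤ 2 * ρ + 1 → 1 ≤ j → j ≤ 2 * ρ + 1 →
      (i + 2 ≤ j ∨ j + 2 ≤ i) → φ (t i) * φ (t j) = φ (t j) * φ (t i) := by
    intro i j h1 h2 h3 h4 h
    rw [← map_mul, hcomm i j h1 h2 h3 h4 h, map_mul]
  have hb1 : ∀ i : ℕ, 1 ≤ i → i ≤ 2 * ρ →
      φ (t i) * φ (t (i + 1)) * φ (t i) = φ (t (i + 1)) * φ (t i) * φ (t (i + 1)) := by
    intro i h1 h2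
    simp only [← map_mul, hbraid i h1 h2]
  have hc0 : ∀ i : ℕ, 1 ≤ i → i ≤ 2 * ρ + 1 → i ≠ 4 →
      φ (t 0) * φ (t i) = φ (t i) * φ (t 0) := by
    intro i h1 h2 h3
    rw [← map_mul, hcomm0 i h1 h2 h3, map_mul]
  have hb0 : φ (t 0) * φ (t 4) * φ (t 0) = φ (t 4) * φ (t 0) * φ (t 4) := by
    simp only [← map_mul, hbraid0]
  have h04 : φ (t 0) = φ (t 4) :=
    hum_eq ρ hρ (by simp) (fun i => φ (t i)) hc1 hb1 hc0 hb0
  have h34 : φ (t 3) = φ (t 4) := by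
    refine eq_of_braid_comm (hb1 3 (by omega) (by omega)) ?_
    have := hc0 3 (by omega) (by omega) (by omega)
    rw [h04] at this
    exact this.symm
  have hch : BrChain (2 * ρ + 1) (fun i => φ (t (i + 1))) :=
    ⟨fun i j h1 h2 => hc1 _ _ (by omega) (by omega) (by omega) (by omega) (by omega),
      fun i h1 => hb1 (i + 1) (by omega) (by omega)⟩
  have hcol := hch.collapse 2 (by omega) h34
  have hall : ∀ i, i ≤ 2 * ρ → φ (t i) = φ (t 4) := by
    intro i hi
    rcases i with _ | i
    · exact h04
    · exact hcol i 3 (by omega) (by omega)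
  have hz : ∀ x : G, φ x ∈ Subgroup.zpowers (φ (t 4)) := by
    have : Subgroup.closure (t '' {i : ℕ | i ≤ 2 * ρ}) ≤
        (Subgroup.zpowers (φ (t 4))).comap φ := by
      rw [Subgroup.closure_le]
      rintro _ ⟨i, hi, rfl⟩
      show φ (t i) ∈ Subgroup.zpowers (φ (t 4))
      rw [hall i hi]
      exact Subgroup.mem_zpowers _
    rw [hgen] at this
    exact fun x => this (Subgroup.mem_top x)
  have hker : commutator G ≤ φ.ker := by
    rw [commutator_def, Subgroup.commutator_le]
    intro x _ y _
    rw [MonoidHom.mem_ker, map_commutatorElement, commutatorElement_eq_one_iff_mul_comm]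
    obtain ⟨m, hm⟩ := Subgroup.mem_zpowers_iff.1 (hz x)
    obtain ⟨n, hn⟩ := Subgroup.mem_zpowers_iff.1 (hz y)
    rw [← hm, ← hn, ← zpow_add, ← zpow_add, add_comm m n]
  rw [hperfect] at hker
  exact hker (Subgroup.mem_top g)
end

section
/- Let ρ ≥ 3 be an integer. Let G be a group containing elements t_0, t_1, …, t_{2ρ+1} such that: (i) t_i t_j = t_j t_i for all 1 ≤ i, j ≤ 2ρ+1 with |i−j| ≥ 2; (ii) t_i t_{i+1} t_i = t_{i+1} t_i t_{i+1} for all 1 ≤ i ≤ 2ρ; (iii) t_0 t_i = t_i t_0 for all 1 ≤ i ≤ 2ρ+1 with i ≠ 4; (iv) t_0 t_4 t_0 = t_4 t_0 t_4; (v) G is generated by t_0, t_1, …, t_{2ρ}; (vi) G is perfect, i.e. G equals its commutator subgroup. Then G has no proper subgroup of index ≤ 4ρ+4; that is, every subgroup H of G with finite index at most 4ρ+4 equals G. -/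
namespace MCG
open scoped Pointwise
universe u v
variable {G : Type v} [Group G]

def Br (a b : G) : Prop := a * b * a = b * a * b

section basic
variable {Ω : Type u} [MulAction G Ω]

def Inv (T : Set G) (S : Set Ω) : Prop := ∀ a ∈ T, ∀ p : Ω, a • p ∈ S ↔ p ∈ S

def orb (B : Subgroup G) (p : Ω) : Set Ω := {q | ∃ g ∈ B, g • p = q}

def nc (T : Set G) (p : Ω) : Prop :=
  ∃ g ∈ Subgroup.closure T, ∃ a ∈ T, ∃ b ∈ T, a • g • p ≠ b • g • p

theorem Br.symm {a b : G} (h : Br a b) : Br b a := Eq.symm h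

theorem Inv.mono {T T' : Set G} {S : Set Ω} (h : Inv T S) (hT : T' ⊆ T) : Inv T' S :=
  fun a ha => h a (hT ha)

theorem Inv.closure {T : Set G} {S : Set Ω} (h : Inv T S) {g : G}
    (hg : g ∈ Subgroup.closure T) : ∀ p : Ω, g • p ∈ S ↔ p ∈ S := by
  induction hg using Subgroup.closure_induction with
  | mem x hx => exact h x hx
  | one => intro p; simp
  | mul x y _ _ hx hy => intro p; rw [mul_smul, hx, hy]
  | inv x _ hx => intro p; rw [← hx (x⁻¹ • p)]; simp

theorem Inv.inv_mem {T : Set G} {S : Set Ω} (h : Inv T S) {g : G}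
    (hg : g ∈ T) {p : Ω} (hp : p ∈ S) : g⁻¹ • p ∈ S := by
  rw [← h g hg]; simpa using hp

theorem comm_closure {T : Set G} {y : G} (h : ∀ a ∈ T, Commute y a) :
    ∀ g ∈ Subgroup.closure T, Commute y g := by
  intro g hg
  induction hg using Subgroup.closure_induction with
  | mem x hx => exact h x hx
  | one => exact Commute.one_right y
  | mul x z _ _ hx hz => exact hx.mul_right hz
  | inv x _ hx => exact hx.inv_right

theorem comm_smul {a b : G} (h : Commute a b) (p : Ω) : a • b • p = b • a • p := by
  rw [smul_smul, smul_smul, h.eq]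

theorem comm_zpowers {y a : G} (h : Commute y a) : ∀ g ∈ Subgroup.zpowers y, Commute a g := by
  rintro g ⟨n, rfl⟩
  exact (h.zpow_left n).symm

theorem mem_orb_self (B : Subgroup G) (p : Ω) : p ∈ orb B p := ⟨1, B.one_mem, one_smul _ _⟩

theorem orb_eq {B : Subgroup G} {p q : Ω} (h : q ∈ orb B p) : orb B q = orb B p := by
  obtain ⟨g, hg, rfl⟩ := h
  ext r
  constructor
  · rintro ⟨k, hk, rfl⟩
    exact ⟨k * g, B.mul_mem hk hg, mul_smul _ _ _⟩
  · rintro ⟨k, hk, rfl⟩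
    exact ⟨k * g⁻¹, B.mul_mem hk (B.inv_mem hg), by rw [smul_smul]; simp⟩

theorem smul_mem_orb {B : Subgroup G} {g : G} (hg : g ∈ B) (p q : Ω) :
    g • q ∈ orb B p ↔ q ∈ orb B p := by
  constructor
  · rintro ⟨k, hk, h⟩
    exact ⟨g⁻¹ * k, B.mul_mem (B.inv_mem hg) hk, by rw [mul_smul, h]; simp⟩
  · rintro ⟨k, hk, rfl⟩
    exact ⟨g * k, B.mul_mem hg hk, mul_smul _ _ _⟩

theorem inv_orb (T : Set G) (p : Ω) : Inv T (orb (Subgroup.closure T) p) :=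
  fun _ ha q => smul_mem_orb (Subgroup.subset_closure ha) p q

theorem orb_subset {T : Set G} {S : Set Ω} (h : Inv T S) {p : Ω} (hp : p ∈ S) :
    orb (Subgroup.closure T) p ⊆ S := by
  rintro q ⟨g, hg, rfl⟩
  exact (h.closure hg p).2 hp

theorem smul_orb {B : Subgroup G} {y : G} (h : ∀ g ∈ B, Commute y g) (p : Ω) :
    y • orb B p = orb B (y • p) := by
  ext r
  rw [Set.mem_smul_set]
  constructor
  · rintro ⟨_, ⟨g, hg, rfl⟩, rfl⟩
    exact ⟨g, hg, (comm_smul (h g hg) p).symm⟩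
  · rintro ⟨g, hg, rfl⟩
    exact ⟨g • p, ⟨g, hg, rfl⟩, comm_smul (h g hg) p⟩

theorem count {B : Subgroup G} {S : Set Ω} (hS : S.Finite) (k : ℕ)
    (h1 : ∀ p ∈ S, orb B p ⊆ S) (h2 : ∀ p ∈ S, k ≤ (orb B p).ncard) :
    k * (orb B '' S).ncard ≤ S.ncard := by
  classical
  lift S to Finset Ω using hS
  rw [← Finset.coe_image, Set.ncard_coe_finset, Set.ncard_coe_finset]
  apply Finset.mul_card_image_le_card
  intro P hP
  rw [Finset.mem_image] at hP
  obtain ⟨p, hp, rfl⟩ := hP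
  refine (h2 p hp).trans ?_
  rw [← Set.ncard_coe_finset]
  apply Set.ncard_le_ncard _ (Finset.finite_toSet _)
  intro q hq
  simp only [Finset.coe_filter, Set.mem_ofPred_eq]
  exact ⟨h1 p hp hq, orb_eq hq⟩

theorem inv_image {B : Subgroup G} {O : Set Ω} {T : Set G} (hc : ∀ a ∈ T, ∀ g ∈ B, Commute a g)
    (ha : Inv T O) : Inv T (orb B '' O) := by
  intro a hT P
  constructor
  · rintro ⟨q, hq, h⟩
    refine ⟨a⁻¹ • q, ha.inv_mem hT hq, ?_⟩
    rw [← smul_orb (fun g hg => (hc a hT g hg).inv_left), h]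
    simp
  · rintro ⟨q, hq, rfl⟩
    exact ⟨a • q, (ha a hT q).2 hq, (smul_orb (hc a hT) q).symm⟩

theorem fix_all {T : Set G} {y : G} (hy : ∀ a ∈ T, Commute y a) {p q : Ω}
    (hq : q ∈ orb (Subgroup.closure T) p) (h : y • q = q) :
    ∀ r ∈ orb (Subgroup.closure T) p, y • r = r := by
  intro r hr
  rw [← orb_eq hq] at hr
  obtain ⟨g, hg, rfl⟩ := hr
  rw [comm_smul (comm_closure hy g hg), h]

theorem comm_eq {s t : G} (h : Br s t) {O : Set Ω} (hO : Inv {s, t} O)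
    (hc : ∀ p ∈ O, s • t • p = t • s • p) : ∀ p ∈ O, s • p = t • p := by
  intro p hp
  have hs : ∀ p, s • p ∈ O ↔ p ∈ O := hO s (by simp)
  obtain ⟨q, rfl⟩ : ∃ q, s • q = p := ⟨s⁻¹ • p, by simp⟩
  have hq : q ∈ O := (hs q).1 hp
  have h1 : s • t • s • q = t • s • t • q := by
    simp only [smul_smul, ← mul_assoc]; rw [h]
  rw [hc _ hp, hc q hq] at h1
  exact smul_left_cancel _ h1

theorem prop_eq {a b c : G} {S : Set Ω} (ha : Inv {a, b} S) (hbc : ∀ p ∈ S, b • p = c • p)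
    (h : Commute a c) (hb : Br a b) : ∀ p ∈ S, a • p = b • p := by
  apply comm_eq hb ha
  intro p hp
  rw [hbc p hp, hbc (a • p) ((ha a (by simp) p).2 hp), comm_smul h]

theorem two_le {y : G} {q : Ω} (hf : (orb (Subgroup.zpowers y) q).Finite) (h : y • q ≠ q) :
    2 ≤ (orb (Subgroup.zpowers y) q).ncard := by
  rw [← Set.ncard_pair h]
  apply Set.ncard_le_ncard _ hf
  rintro r (rfl | rfl)
  · exact ⟨y, Subgroup.mem_zpowers y, rfl⟩
  · exact mem_orb_self _ _

theorem three_le {y : G} {q : Ω} (hf : (orb (Subgroup.zpowers y) q).Finite) (h : y • q ≠ q)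
    (h2 : y • y • q ≠ q) : 3 ≤ (orb (Subgroup.zpowers y) q).ncard := by
  classical
  have h3 : y • y • q ≠ y • q := fun h' => h (smul_left_cancel _ h')
  have : ({y • y • q, y • q, q} : Set Ω).ncard = 3 := by
    rw [Set.ncard_eq_three]; exact ⟨_, _, _, h3, h2, h, rfl⟩
  rw [← this]
  apply Set.ncard_le_ncard _ hf
  rintro r (rfl | rfl | rfl)
  · exact ⟨y * y, mul_mem (Subgroup.mem_zpowers y) (Subgroup.mem_zpowers y), mul_smul _ _ _⟩
  · exact ⟨y, Subgroup.mem_zpowers y, rfl⟩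
  · exact mem_orb_self _ _

theorem locpow_comm {y e f : G} {q : Ω} (he : e • q ∈ orb (Subgroup.zpowers y) q)
    (hf : f • q ∈ orb (Subgroup.zpowers y) q) (ce : Commute y e) (cf : Commute y f) :
    e • f • q = f • e • q := by
  obtain ⟨_, ⟨i, rfl⟩, hi⟩ := he
  obtain ⟨_, ⟨j, rfl⟩, hj⟩ := hf
  dsimp only at hi hj
  rw [← hj, ← comm_smul (ce.zpow_left j), ← hi, ← comm_smul (cf.zpow_left i), ← hj, smul_smul,
    smul_smul, ← zpow_add, ← zpow_add, add_comm]

theorem zinv {y : G} {O : Set Ω} (h : Inv {y} O) {q : Ω} (hq : q ∈ O) :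
    orb (Subgroup.zpowers y) q ⊆ O := by
  rw [Subgroup.zpowers_eq_closure]; exact orb_subset h hq

theorem nc_smul {T : Set G} {y : G} (hy : ∀ a ∈ T, Commute y a) {p : Ω} (h : nc T p) :
    nc T (y • p) := by
  obtain ⟨g, hg, a, ha, b, hb, hne⟩ := h
  refine ⟨g, hg, a, ha, b, hb, fun h => hne ?_⟩
  rw [← comm_smul (comm_closure hy g hg), ← comm_smul (hy a ha), ← comm_smul (hy b hb)] at h
  exact smul_left_cancel _ h

theorem nc_smul_iff {T : Set G} {y : G} (hy : ∀ a ∈ T, Commute y a) {p : Ω} :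
    nc T (y • p) ↔ nc T p := by
  refine ⟨fun h => ?_, nc_smul hy⟩
  simpa using nc_smul (y := y⁻¹) (fun a ha => (hy a ha).inv_left) h

theorem nc_closure {T : Set G} {k : G} (hk : k ∈ Subgroup.closure T) {p : Ω} (h : nc T p) :
    nc T (k • p) := by
  obtain ⟨g, hg, a, ha, b, hb, hne⟩ := h
  refine ⟨g * k⁻¹, mul_mem hg (inv_mem hk), a, ha, b, hb, ?_⟩
  simpa [mul_smul] using hne

theorem nc_closure_iff {T : Set G} {k : G} (hk : k ∈ Subgroup.closure T) {p : Ω} :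
    nc T (k • p) ↔ nc T p := by
  refine ⟨fun h => ?_, nc_closure hk⟩
  simpa using nc_closure (inv_mem hk) h

theorem nc_mono {T T' : Set G} (h : T ⊆ T') {p : Ω} (hp : nc T p) : nc T' p := by
  obtain ⟨g, hg, a, ha, b, hb, hne⟩ := hp
  exact ⟨g, Subgroup.closure_mono h hg, a, h ha, b, h hb, hne⟩

theorem not_nc {T : Set G} {p : Ω} {S : Set Ω} (hS : Inv T S) (hp : p ∈ S)
    (h : ∀ a ∈ T, ∀ b ∈ T, ∀ p ∈ S, a • p = b • p) : ¬ nc T p := by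
  rintro ⟨g, hg, a, ha, b, hb, hne⟩
  exact hne (h a ha b hb _ ((hS.closure hg p).2 hp))

theorem eq_of_not_nc {T : Set G} {p : Ω} (h : ¬ nc T p) {a b : G} (ha : a ∈ T) (hb : b ∈ T) :
    a • p = b • p := by
  by_contra hne
  exact h ⟨1, one_mem _, a, ha, b, hb, by simpa using hne⟩

theorem pair_comm_of {y s t : G} (h1 : Commute y s) (h2 : Commute y t) :
    ∀ a ∈ ({s, t} : Set G), Commute y a := by
  rintro a (rfl | rfl) <;> assumption

end basic

def Small (T : Set G) (n : ℕ) : Prop :=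
  ∀ (Ω : Type u) [MulAction G Ω] (S : Set Ω), S.Finite → S.ncard ≤ n → Inv T S →
    ∀ a ∈ T, ∀ b ∈ T, ∀ p ∈ S, a • p = b • p

def Perf (T : Set G) : Prop :=
  ∀ (Ω : Type u) [MulAction G Ω] (S : Set Ω), Inv T S →
    (∀ a ∈ T, ∀ b ∈ T, ∀ c ∈ T, ∀ d ∈ T, ∀ p ∈ S,
      (a * b⁻¹) • (c * d⁻¹) • p = (c * d⁻¹) • (a * b⁻¹) • p) →
    ∀ a ∈ T, ∀ b ∈ T, ∀ p ∈ S, a • p = b • p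

section mid
variable {Ω : Type u} [MulAction G Ω]

theorem quot {T : Set G} {n : ℕ} (hT : Small.{u} T n) {O : Set Ω} (hf : O.Finite) (hO : Inv T O)
    {y : G} (hy : ∀ a ∈ T, Commute y a) (hyO : Inv {y} O) (k : ℕ)
    (hk : ∀ q ∈ O, k ≤ (orb (Subgroup.zpowers y) q).ncard) (hc : O.ncard < k * (n + 1)) :
    ∀ a ∈ T, ∀ b ∈ T, ∀ q ∈ O,
      a • orb (Subgroup.zpowers y) q = b • orb (Subgroup.zpowers y) q := by
  intro a ha b hb q hq
  refine hT (Set Ω) (orb (Subgroup.zpowers y) '' O) (hf.image _) ?_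
    (inv_image (fun a ha => comm_zpowers (hy a ha)) hO) a ha b hb _ ⟨q, hq, rfl⟩
  have := count hf k (fun p hp => zinv hyO hp) hk
  have h2 := lt_of_le_of_lt this hc
  have := lt_of_mul_lt_mul_left h2 (Nat.zero_le k)
  omega

theorem quot_perf {T : Set G} {n : ℕ} (hT : Small.{u} T n) (hP : Perf.{u} T)
    {O : Set Ω} (hf : O.Finite) (hO : Inv T O)
    {y : G} (hy : ∀ a ∈ T, Commute y a) (hyO : Inv {y} O) (k : ℕ)
    (hk : ∀ q ∈ O, k ≤ (orb (Subgroup.zpowers y) q).ncard) (hc : O.ncard < k * (n + 1)) :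
    ∀ a ∈ T, ∀ b ∈ T, ∀ q ∈ O, a • q = b • q := by
  have key := quot hT hf hO hy hyO k hk hc
  have key2 : ∀ a ∈ T, ∀ b ∈ T, ∀ q ∈ O, (a * b⁻¹) • q ∈ orb (Subgroup.zpowers y) q := by
    intro a ha b hb q hq
    have h := key a ha b hb (b⁻¹ • q) (hO.inv_mem hb hq)
    rw [smul_orb (comm_zpowers (hy a ha)), smul_orb (comm_zpowers (hy b hb)), smul_inv_smul] at h
    rw [← h, mul_smul]
    exact mem_orb_self _ _
  apply hP Ω O hO
  intro a ha b hb c hc d hd p hp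
  exact locpow_comm (key2 a ha b hb p hp) (key2 c hc d hd p hp)
    ((hy a ha).mul_right (hy b hb).inv_right) ((hy c hc).mul_right (hy d hd).inv_right)

/-- On an orbit where `T` acts non-cyclically a commuting element has small order. -/
theorem orbit_fix {T : Set G} {n : ℕ} (hT : Small.{u} T n) (hP : Perf.{u} T)
    {p : Ω} (hp : nc T p) (hf : (orb (Subgroup.closure T) p).Finite)
    {y : G} (hy : ∀ a ∈ T, Commute y a) (hyO : Inv {y} (orb (Subgroup.closure T) p))
    (hc : (orb (Subgroup.closure T) p).ncard < 2 * (n + 1)) :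
    ∀ q ∈ orb (Subgroup.closure T) p, y • q = q := by
  by_contra! hne
  obtain ⟨r, hr, hne⟩ := hne
  refine not_nc (inv_orb T p) (mem_orb_self _ _) (quot_perf hT hP hf (inv_orb T p) hy hyO 2 ?_ hc) hp
  intro q hq
  apply two_le (hf.subset (zinv hyO hq))
  intro h
  exact hne (fix_all hy hq h r hr)

theorem orbit_fix2 {T : Set G} {n : ℕ} (hT : Small.{u} T n) (hP : Perf.{u} T)
    {p : Ω} (hp : nc T p) (hf : (orb (Subgroup.closure T) p).Finite)
    {y : G} (hy : ∀ a ∈ T, Commute y a) (hyO : Inv {y} (orb (Subgroup.closure T) p))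
    (hc : (orb (Subgroup.closure T) p).ncard < 3 * (n + 1)) :
    ∀ q ∈ orb (Subgroup.closure T) p, y • y • q = q := by
  by_contra! hne
  obtain ⟨r, hr, hne⟩ := hne
  refine not_nc (inv_orb T p) (mem_orb_self _ _) (quot_perf hT hP hf (inv_orb T p) hy hyO 3 ?_ hc) hp
  intro q hq
  apply three_le (hf.subset (zinv hyO hq))
  · intro h
    have := fix_all hy hq h r hr
    exact hne (by rw [this, this])
  · intro h
    apply hne
    have := fix_all (y := y * y) (fun a ha => (hy a ha).mul_left (hy a ha)) hq
      (by rwa [mul_smul]) r hr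
    rwa [mul_smul] at this

theorem orbit_big {T : Set G} {n : ℕ} (hT : Small.{u} T n) {p : Ω} (hp : nc T p)
    (hf : (orb (Subgroup.closure T) p).Finite) : n + 1 ≤ (orb (Subgroup.closure T) p).ncard := by
  by_contra! h
  exact not_nc (inv_orb T p) (mem_orb_self _ _) (hT Ω _ hf (by omega) (inv_orb T p)) hp

theorem two_invol {s : G} {S : Set Ω} (hf : S.Finite) (hc : S.ncard ≤ 2) (hS : Inv {s} S) :
    ∀ p ∈ S, s • s • p = p := by
  intro p hp
  have h1 := (hS s rfl p).2 hp
  have h2 := (hS s rfl _).2 h1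
  by_contra hne
  have h3 : s • p ≠ p := fun h => hne (by rw [h, h])
  have h4 : s • s • p ≠ s • p := fun h' => h3 (smul_left_cancel _ h')
  have : ({s • s • p, s • p, p} : Set Ω).ncard = 3 := by
    rw [Set.ncard_eq_three]; exact ⟨_, _, _, h4, hne, h3, rfl⟩
  have h5 : ({s • s • p, s • p, p} : Set Ω).ncard ≤ S.ncard := by
    apply Set.ncard_le_ncard _ hf
    rintro r (rfl | rfl | rfl) <;> assumption
  omega

end mid

theorem small_pair {s t : G} (h : Br s t) : Small.{u} ({s, t} : Set G) 2 := by
  intro Ω _ S hf hc hS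
  have key : ∀ p ∈ S, s • p = t • p := by
    apply comm_eq h hS
    intro p hp
    have e1 : Inv {s * t} S := by
      rintro a rfl q
      rw [mul_smul, hS s (by simp), hS t (by simp)]
    have i1 := two_invol hf hc e1 p hp
    have i2 := two_invol hf hc (hS.mono (T' := {s}) (by simp))
    have i3 := two_invol hf hc (hS.mono (T' := {t}) (by simp))
    have hs : ∀ p, s • p ∈ S ↔ p ∈ S := hS s (by simp)
    have ht : ∀ p, t • p ∈ S ↔ p ∈ S := hS t (by simp)
    simp only [mul_smul] at i1
    have e2 := i2 _ ((ht _).2 ((hs _).2 ((ht _).2 hp)))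
    rw [i1] at e2
    have e3 := i3 _ ((hs _).2 ((ht _).2 hp))
    rw [← e2] at e3
    rw [← e3, e2]
  rintro a (rfl | rfl) b (rfl | rfl) p hp
  · rfl
  · exact key p hp
  · exact (key p hp).symm
  · rfl

section pairs
variable {Ω : Type u} [MulAction G Ω]

theorem lemP {s t x : G} (h : Br s t) (hxs : Commute x s) (hxt : Commute x t) {p : Ω}
    (hf : (orb (Subgroup.closure {s, t}) p).Finite)
    (hc : (orb (Subgroup.closure {s, t}) p).ncard ≤ 5)
    (hx : Inv {x} (orb (Subgroup.closure {s, t}) p)) (hne : x • p ≠ p) : ¬ nc {s, t} p := by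
  set O := orb (Subgroup.closure {s, t}) p with hOdef
  have hO : Inv {s, t} O := inv_orb _ _
  have hcom := pair_comm_of hxs hxt
  have hs : ∀ p, s • p ∈ O ↔ p ∈ O := hO s (by simp)
  have ht : ∀ p, t • p ∈ O ↔ p ∈ O := hO t (by simp)
  have hpO : p ∈ O := mem_orb_self _ _
  have hfp : ∀ q ∈ O, x • q ≠ q := fun q hq hq' => hne (fix_all hcom hq hq' p hpO)
  suffices hst : ∀ q ∈ O, s • t • q = t • s • q by
    have := comm_eq h hO hst
    refine not_nc hO hpO ?_
    rintro a (rfl | rfl) b (rfl | rfl) p hp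
    · rfl
    · exact this p hp
    · exact (this p hp).symm
    · rfl
  have h2 : ∀ q ∈ O, 2 ≤ (orb (Subgroup.zpowers x) q).ncard := fun q hq =>
    two_le (hf.subset (zinv hx hq)) (hfp q hq)
  have hfi : (orb (Subgroup.zpowers x) '' O).Finite := hf.image _
  have hI : Inv {s, t} (orb (Subgroup.zpowers x) '' O) :=
    inv_image (fun a ha => comm_zpowers (hcom a ha)) hO
  by_cases hx2 : ∃ q ∈ O, x • x • q = q
  · obtain ⟨q0, hq0, hx2⟩ := hx2
    have hx2 : ∀ q ∈ O, x • x • q = q := by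
      intro q hq
      have := fix_all (y := x * x) (fun a ha => (hcom a ha).mul_left (hcom a ha)) hq0
        (by rwa [mul_smul]) q hq
      rwa [mul_smul] at this
    have hcard := count hf 2 (fun p hp => zinv hx hp) h2
    have hcard2 : (orb (Subgroup.zpowers x) '' O).ncard ≤ 2 := by omega
    have hw : ∀ q ∈ O, (s * t) • q = q ∨ (s * t) • q = x • q := by
      intro q hq
      have e1 := small_pair.{u} h (Set Ω) _ hfi hcard2 hI s (by simp) t (by simp) _ ⟨q, hq, rfl⟩
      have e2 := two_invol hfi hcard2 (hI.mono (T' := {s}) (by simp)) _ ⟨q, hq, rfl⟩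
      rw [e1, smul_smul, smul_orb (comm_zpowers (hxs.mul_right hxt))] at e2
      have e3 : (s * t) • q ∈ orb (Subgroup.zpowers x) q := by
        rw [← e2]; exact mem_orb_self _ _
      obtain ⟨_, ⟨n, rfl⟩, hn⟩ := e3
      dsimp only at hn
      have hx2q := hx2 q hq
      have hev : ∀ m : ℤ, (x ^ (2 * m)) • q = q := by
        intro m
        rw [zpow_mul]
        have : x ^ (2 : ℤ) ∈ MulAction.stabilizer G q := by
          rw [MulAction.mem_stabilizer_iff, zpow_two, mul_smul, hx2q]
        exact (Subgroup.zpow_mem _ this m)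
      rcases Int.even_or_odd' n with ⟨m, rfl | rfl⟩
      · left; rw [← hn, hev]
      · right; rw [← hn, add_comm, zpow_add, zpow_one, mul_smul, hev]
    have hww : ∀ q ∈ O, (s * t) • (s * t) • q = q := by
      intro q hq
      rcases hw q hq with e | e
      · rw [e, e]
      · rw [e, ← comm_smul (hxs.mul_right hxt), e, hx2 q hq]
    intro q hq
    have hsq := (hs q).2 hq
    have e1 : (s * t) • (s * t) • (s * t) • s • q = s • (s * t) • (s * t) • (s * t) • q := by
      simp only [smul_smul]
      congr 1
      have h' : s * t * s = t * s * t := h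
      calc s * t * (s * t * (s * t * s)) = (s * t * s) * (t * s * t) * s := by group
        _ = (s * t * s) * (s * t * s) * s := by rw [← h']
        _ = (s * t * s) * (s * (t * s * s)) := by group
        _ = (t * s * t) * (s * (t * s * s)) := by rw [h']
        _ = t * ((s * t * s) * (t * s)) * s := by group
        _ = t * ((t * s * t) * (t * s)) * s := by rw [h']
        _ = s * (s * t * (s * t * (s * t))) := by
          have k1 : (s * t * s) * s = t * (s * t * s) := by
            calc (s * t * s) * s = (t * s * t) * s := by rw [h']
              _ = t * (s * t * s) := by group
          have k2 : (s * t * s) * t = s * (s * t * s) := by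
            calc (s * t * s) * t = s * (t * s * t) := by group
              _ = s * (s * t * s) := by rw [← h']
          have k3 : t * ((t * s * t) * (t * s)) * s = (s * t * s) * (s * t * s) * s := by
            calc t * ((t * s * t) * (t * s)) * s = t * ((s * t * s) * (t * s)) * s := by rw [h']
              _ = (t * s * t) * (s * t * s) * s := by group
              _ = (s * t * s) * (s * t * s) * s := by rw [h']
          rw [k3, mul_assoc, k1, ← mul_assoc, k2]
          calc s * (s * t * s) * (s * t * s) = s * (s * t * s) * (t * s * t) := by rw [h']
            _ = s * (s * t * (s * t * (s * t))) := by group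
    have hst : (s * t) • s • q ∈ O := by rw [mul_smul, hs, ht, hs]; exact hq
    have hst' : (s * t) • q ∈ O := by rw [mul_smul, hs, ht]; exact hq
    rw [hww _ hst, hww _ hst'] at e1
    rw [mul_smul, mul_smul] at e1
    exact (smul_left_cancel _ e1).symm
  · push Not at hx2
    have h3 : ∀ q ∈ O, 3 ≤ (orb (Subgroup.zpowers x) q).ncard := fun q hq =>
      three_le (hf.subset (zinv hx hq)) (hfp q hq) (hx2 q hq)
    have hcard := count hf 3 (fun p hp => zinv hx hp) h3
    have hcard2 : (orb (Subgroup.zpowers x) '' O).ncard ≤ 1 := by omega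
    have huniq : ∀ q ∈ O, ∀ r ∈ O, r ∈ orb (Subgroup.zpowers x) q := by
      intro q hq r hr
      have := (Set.ncard_le_one hfi).1 hcard2 _ ⟨q, hq, rfl⟩ _ ⟨r, hr, rfl⟩
      rw [this]; exact mem_orb_self _ _
    intro q hq
    exact locpow_comm (huniq q hq _ ((hs q).2 hq)) (huniq q hq _ ((ht q).2 hq)) hxs hxt

theorem smul_inv_of_orb_eq {T : Set G} {y : G} (hy : ∀ a ∈ T, Commute y a) {p : Ω}
    (h : y • orb (Subgroup.closure T) p = orb (Subgroup.closure T) p) :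
    Inv {y} (orb (Subgroup.closure T) p) := by
  rintro a rfl q
  conv_lhs => rw [← h]
  exact Set.smul_mem_smul_set_iff

/-- `y` commutes with `T`: orbit is preserved or moved off itself. -/
theorem orb_dich {T : Set G} {y : G} (hy : ∀ a ∈ T, Commute y a) (p : Ω)
    {S : Set Ω} (hS : S.Finite) (h1 : orb (Subgroup.closure T) p ⊆ S)
    (h2 : orb (Subgroup.closure T) (y • p) ⊆ S) :
    y • orb (Subgroup.closure T) p = orb (Subgroup.closure T) p ∨
      2 * (orb (Subgroup.closure T) p).ncard ≤ S.ncard := by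
  have e := smul_orb (comm_closure hy) p
  by_cases hd : Disjoint (orb (Subgroup.closure T) p) (orb (Subgroup.closure T) (y • p))
  · right
    have e2 : (orb (Subgroup.closure T) (y • p)).ncard = (orb (Subgroup.closure T) p).ncard := by
      rw [← e]; exact Set.ncard_smul_set y _
    have e3 := Set.ncard_union_eq hd (hS.subset h1) (hS.subset h2)
    have e4 := Set.ncard_le_ncard (Set.union_subset h1 h2) hS
    omega
  · left
    rw [Set.not_disjoint_iff] at hd
    obtain ⟨r, hr1, hr2⟩ := hd
    rw [e, ← orb_eq hr1, ← orb_eq hr2]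

theorem claim4 {s t k : G} (h : Br s t) (hs : Commute k s) (ht : Commute k t) {S : Set Ω}
    (hf : S.Finite) (hS : Inv {s, t} S) (hk : Inv {k} S)
    (hc : {p ∈ S | nc {s, t} p}.ncard ≤ 5) {p : Ω} (hp : p ∈ S) (hn : nc {s, t} p) :
    k • p = p := by
  by_contra hne
  have hcom := pair_comm_of hs ht
  have hfU : {p ∈ S | nc {s, t} p}.Finite := hf.subset (fun _ h => h.1)
  have hU : Inv {s, t} {p ∈ S | nc {s, t} p} := by
    intro a ha q
    simp only [Set.mem_ofPred_eq, hS a ha, nc_closure_iff (Subgroup.subset_closure ha)]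
  have h1 : orb (Subgroup.closure {s, t}) p ⊆ {p ∈ S | nc {s, t} p} := orb_subset hU ⟨hp, hn⟩
  have h2 : orb (Subgroup.closure {s, t}) (k • p) ⊆ {p ∈ S | nc {s, t} p} :=
    orb_subset hU ⟨(hk k rfl p).2 hp, nc_smul hcom hn⟩
  have h3 := orbit_big (small_pair.{u} h) hn (hfU.subset h1)
  rcases orb_dich hcom p hfU h1 h2 with h4 | h4
  · exact lemP h hs ht (hfU.subset h1) ((Set.ncard_le_ncard h1 hfU).trans hc)
      (smul_inv_of_orb_eq hcom h4) hne hn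
  · omega

end pairs

structure Ch (a b c d e : G) : Prop where
  ab : Br a b
  bc : Br b c
  cd : Br c d
  de : Br d e
  ac : Commute a c
  ad : Commute a d
  ae : Commute a e
  bd : Commute b d
  be : Commute b e
  ce : Commute c e

theorem Ch.all {a b c d e : G} (h : Ch a b c d e) {Ω : Type u} [MulAction G Ω] {S : Set Ω}
    (hS : Inv {a, b, c, d, e} S) (hE : ∀ p ∈ S, c • p = d • p) :
    ∀ x ∈ ({a, b, c, d, e} : Set G), ∀ y ∈ ({a, b, c, d, e} : Set G), ∀ p ∈ S, x • p = y • p := by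
  have h1 : ∀ p ∈ S, b • p = c • p :=
    prop_eq (hS.mono (by intro x; simp; tauto)) hE h.bd h.bc
  have h2 : ∀ p ∈ S, a • p = b • p :=
    prop_eq (hS.mono (by intro x; simp; tauto)) h1 h.ac h.ab
  have h3 : ∀ p ∈ S, e • p = d • p :=
    prop_eq (hS.mono (by intro x; simp; tauto)) (fun p hp => (hE p hp).symm) h.ce.symm h.de.symm
  have h4 : ∀ x ∈ ({a, b, c, d, e} : Set G), ∀ p ∈ S, x • p = c • p := by
    rintro x (rfl | rfl | rfl | rfl | rfl) p hp
    · rw [h2 p hp, h1 p hp]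
    · rw [h1 p hp]
    · rfl
    · rw [hE p hp]
    · rw [h3 p hp, hE p hp]
  intro x hx y hy p hp
  rw [h4 x hx p hp, h4 y hy p hp]

/-- The key step for perfectness. -/
theorem perf_key {u' v' w : G} (hv : Commute u' v') (hw : Commute u' w) (h : Br v' w)
    {Ω : Type u} [MulAction G Ω] {S : Set Ω} (hS : Inv {u', v', w} S)
    (hc : ∀ p ∈ S, (v' * u'⁻¹) • (w * u'⁻¹) • p = (w * u'⁻¹) • (v' * u'⁻¹) • p) :
    ∀ p ∈ S, v' • p = w • p := by
  apply comm_eq h (hS.mono (by intro x; simp; tauto))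
  intro p hp
  have hu : ∀ p, u' • p ∈ S ↔ p ∈ S := hS u' (by simp)
  have := hc (u' • u' • p) ((hu _).2 ((hu _).2 hp))
  simp only [smul_smul] at this ⊢
  have e1 : v' * u'⁻¹ * (w * u'⁻¹ * (u' * u')) = v' * w := by
    have : u'⁻¹ * w = w * u'⁻¹ := hw.inv_left.eq
    calc v' * u'⁻¹ * (w * u'⁻¹ * (u' * u')) = v' * (u'⁻¹ * w) * u' := by group
      _ = v' * w := by rw [this]; group
  have e2 : w * u'⁻¹ * (v' * u'⁻¹ * (u' * u')) = w * v' := by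
    have : u'⁻¹ * v' = v' * u'⁻¹ := hv.inv_left.eq
    calc w * u'⁻¹ * (v' * u'⁻¹ * (u' * u')) = w * (u'⁻¹ * v') * u' := by group
      _ = w * v' := by rw [this]; group
  simp only [mul_smul] at this e1 e2 ⊢
  simp only [smul_smul, ← mul_assoc] at this e1 e2 ⊢
  rw [e1, e2] at this
  exact this

theorem Ch.perf {a b c d e : G} (h : Ch a b c d e) : Perf.{u} ({a, b, c, d, e} : Set G) := by
  intro Ω _ S hS hc
  apply h.all hS
  refine perf_key h.ac h.ad h.cd (hS.mono (by intro x; simp; tauto)) ?_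
  exact fun p hp => hc c (by simp) a (by simp) d (by simp) a (by simp) p hp

theorem Ch.small {a b c d e : G} (h : Ch a b c d e) :
    Small.{u} ({a, b, c, d, e} : Set G) 5 := by
  intro Ω _ S hf hc hS
  apply h.all hS
  have hSab : Inv {a, b} S := hS.mono (by intro x; simp; tauto)
  have hSde : Inv {d, e} S := hS.mono (by intro x; simp; tauto)
  have hU : {p ∈ S | nc {a, b} p}.ncard ≤ 5 := (Set.ncard_le_ncard (fun _ h => h.1) hf).trans hc
  have hfU : {p ∈ S | nc {a, b} p}.Finite := hf.subset (fun _ h => h.1)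
  have fd : ∀ p ∈ S, nc {a, b} p → d • p = p := fun p hp hn =>
    claim4 h.ab h.ad.symm h.bd.symm hf hSab (hS.mono (by intro x; simp; tauto)) hU hp hn
  have fe : ∀ p ∈ S, nc {a, b} p → e • p = p := fun p hp hn =>
    claim4 h.ab h.ae.symm h.be.symm hf hSab (hS.mono (by intro x; simp; tauto)) hU hp hn
  by_cases hex : ∃ p ∈ S, nc {a, b} p
  · obtain ⟨p, hp, hn⟩ := hex
    have hUI : Inv {a, b} {p ∈ S | nc {a, b} p} := by
      intro a ha q
      simp only [Set.mem_ofPred_eq, hSab a ha, nc_closure_iff (Subgroup.subset_closure ha)]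
    have h1 : orb (Subgroup.closure {a, b}) p ⊆ {p ∈ S | nc {a, b} p} := orb_subset hUI ⟨hp, hn⟩
    have h3 := orbit_big (small_pair.{u} h.ab) hn (hfU.subset h1)
    have h4 := Set.ncard_le_ncard h1 hfU
    have h5 : (S \ {p ∈ S | nc {a, b} p}).ncard ≤ 2 := by
      rw [Set.ncard_sdiff (fun _ h => h.1) hfU]; omega
    have h6 : Inv {d, e} (S \ {p ∈ S | nc {a, b} p}) := by
      intro x hx q
      have : ∀ y ∈ ({a, b} : Set G), Commute x y := by
        rcases hx with rfl | rfl
        · exact pair_comm_of h.ad.symm h.bd.symm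
        · exact pair_comm_of h.ae.symm h.be.symm
      simp only [Set.mem_sdiff, Set.mem_ofPred_eq, hSde x hx, nc_smul_iff this]
    have h7 : ∀ p ∈ S, d • p = e • p := by
      intro p hp
      by_cases hn : nc {a, b} p
      · rw [fd p hp hn, fe p hp hn]
      · exact small_pair.{u} h.de Ω _ (hf.subset Set.sdiff_subset) h5 h6 d (by simp) e (by simp) p
          ⟨hp, fun h => hn h.2⟩
    exact prop_eq (hS.mono (by intro x; simp; tauto)) h7 h.ce h.cd
  · push Not at hex
    have h1 : ∀ p ∈ S, a • p = b • p := fun p hp =>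
      eq_of_not_nc (hex p hp) (by simp) (by simp)
    have h2 : ∀ p ∈ S, c • p = b • p := prop_eq (hS.mono (by intro x; simp; tauto))
      (fun p hp => (h1 p hp).symm) h.ac.symm h.bc.symm
    have h3 : ∀ p ∈ S, d • p = c • p := prop_eq (hS.mono (by intro x; simp; tauto))
      h2 h.bd.symm h.cd.symm
    exact fun p hp => (h3 p hp).symm

section claim1
variable {Ω : Type u} [MulAction G Ω]

theorem claim1 {T : Set G} (hT : Small.{u} T 5) (hP : Perf.{u} T) {x z : G} (hxz : Br x z)
    (hx : ∀ a ∈ T, Commute x a) (hz : ∀ a ∈ T, Commute z a) {S : Set Ω} (hf : S.Finite)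
    (hc : S.ncard ≤ 16) (hS : Inv T S) (hS2 : Inv {x, z} S) {p : Ω} (hp : p ∈ S)
    (hn : nc T p) : ¬ nc {x, z} p := by
  set U : Set Ω := {p ∈ S | nc T p} with hUdef
  have hfU : U.Finite := hf.subset (fun _ h => h.1)
  have hcU : U.ncard ≤ 16 := (Set.ncard_le_ncard (fun _ h => h.1) hf).trans hc
  have hxzT : ∀ y ∈ ({x, z} : Set G), ∀ a ∈ T, Commute y a := by
    rintro y (rfl | rfl) <;> assumption
  have hUT : Inv T U := by
    intro a ha q
    simp only [hUdef, Set.mem_ofPred_eq, hS a ha, nc_closure_iff (Subgroup.subset_closure ha)]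
  have hUx : Inv {x, z} U := by
    intro a ha q
    simp only [hUdef, Set.mem_ofPred_eq, hS2 a ha, nc_smul_iff (hxzT a ha)]
  have hsub : ∀ q ∈ U, orb (Subgroup.closure T) q ⊆ U := fun q hq => orb_subset hUT hq
  have hbig : ∀ q ∈ U, 6 ≤ (orb (Subgroup.closure T) q).ncard := fun q hq =>
    orbit_big hT hq.2 (hfU.subset (hsub q hq))
  have hcnt := count hfU 6 hsub hbig
  have hI : Inv {x, z} (orb (Subgroup.closure T) '' U) :=
    inv_image (fun y hy => comm_closure (hxzT y hy)) hUx
  have key : ∀ q ∈ U, x • q = z • q := by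
    intro q hq
    have hfO := hfU.subset (hsub q hq)
    have e1 := small_pair.{u} hxz (Set Ω) _ (hfU.image _) (by omega) hI x (by simp) z (by simp) _
      ⟨q, hq, rfl⟩
    rcases orb_dich hx q hfU (hsub q hq) (hsub _ ((hUx x (by simp) q).2 hq)) with h1 | h1
    · have hcO := Set.ncard_le_ncard (hsub q hq) hfU
      have ix := smul_inv_of_orb_eq hx h1
      have iz := smul_inv_of_orb_eq hz (e1.symm.trans h1)
      have ixz : Inv {x * z} (orb (Subgroup.closure T) q) := by
        rintro a rfl r
        rw [mul_smul, ix x rfl, iz z rfl]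
      have x2 := orbit_fix2 hT hP hq.2 hfO hx ix (by omega)
      have z2 := orbit_fix2 hT hP hq.2 hfO hz iz (by omega)
      have xz2 := orbit_fix2 hT hP hq.2 hfO (y := x * z)
        (fun a ha => (hx a ha).mul_left (hz a ha)) ixz (by omega)
      refine comm_eq hxz (O := orb (Subgroup.closure T) q) ?_ ?_ q (mem_orb_self _ _)
      · rintro a (rfl | rfl)
        · exact ix _ rfl
        · exact iz _ rfl
      · intro r hr
        have i1 := xz2 r hr
        simp only [mul_smul] at i1
        have m1 := (iz z rfl r).2 hr
        have m2 := (ix x rfl _).2 m1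
        have m3 := (iz z rfl _).2 m2
        have e2 := x2 _ m3
        rw [i1] at e2
        have e3 := z2 _ m2
        rw [← e2] at e3
        rw [← e3, e2]
    · have hy : ∀ a ∈ T, Commute (z⁻¹ * x) a := fun a ha => (hz a ha).inv_left.mul_left (hx a ha)
      have e2 : (z⁻¹ * x) • orb (Subgroup.closure T) q = orb (Subgroup.closure T) q := by
        rw [mul_smul, e1, inv_smul_smul]
      have := orbit_fix hT hP hq.2 hfO hy (smul_inv_of_orb_eq hy e2) (by omega) q (mem_orb_self _ _)
      rw [mul_smul, inv_smul_eq_iff] at this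
      exact this
  refine not_nc hUx (⟨hp, hn⟩ : p ∈ U) ?_
  rintro a (rfl | rfl) b (rfl | rfl) p hp
  · rfl
  · exact key p hp
  · exact (key p hp).symm
  · rfl

theorem nc_conj {a b c d g : G} (h1 : g * a = c * g) (h2 : g * b = d * g) {p : Ω}
    (h : nc {a, b} p) : nc {c, d} (g • p) := by
  have hc : c = g * a * g⁻¹ := by rw [h1]; group
  have hd : d = g * b * g⁻¹ := by rw [h2]; group
  have key : ∀ k ∈ Subgroup.closure ({a, b} : Set G),
      g * k * g⁻¹ ∈ Subgroup.closure ({c, d} : Set G) := by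
    intro k hk
    induction hk using Subgroup.closure_induction with
    | mem x hx =>
      apply Subgroup.subset_closure
      rcases hx with rfl | rfl
      · simp [hc]
      · simp [hd]
    | one => simp
    | mul x y _ _ hx hy =>
      have := mul_mem hx hy
      have e : g * x * g⁻¹ * (g * y * g⁻¹) = g * (x * y) * g⁻¹ := by group
      rwa [e] at this
    | inv x _ hx =>
      have := inv_mem hx
      have e : (g * x * g⁻¹)⁻¹ = g * x⁻¹ * g⁻¹ := by group
      rwa [e] at this
  obtain ⟨k, hk, x, hx, y, hy, hne⟩ := h
  have hm : ∀ x ∈ ({a, b} : Set G), g * x * g⁻¹ ∈ ({c, d} : Set G) := by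
    rintro x (rfl | rfl)
    · simp [hc]
    · simp [hd]
  refine ⟨_, key k hk, _, hm x hx, _, hm y hy, fun h => hne ?_⟩
  simp only [smul_smul] at h ⊢
  have e : ∀ x, g * x * g⁻¹ * (g * k * g⁻¹ * g) = g * (x * k) := by intro x; group
  rw [e, e, mul_smul g, mul_smul g] at h
  exact smul_left_cancel _ h

theorem card_conj {a b c : G} (hab : Br a b) (hbc : Br b c) (hac : Commute a c) {S : Set Ω}
    (hf : S.Finite) (hS : Inv {a, b, c} S) :
    {p ∈ S | nc {a, b} p}.ncard ≤ {p ∈ S | nc {b, c} p}.ncard := by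
  have h1 : a * b * a = b * a * b := hab
  have h2 : b * c * b = c * b * c := hbc
  have h3 : a * c = c * a := hac
  apply Set.ncard_le_ncard_of_injOn (fun p => (a * b * c) • p) _ _ (hf.subset fun _ h => h.1)
  · rintro p ⟨hp, hn⟩
    refine ⟨?_, nc_conj ?_ ?_ hn⟩
    · rw [mul_smul, mul_smul, hS a (by simp), hS b (by simp), hS c (by simp)]; exact hp
    · calc a * b * c * a = a * b * (c * a) := by group
        _ = a * b * a * c := by rw [← h3]; group
        _ = b * (a * b * c) := by rw [h1]; group
    · calc a * b * c * b = a * (b * c * b) := by group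
        _ = a * c * (b * c) := by rw [h2]; group
        _ = c * (a * b * c) := by rw [h3]; group
  · intro p _ q _ h
    exact smul_left_cancel _ h

theorem card_conj_eq {a b c : G} (hab : Br a b) (hbc : Br b c) (hac : Commute a c) {S : Set Ω}
    (hf : S.Finite) (hS : Inv {a, b, c} S) :
    {p ∈ S | nc {a, b} p}.ncard = {p ∈ S | nc {b, c} p}.ncard := by
  apply le_antisymm (card_conj hab hbc hac hf hS)
  have := card_conj hbc.symm hab.symm hac.symm hf (hS.mono (by intro x; simp; tauto))
  rwa [Set.pair_comm c b, Set.pair_comm b a] at this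

end claim1

section disj
variable {Ω : Type u} [MulAction G Ω]

def Disj (a b : G) (S : Set Ω) : Prop := ∀ p ∈ S, a • p = p ∨ b • p = p

theorem Disj.symm {a b : G} {S : Set Ω} (h : Disj a b S) : Disj b a S :=
  fun p hp => (h p hp).symm

theorem Disj.step {a b c : G} {S : Set Ω} (h : Disj b a S) (hac : Br a c) (hba : Commute b a)
    (hbc : Commute b c) (hS : Inv {a, c} S) : Disj b c S := by
  intro p hp
  obtain ⟨q, rfl⟩ : ∃ q, (a * c) • q = p := ⟨(a * c)⁻¹ • p, smul_inv_smul _ _⟩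
  have hq : q ∈ S := by
    rwa [mul_smul, hS a (by simp), hS c (by simp)] at hp
  rcases h q hq with e | e
  · left; rw [comm_smul (hba.mul_right hbc), e]
  · right
    have h' : a * c * a = c * a * c := hac
    rw [smul_smul, ← mul_assoc, ← h', mul_smul, e]

theorem moved_half {a c : G} (h : Br a c) {S : Set Ω} (hf : S.Finite) (hS : Inv {a} S) :
    {p ∈ S | a • p ≠ p}.ncard ≤ 2 * {p ∈ S | a • p ≠ p ∧ c • p ≠ p}.ncard := by
  have h1 : {p ∈ S | a • p ≠ p} =
      {p ∈ S | a • p ≠ p ∧ c • p ≠ p} ∪ {p ∈ S | a • p ≠ p ∧ c • p = p} := by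
    ext p; simp only [Set.mem_ofPred_eq, Set.mem_union]; tauto
  have h2 : {p ∈ S | a • p ≠ p ∧ c • p = p}.ncard ≤ {p ∈ S | a • p ≠ p ∧ c • p ≠ p}.ncard := by
    apply Set.ncard_le_ncard_of_injOn (fun p => a • p) _ _ (hf.subset fun _ h => h.1)
    · rintro p ⟨hp, hn, hc⟩
      refine ⟨(hS a rfl p).2 hp, fun h => hn (smul_left_cancel _ h), fun h' => hn ?_⟩
      have e : a • c • a • p = c • a • c • p := by
        simp only [smul_smul, ← mul_assoc]; rw [h]
      rw [hc, h'] at e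
      exact smul_left_cancel _ e
    · intro p _ q _ h
      exact smul_left_cancel _ h
  have h3 := Set.ncard_union_le {p ∈ S | a • p ≠ p ∧ c • p ≠ p} {p ∈ S | a • p ≠ p ∧ c • p = p}
  rw [← h1] at h3
  omega

theorem three_arms {a b c d : G} (hb : Br a b) (hc : Br a c) (hd : Br a d) {S : Set Ω}
    (hf : S.Finite) (hS : Inv {a} S) (h1 : Disj b c S) (h2 : Disj b d S) (h3 : Disj c d S) :
    ∀ p ∈ S, a • p = p := by
  have e1 := moved_half hb hf hS
  have e2 := moved_half hc hf hS
  have e3 := moved_half hd hf hS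
  have d1 : Disjoint {p ∈ S | a • p ≠ p ∧ b • p ≠ p} {p ∈ S | a • p ≠ p ∧ c • p ≠ p} := by
    rw [Set.disjoint_left]
    rintro p ⟨hp, _, hp1⟩ ⟨_, _, hp2⟩
    rcases h1 p hp with h | h <;> contradiction
  have d2 : Disjoint ({p ∈ S | a • p ≠ p ∧ b • p ≠ p} ∪ {p ∈ S | a • p ≠ p ∧ c • p ≠ p})
      {p ∈ S | a • p ≠ p ∧ d • p ≠ p} := by
    rw [Set.disjoint_left]
    rintro p (⟨hp, _, hp1⟩ | ⟨hp, _, hp1⟩) ⟨_, _, hp2⟩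
    · rcases h2 p hp with h | h <;> contradiction
    · rcases h3 p hp with h | h <;> contradiction
  have f : ∀ x : G, {p ∈ S | a • p ≠ p ∧ x • p ≠ p}.Finite := fun x => hf.subset fun _ h => h.1
  have c1 := Set.ncard_union_eq d1 (f b) (f c)
  have c2 := Set.ncard_union_eq d2 ((f b).union (f c)) (f d)
  have hfa : {p ∈ S | a • p ≠ p}.Finite := hf.subset fun _ h => h.1
  have c3 : _ ≤ {p ∈ S | a • p ≠ p}.ncard := Set.ncard_le_ncard (s :=
    ({p ∈ S | a • p ≠ p ∧ b • p ≠ p} ∪ {p ∈ S | a • p ≠ p ∧ c • p ≠ p}) ∪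
      {p ∈ S | a • p ≠ p ∧ d • p ≠ p}) (by
    rintro p ((⟨hp, h, _⟩ | ⟨hp, h, _⟩) | ⟨hp, h, _⟩) <;> exact ⟨hp, h⟩) hfa
  have c4 : {p ∈ S | a • p ≠ p}.ncard = 0 := by omega
  rw [Set.ncard_eq_zero hfa] at c4
  intro p hp
  by_contra h
  have : p ∈ {p ∈ S | a • p ≠ p} := ⟨hp, h⟩
  rw [c4] at this
  exact this

theorem moved_le {a c : G} (h : Br a c) {S : Set Ω} (hf : S.Finite) (hS : Inv {a, c} S) :
    {p ∈ S | a • p ≠ p}.ncard ≤ {p ∈ S | c • p ≠ p}.ncard := by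
  apply Set.ncard_le_ncard_of_injOn (fun p => (a * c) • p) _ _ (hf.subset fun _ h => h.1)
  · rintro p ⟨hp, hn⟩
    refine ⟨?_, fun h' => hn ?_⟩
    · rw [mul_smul, hS a (by simp), hS c (by simp)]; exact hp
    · have h2 : a * c * a = c * a * c := h
      rw [smul_smul, ← mul_assoc, ← h2, mul_smul] at h'
      exact smul_left_cancel _ h'
  · intro p _ q _ h
    exact smul_left_cancel _ h

end disj

structure Rel (t : ℕ → G) (N : ℕ) : Prop where
  c : ∀ i j : ℕ, 1 ≤ i → i + 2 ≤ j → j ≤ N → Commute (t i) (t j)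
  b : ∀ i : ℕ, 1 ≤ i → i + 1 ≤ N → Br (t i) (t (i + 1))
  c0 : ∀ i : ℕ, 1 ≤ i → i ≤ N → i ≠ 4 → Commute (t 0) (t i)
  b0 : Br (t 0) (t 4)

def TT (t : ℕ → G) (N : ℕ) : Set G := t '' {i : ℕ | i ≤ N}

theorem memTT (t : ℕ → G) {i N : ℕ} (h : i ≤ N) : t i ∈ TT t N := ⟨i, h, rfl⟩

theorem TT_mono (t : ℕ → G) {M N : ℕ} (h : M ≤ N) : TT t M ⊆ TT t N := by
  rintro _ ⟨i, hi, rfl⟩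
  exact memTT t (le_trans hi h)

theorem Rel.mono {t : ℕ → G} {M N : ℕ} (h : Rel t N) (hMN : M ≤ N) : Rel t M :=
  ⟨fun i j h1 h2 h3 => h.c i j h1 h2 (h3.trans hMN), fun i h1 h2 => h.b i h1 (h2.trans hMN),
   fun i h1 h2 => h.c0 i h1 (h2.trans hMN), h.b0⟩

section rel
variable {Ω : Type u} [MulAction G Ω]

theorem invPair {t : ℕ → G} {N : ℕ} {S : Set Ω} (hS : Inv (TT t N) S) {i j : ℕ} (hi : i ≤ N)
    (hj : j ≤ N) : Inv {t i, t j} S := by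
  apply hS.mono
  rintro x (rfl | rfl) <;> exact memTT t (by assumption)

theorem invOne {t : ℕ → G} {N : ℕ} {S : Set Ω} (hS : Inv (TT t N) S) {i : ℕ} (hi : i ≤ N) :
    Inv {t i} S := by
  apply hS.mono
  rintro x rfl
  exact memTT t (by assumption)

theorem allEq {t : ℕ → G} {N : ℕ} (R : Rel t N) (hN : 5 ≤ N) {S : Set Ω} (hS : Inv (TT t N) S)
    (h34 : ∀ p ∈ S, t 3 • p = t 4 • p) :
    ∀ a ∈ TT t N, ∀ b ∈ TT t N, ∀ p ∈ S, a • p = b • p := by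
  have h2 : ∀ p ∈ S, t 2 • p = t 3 • p :=
    prop_eq (invPair hS (by omega) (by omega)) h34 (R.c 2 4 (by omega) (by omega) (by omega))
      (R.b 2 (by omega) (by omega))
  have h1 : ∀ p ∈ S, t 1 • p = t 2 • p :=
    prop_eq (invPair hS (by omega) (by omega)) h2 (R.c 1 3 (by omega) (by omega) (by omega))
      (R.b 1 (by omega) (by omega))
  have h0 : ∀ p ∈ S, t 0 • p = t 4 • p :=
    prop_eq (invPair hS (by omega) (by omega)) (fun p hp => (h34 p hp).symm)
      (R.c0 3 (by omega) (by omega) (by omega)) R.b0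
  have hk : ∀ k, 4 + k ≤ N → ∀ p ∈ S, t (4 + k) • p = t (3 + k) • p := by
    intro k
    induction k with
    | zero => exact fun _ p hp => (h34 p hp).symm
    | succ k ih =>
      intro hk
      have ih := ih (by omega)
      have e : 3 + (k + 1) = 4 + k := by omega
      rw [e]
      refine prop_eq (invPair hS (by omega) (by omega)) ih
        (R.c _ _ (by omega) (by omega) (by omega)).symm ?_
      exact (R.b (4 + k) (by omega) (by omega)).symm
  have hk2 : ∀ k, 4 + k ≤ N → ∀ p ∈ S, t (4 + k) • p = t 4 • p := by
    intro k
    induction k with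
    | zero => exact fun _ p hp => rfl
    | succ k ih =>
      intro hk' p hp
      rw [hk (k + 1) hk' p hp, ← ih (by omega) p hp]
      congr 2; omega
  have hall : ∀ a ∈ TT t N, ∀ p ∈ S, a • p = t 4 • p := by
    rintro _ ⟨i, hi, rfl⟩ p hp
    have hi : i ≤ N := hi
    rcases lt_or_ge i 4 with h | h
    · interval_cases i
      · exact h0 p hp
      · rw [h1 p hp, h2 p hp, h34 p hp]
      · rw [h2 p hp, h34 p hp]
      · rw [h34 p hp]
    · have := hk2 (i - 4) (by omega) p hp
      rwa [show 4 + (i - 4) = i by omega] at this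
  intro a ha b hb p hp
  rw [hall a ha p hp, hall b hb p hp]

theorem lemZ {t : ℕ → G} {N : ℕ} (R : Rel t N) (hN : 7 ≤ N) {S : Set Ω} (hf : S.Finite)
    (hS : Inv (TT t N) S) (h15 : Disj (t 1) (t 5) S) :
    ∀ a ∈ TT t N, ∀ b ∈ TT t N, ∀ p ∈ S, a • p = b • p := by
  have C : ∀ i j : ℕ, 1 ≤ i → i + 2 ≤ j → j ≤ 7 → Commute (t i) (t j) :=
    fun i j h1 h2 h3 => R.c i j h1 h2 (h3.trans hN)
  have B : ∀ i : ℕ, 1 ≤ i → i + 1 ≤ 7 → Br (t i) (t (i + 1)) :=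
    fun i h1 h2 => R.b i h1 (h2.trans hN)
  have C0 : ∀ i : ℕ, 1 ≤ i → i ≤ 7 → i ≠ 4 → Commute (t 0) (t i) :=
    fun i h1 h2 => R.c0 i h1 (h2.trans hN)
  have I : ∀ i j : ℕ, i ≤ 7 → j ≤ 7 → Inv {t i, t j} S :=
    fun i j h1 h2 => invPair hS (h1.trans hN) (h2.trans hN)
  have h25 : Disj (t 5) (t 2) S := h15.symm.step (B 1 (by omega) (by omega))
    (C 1 5 (by omega) (by omega) (by omega)).symm (C 2 5 (by omega) (by omega) (by omega)).symm
    (I _ _ (by omega) (by omega))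
  have h35 : Disj (t 5) (t 3) S := h25.step (B 2 (by omega) (by omega))
    (C 2 5 (by omega) (by omega) (by omega)).symm (C 3 5 (by omega) (by omega) (by omega)).symm
    (I _ _ (by omega) (by omega))
  have h14 : Disj (t 1) (t 4) S := h15.step (B 4 (by omega) (by omega)).symm
    (C 1 5 (by omega) (by omega) (by omega)) (C 1 4 (by omega) (by omega) (by omega))
    (I _ _ (by omega) (by omega))
  have h10 : Disj (t 1) (t 0) S := h14.step R.b0.symm
    (C 1 4 (by omega) (by omega) (by omega)) (C0 1 (by omega) (by omega) (by omega)).symm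
    (I _ _ (by omega) (by omega))
  have h20 : Disj (t 0) (t 2) S := h10.symm.step (B 1 (by omega) (by omega))
    (C0 1 (by omega) (by omega) (by omega)) (C0 2 (by omega) (by omega) (by omega))
    (I _ _ (by omega) (by omega))
  have h30 : Disj (t 0) (t 3) S := h20.step (B 2 (by omega) (by omega))
    (C0 2 (by omega) (by omega) (by omega)) (C0 3 (by omega) (by omega) (by omega))
    (I _ _ (by omega) (by omega))
  have h16 : Disj (t 1) (t 6) S := h15.step (B 5 (by omega) (by omega))
    (C 1 5 (by omega) (by omega) (by omega)) (C 1 6 (by omega) (by omega) (by omega))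
    (I _ _ (by omega) (by omega))
  have h60 : Disj (t 0) (t 6) S := by
    have h26 : Disj (t 6) (t 2) S := h16.symm.step (B 1 (by omega) (by omega))
      (C 1 6 (by omega) (by omega) (by omega)).symm (C 2 6 (by omega) (by omega) (by omega)).symm
      (I _ _ (by omega) (by omega))
    have h36 : Disj (t 6) (t 3) S := h26.step (B 2 (by omega) (by omega))
      (C 2 6 (by omega) (by omega) (by omega)).symm (C 3 6 (by omega) (by omega) (by omega)).symm
      (I _ _ (by omega) (by omega))
    have h46 : Disj (t 6) (t 4) S := h36.step (B 3 (by omega) (by omega))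
      (C 3 6 (by omega) (by omega) (by omega)).symm (C 4 6 (by omega) (by omega) (by omega)).symm
      (I _ _ (by omega) (by omega))
    exact (h46.step R.b0.symm (C 4 6 (by omega) (by omega) (by omega)).symm
      (C0 6 (by omega) (by omega) (by omega)).symm (I _ _ (by omega) (by omega))).symm
  have h50 : Disj (t 0) (t 5) S := h60.step (B 5 (by omega) (by omega)).symm
    (C0 6 (by omega) (by omega) (by omega)) (C0 5 (by omega) (by omega) (by omega))
    (I _ _ (by omega) (by omega))
  have key := three_arms R.b0.symm (B 3 (by omega) (by omega)).symm (B 4 (by omega) (by omega))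
    hf (invOne hS (by omega)) h30 h50 h35.symm
  apply allEq R (by omega) hS
  apply comm_eq (B 3 (by omega) (by omega)) (I _ _ (by omega) (by omega))
  intro p hp
  rw [key p hp, key _ ((hS (t 3) (memTT t (by omega)) p).2 hp)]

theorem perfTT {t : ℕ → G} {N : ℕ} (R : Rel t N) (hN : 5 ≤ N) : Perf.{u} (TT t N) := by
  intro Ω _ S hS hc
  apply allEq R hN hS
  refine perf_key (R.c 1 3 (by omega) (by omega) (by omega)) (R.c 1 4 (by omega) (by omega)
    (by omega)) (R.b 3 (by omega) (by omega)) (hS.mono ?_) ?_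
  · rintro x (rfl | rfl | rfl) <;> exact memTT t (by omega)
  · exact fun p hp => hc _ (memTT t (by omega)) _ (memTT t (by omega)) _ (memTT t (by omega)) _
      (memTT t (by omega)) p hp

end rel

theorem step {t : ℕ → G} {r : ℕ} (hr : 3 ≤ r) (R : Rel t (2 * r + 3))
    (ih : Small.{u} (TT t (2 * r + 1)) (4 * r + 4)) :
    Small.{u} (TT t (2 * r + 3)) (4 * r + 8) := by
  intro Ω _ S hf hc hS
  have hSA : Inv (TT t (2 * r + 1)) S := hS.mono (TT_mono t (by omega))
  have RA : Rel t (2 * r + 1) := R.mono (by omega)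
  by_cases hex : ∃ p ∈ S, nc (TT t (2 * r + 1)) p
  swap
  · push Not at hex
    apply allEq R (by omega) hS
    exact fun p hp => eq_of_not_nc (hex p hp) (memTT t (by omega)) (memTT t (by omega))
  obtain ⟨p, hp, hn⟩ := hex
  set x := t (2 * r + 3) with hxdef
  have hx : ∀ a ∈ TT t (2 * r + 1), Commute x a := by
    rintro _ ⟨i, hi, rfl⟩
    have hi : i ≤ 2 * r + 1 := hi
    rcases Nat.eq_zero_or_pos i with rfl | h
    · exact (R.c0 _ (by omega) (by omega) (by omega)).symm
    · exact (R.c i _ h (by omega) (by omega)).symm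
  have hO1 := orb_subset hSA hp
  have hxS := hS x (memTT t (by omega))
  have hO2 := orb_subset hSA ((hxS p).2 hp)
  have hfO := hf.subset hO1
  have hbig := orbit_big ih hn hfO
  have hcO := Set.ncard_le_ncard hO1 hf
  have hxO : Inv {x} (orb (Subgroup.closure (TT t (2 * r + 1))) p) := by
    rcases orb_dich hx p hf hO1 hO2 with h | h
    · exact smul_inv_of_orb_eq hx h
    · omega
  have hfix := orbit_fix ih (perfTT RA (by omega)) hn hfO hx hxO (by omega)
  set O := orb (Subgroup.closure (TT t (2 * r + 1))) p with hOdef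
  have hOI : Inv (TT t (2 * r + 1)) O := inv_orb _ _
  have hmx : {p ∈ S | x • p ≠ p}.ncard ≤ 3 := by
    have h1 : {p ∈ S | x • p ≠ p} ⊆ S \ O := by
      rintro q ⟨hq, hne⟩
      exact ⟨hq, fun h => hne (hfix q h)⟩
    have h2 := Set.ncard_le_ncard h1 (hf.subset Set.sdiff_subset)
    rw [Set.ncard_sdiff hO1 hfO] at h2
    omega
  have hm : ∀ k, k ≤ 2 * r + 2 → {p ∈ S | t (2 * r + 3 - k) • p ≠ p}.ncard ≤ 3 := by
    intro k
    induction k with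
    | zero => exact fun _ => hmx
    | succ k ihk =>
      intro hk
      refine (moved_le ?_ hf (invPair hS (by omega) (by omega))).trans (ihk (by omega))
      have := R.b (2 * r + 3 - (k + 1)) (by omega) (by omega)
      rwa [show 2 * r + 3 - (k + 1) + 1 = 2 * r + 3 - k by omega] at this
  have hm1 := hm (2 * r + 2) le_rfl
  rw [show 2 * r + 3 - (2 * r + 2) = 1 by omega] at hm1
  have hmv : ∃ q ∈ O, t 1 • q ≠ q := by
    by_contra! hall
    refine not_nc hOI (mem_orb_self _ _) (allEq RA (by omega) hOI ?_) hn
    have h12 : ∀ p ∈ O, t 2 • p = t 1 • p := by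
      apply comm_eq (R.b 1 (by omega) (by omega)).symm (invPair hOI (by omega) (by omega))
      intro q hq
      rw [hall q hq, hall _ ((hOI _ (memTT t (by omega)) q).2 hq)]
    have h23 : ∀ p ∈ O, t 3 • p = t 2 • p :=
      prop_eq (invPair hOI (by omega) (by omega)) h12
        (R.c 1 3 (by omega) (by omega) (by omega)).symm (R.b 2 (by omega) (by omega)).symm
    have h34 : ∀ p ∈ O, t 4 • p = t 3 • p :=
      prop_eq (invPair hOI (by omega) (by omega)) h23
        (R.c 2 4 (by omega) (by omega) (by omega)).symm (R.b 3 (by omega) (by omega)).symm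
    exact fun p hp => (h34 p hp).symm
  obtain ⟨q, hq, hqne⟩ := hmv
  have hd : Disj (t 1) x S := by
    intro z hz
    by_contra! hcon
    obtain ⟨hz1, hz2⟩ := hcon
    have hzO : z ∉ O := fun h => hz2 (hfix z h)
    have i1 := hOI (t 1) (memTT t (by omega))
    have i2 := hSA (t 1) (memTT t (by omega))
    have hzO' : t 1 • z ∉ O := fun h => hzO ((i1 z).1 h)
    have hq' : t 1 • q ∈ O := (i1 q).2 hq
    classical
    have hsub : (({q, t 1 • q, z, t 1 • z} : Finset Ω) : Set Ω) ⊆ {p ∈ S | t 1 • p ≠ p} := by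
      intro y hy
      simp only [Finset.coe_insert, Finset.coe_singleton, Set.mem_insert_iff,
        Set.mem_singleton_iff] at hy
      rcases hy with rfl | rfl | rfl | rfl
      · exact ⟨hO1 hq, hqne⟩
      · exact ⟨hO1 hq', fun h => hqne (smul_left_cancel _ h)⟩
      · exact ⟨hz, hz1⟩
      · exact ⟨(i2 z).2 hz, fun h => hz1 (smul_left_cancel _ h)⟩
    have h1 := Set.ncard_le_ncard hsub (hf.subset fun _ h => h.1)
    rw [Set.ncard_coe_finset] at h1
    have h2 : ({q, t 1 • q, z, t 1 • z} : Finset Ω).card = 4 := by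
      have n1 : q ≠ z := fun h => hzO (h ▸ hq)
      have n2 : q ≠ t 1 • z := fun h => hzO' (h ▸ hq)
      have n3 : t 1 • q ≠ z := fun h => hzO (h ▸ hq')
      have n4 : t 1 • q ≠ t 1 • z := fun h => hzO' (h ▸ hq')
      rw [Finset.card_insert_of_notMem, Finset.card_insert_of_notMem, Finset.card_pair hz1.symm]
      · simp only [Finset.mem_insert, Finset.mem_singleton]; tauto
      · simp only [Finset.mem_insert, Finset.mem_singleton]
        have := hqne.symm
        tauto
    omega
  have hdk : ∀ k, k ≤ 2 * r - 2 → Disj (t 1) (t (2 * r + 3 - k)) S := by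
    intro k
    induction k with
    | zero => exact fun _ => hd
    | succ k ihk =>
      intro hk
      refine (ihk (by omega)).step ?_ (R.c _ _ (by omega) (by omega) (by omega))
        (R.c _ _ (by omega) (by omega) (by omega)) (invPair hS (by omega) (by omega))
      have := R.b (2 * r + 3 - (k + 1)) (by omega) (by omega)
      rw [show 2 * r + 3 - (k + 1) + 1 = 2 * r + 3 - k by omega] at this
      exact this.symm
  have h15 := hdk (2 * r - 2) le_rfl
  rw [show 2 * r + 3 - (2 * r - 2) = 5 by omega] at h15
  exact lemZ R (by omega) hf hS h15

theorem base {t : ℕ → G} (R : Rel t 7) : Small.{u} (TT t 7) 16 := by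
  intro Ω _ S0 hf0 hc0 hS0
  set S : Set Ω := {p ∈ S0 | nc (TT t 7) p} with hSdef
  have hf : S.Finite := hf0.subset fun _ h => h.1
  have hc : S.ncard ≤ 16 := (Set.ncard_le_ncard (fun _ h => h.1) hf0).trans hc0
  have hS : Inv (TT t 7) S := by
    intro a ha q
    simp only [hSdef, Set.mem_ofPred_eq, hS0 a ha, nc_closure_iff (Subgroup.subset_closure ha)]
  suffices h15 : Disj (t 1) (t 5) S by
    have hall := lemZ R le_rfl hf hS h15
    intro a ha b hb p hp
    by_contra hne
    have hpS : p ∈ S := ⟨hp, 1, one_mem _, a, ha, b, hb, by simpa using hne⟩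
    exact hne (hall a ha b hb p hpS)
  have C : ∀ i j : ℕ, 1 ≤ i ∧ i + 2 ≤ j ∧ j ≤ 7 → Commute (t i) (t j) :=
    fun i j h => R.c i j h.1 h.2.1 h.2.2
  have D : ∀ i j : ℕ, 1 ≤ i ∧ i + 2 ≤ j ∧ j ≤ 7 → Commute (t j) (t i) :=
    fun i j h => (C i j h).symm
  have B12 : Br (t 1) (t 2) := R.b 1 (by omega) (by omega)
  have B23 : Br (t 2) (t 3) := R.b 2 (by omega) (by omega)
  have B34 : Br (t 3) (t 4) := R.b 3 (by omega) (by omega)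
  have B45 : Br (t 4) (t 5) := R.b 4 (by omega) (by omega)
  have B56 : Br (t 5) (t 6) := R.b 5 (by omega) (by omega)
  have B67 : Br (t 6) (t 7) := R.b 6 (by omega) (by omega)
  have B40 : Br (t 4) (t 0) := R.b0.symm
  have C0 : ∀ i : ℕ, 1 ≤ i ∧ i ≤ 7 ∧ i ≠ 4 → Commute (t 0) (t i) :=
    fun i h => R.c0 i h.1 h.2.1 h.2.2
  have D0 : ∀ i : ℕ, 1 ≤ i ∧ i ≤ 7 ∧ i ≠ 4 → Commute (t i) (t 0) :=
    fun i h => (C0 i h).symm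
  have I : ∀ i j : ℕ, i ≤ 7 ∧ j ≤ 7 → Inv {t i, t j} S :=
    fun i j h => invPair hS h.1 h.2
  have I3 : ∀ i j k : ℕ, i ≤ 7 ∧ j ≤ 7 ∧ k ≤ 7 → Inv {t i, t j, t k} S := by
    rintro i j k ⟨h1, h2, h3⟩
    apply hS.mono
    rintro x (rfl | rfl | rfl) <;> exact memTT t (by assumption)
  have ch1 : Ch (t 1) (t 2) (t 3) (t 4) (t 0) :=
    ⟨B12, B23, B34, B40, C 1 3 (by omega), C 1 4 (by omega), D0 1 (by omega), C 2 4 (by omega),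
      D0 2 (by omega), D0 3 (by omega)⟩
  have ch2 : Ch (t 7) (t 6) (t 5) (t 4) (t 0) :=
    ⟨B67.symm, B56.symm, B45.symm, B40, D 5 7 (by omega), D 4 7 (by omega), D0 7 (by omega),
      D 4 6 (by omega), D0 6 (by omega), D0 5 (by omega)⟩
  have n1 : ∀ p ∈ S, nc {t 1, t 2, t 3, t 4, t 0} p → ¬ nc {t 6, t 7} p := by
    intro p hp hn
    refine claim1 ch1.small ch1.perf B67 ?_ ?_ hf hc (hS.mono ?_) (I 6 7 (by omega)) hp hn
    · rintro a (rfl | rfl | rfl | rfl | rfl)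
      exacts [D 1 6 (by omega), D 2 6 (by omega), D 3 6 (by omega), D 4 6 (by omega),
        D0 6 (by omega)]
    · rintro a (rfl | rfl | rfl | rfl | rfl)
      exacts [D 1 7 (by omega), D 2 7 (by omega), D 3 7 (by omega), D 4 7 (by omega),
        D0 7 (by omega)]
    · rintro a (rfl | rfl | rfl | rfl | rfl) <;> exact memTT t (by omega)
  have n2 : ∀ p ∈ S, nc {t 7, t 6, t 5, t 4, t 0} p → ¬ nc {t 1, t 2} p := by
    intro p hp hn
    refine claim1 ch2.small ch2.perf B12 ?_ ?_ hf hc (hS.mono ?_) (I 1 2 (by omega)) hp hn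
    · rintro a (rfl | rfl | rfl | rfl | rfl)
      exacts [C 1 7 (by omega), C 1 6 (by omega), C 1 5 (by omega), C 1 4 (by omega),
        D0 1 (by omega)]
    · rintro a (rfl | rfl | rfl | rfl | rfl)
      exacts [C 2 7 (by omega), C 2 6 (by omega), C 2 5 (by omega), C 2 4 (by omega),
        D0 2 (by omega)]
    · rintro a (rfl | rfl | rfl | rfl | rfl) <;> exact memTT t (by omega)
  have f : ∀ a b : G, {p ∈ S | nc {a, b} p}.Finite := fun a b => hf.subset fun _ h => h.1
  have d1 : Disjoint {p ∈ S | nc {t 1, t 2} p} {p ∈ S | nc {t 4, t 0} p} := by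
    rw [Set.disjoint_left]
    rintro p ⟨hp, h1⟩ ⟨_, h2⟩
    exact n2 p hp (nc_mono (by intro x; simp; tauto) h2) h1
  have d2 : Disjoint ({p ∈ S | nc {t 1, t 2} p} ∪ {p ∈ S | nc {t 4, t 0} p})
      {p ∈ S | nc {t 6, t 7} p} := by
    rw [Set.disjoint_left]
    rintro p (⟨hp, h1⟩ | ⟨hp, h1⟩) ⟨_, h2⟩
    · exact n1 p hp (nc_mono (by intro x; simp; tauto) h1) h2
    · exact n1 p hp (nc_mono (by intro x; simp; tauto) h1) h2
  have c1 := Set.ncard_union_eq d1 (f _ _) (f _ _)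
  have c2 := Set.ncard_union_eq d2 ((f _ _).union (f _ _)) (f _ _)
  have c3 := Set.ncard_le_ncard (s := ({p ∈ S | nc {t 1, t 2} p} ∪ {p ∈ S | nc {t 4, t 0} p}) ∪
      {p ∈ S | nc {t 6, t 7} p}) (t := S) (by
    rintro p ((⟨hp, _⟩ | ⟨hp, _⟩) | ⟨hp, _⟩) <;> exact hp) hf
  have e1 := card_conj_eq B12 B23 (C 1 3 (by omega)) hf (I3 _ _ _ (by omega))
  have e2 := card_conj_eq B23 B34 (C 2 4 (by omega)) hf (I3 _ _ _ (by omega))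
  have e3 := card_conj_eq B34 B45 (C 3 5 (by omega)) hf (I3 _ _ _ (by omega))
  have e4 := card_conj_eq B45 B56 (C 4 6 (by omega)) hf (I3 _ _ _ (by omega))
  have e5 := card_conj_eq B56 B67 (C 5 7 (by omega)) hf (I3 _ _ _ (by omega))
  have e6 := card_conj_eq B34 B40 (D0 3 (by omega)) hf (I3 _ _ _ (by omega))
  intro p hp
  by_contra! hcon
  obtain ⟨hp1, hp5⟩ := hcon
  have O1 : ∀ i : ℕ, i ≤ 7 → Inv {t i} S := fun i h => invOne hS h
  have u12 : ¬ nc {t 1, t 2} p := fun h => hp5 (claim4 B12 (D 1 5 (by omega)) (D 2 5 (by omega)) hf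
    (I _ _ (by omega)) (O1 _ (by omega)) (by omega) hp h)
  have u23 : ¬ nc {t 2, t 3} p := fun h => hp5 (claim4 B23 (D 2 5 (by omega)) (D 3 5 (by omega)) hf
    (I _ _ (by omega)) (O1 _ (by omega)) (by omega) hp h)
  have u34 : ¬ nc {t 3, t 4} p := fun h => hp1 (claim4 B34 (C 1 3 (by omega)) (C 1 4 (by omega)) hf
    (I _ _ (by omega)) (O1 _ (by omega)) (by omega) hp h)
  have u45 : ¬ nc {t 4, t 5} p := fun h => hp1 (claim4 B45 (C 1 4 (by omega)) (C 1 5 (by omega)) hf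
    (I _ _ (by omega)) (O1 _ (by omega)) (by omega) hp h)
  have u56 : ¬ nc {t 5, t 6} p := fun h => hp1 (claim4 B56 (C 1 5 (by omega)) (C 1 6 (by omega)) hf
    (I _ _ (by omega)) (O1 _ (by omega)) (by omega) hp h)
  have u67 : ¬ nc {t 6, t 7} p := fun h => hp1 (claim4 B67 (C 1 6 (by omega)) (C 1 7 (by omega)) hf
    (I _ _ (by omega)) (O1 _ (by omega)) (by omega) hp h)
  have u40 : ¬ nc {t 4, t 0} p := fun h => hp1 (claim4 B40 (C 1 4 (by omega)) (D0 1 (by omega)) hf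
    (I _ _ (by omega)) (O1 _ (by omega)) (by omega) hp h)
  -- the set of points outside all the `nc` sets
  set Z : Set Ω := {p | ¬ nc {t 1, t 2} p ∧ ¬ nc {t 2, t 3} p ∧ ¬ nc {t 3, t 4} p ∧
    ¬ nc {t 4, t 5} p ∧ ¬ nc {t 5, t 6} p ∧ ¬ nc {t 6, t 7} p ∧ ¬ nc {t 4, t 0} p} with hZdef
  have mem1 : ∀ a b : G, a ∈ Subgroup.closure ({a, b} : Set G) := fun a b =>
    Subgroup.subset_closure (by simp)
  have heq : ∀ q ∈ Z, ∀ i ≤ 7, t i • q = t 4 • q := by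
    rintro q ⟨h12, h23, h34, h45, h56, h67, h40⟩ i hi
    have g12 := eq_of_not_nc h12 (a := t 1) (b := t 2) (by simp) (by simp)
    have g23 := eq_of_not_nc h23 (a := t 2) (b := t 3) (by simp) (by simp)
    have g34 := eq_of_not_nc h34 (a := t 3) (b := t 4) (by simp) (by simp)
    have g45 := eq_of_not_nc h45 (a := t 4) (b := t 5) (by simp) (by simp)
    have g56 := eq_of_not_nc h56 (a := t 5) (b := t 6) (by simp) (by simp)
    have g67 := eq_of_not_nc h67 (a := t 6) (b := t 7) (by simp) (by simp)
    have g40 := eq_of_not_nc h40 (a := t 4) (b := t 0) (by simp) (by simp)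
    interval_cases i
    · exact g40.symm
    · rw [g12, g23, g34]
    · rw [g23, g34]
    · rw [g34]
    · rfl
    · rw [g45]
    · rw [g45, g56]
    · rw [g45, g56, g67]
  have hinv : ∀ a b : G, ∀ q : Ω, ¬ nc {a, b} q → a⁻¹ • q = b⁻¹ • q := by
    intro a b q h
    rw [← nc_closure_iff (inv_mem (mem1 a b))] at h
    have := eq_of_not_nc h (a := a) (b := b) (by simp) (by simp)
    rw [smul_inv_smul] at this
    rw [eq_inv_smul_iff, ← this]
  have heq' : ∀ q ∈ Z, ∀ i ≤ 7, (t i)⁻¹ • q = (t 4)⁻¹ • q := by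
    rintro q ⟨h12, h23, h34, h45, h56, h67, h40⟩ i hi
    have g12 := hinv _ _ _ h12
    have g23 := hinv _ _ _ h23
    have g34 := hinv _ _ _ h34
    have g45 := hinv _ _ _ h45
    have g56 := hinv _ _ _ h56
    have g67 := hinv _ _ _ h67
    have g40 := hinv _ _ _ h40
    interval_cases i
    · exact g40.symm
    · rw [g12, g23, g34]
    · rw [g23, g34]
    · rw [g34]
    · rfl
    · rw [g45]
    · rw [g45, g56]
    · rw [g45, g56, g67]
  have hfw : ∀ q r : Ω, (∀ i ≤ 7, t i • q = r) → q ∈ Z → r ∈ Z := by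
    rintro q r h ⟨h12, h23, h34, h45, h56, h67, h40⟩
    refine ⟨?_, ?_, ?_, ?_, ?_, ?_, ?_⟩
    · rw [← h 1 (by omega), nc_closure_iff (mem1 _ _)]; exact h12
    · rw [← h 2 (by omega), nc_closure_iff (mem1 _ _)]; exact h23
    · rw [← h 3 (by omega), nc_closure_iff (mem1 _ _)]; exact h34
    · rw [← h 4 (by omega), nc_closure_iff (mem1 _ _)]; exact h45
    · rw [← h 5 (by omega), nc_closure_iff (mem1 _ _)]; exact h56
    · rw [← h 6 (by omega), nc_closure_iff (mem1 _ _)]; exact h67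
    · rw [← h 4 (by omega), nc_closure_iff (mem1 _ _)]; exact h40
  have hbw : ∀ q r : Ω, (∀ i ≤ 7, t i • q = r) → r ∈ Z → q ∈ Z := by
    rintro q r h ⟨h12, h23, h34, h45, h56, h67, h40⟩
    refine ⟨?_, ?_, ?_, ?_, ?_, ?_, ?_⟩
    · rwa [← h 1 (by omega), nc_closure_iff (mem1 _ _)] at h12
    · rwa [← h 2 (by omega), nc_closure_iff (mem1 _ _)] at h23
    · rwa [← h 3 (by omega), nc_closure_iff (mem1 _ _)] at h34
    · rwa [← h 4 (by omega), nc_closure_iff (mem1 _ _)] at h45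
    · rwa [← h 5 (by omega), nc_closure_iff (mem1 _ _)] at h56
    · rwa [← h 6 (by omega), nc_closure_iff (mem1 _ _)] at h67
    · rwa [← h 4 (by omega), nc_closure_iff (mem1 _ _)] at h40
  have hZI : Inv (TT t 7) Z := by
    rintro _ ⟨i, hi, rfl⟩ q
    have hi : i ≤ 7 := hi
    constructor
    · intro h
      refine hbw q (t i • q) (fun j hj => ?_) h
      have a1 := heq' _ h i hi
      have a2 := heq' _ h j hj
      rw [← a1, inv_smul_smul, inv_smul_eq_iff] at a2
      exact a2.symm
    · intro h
      exact hfw q _ (fun j hj => by rw [heq q h i hi, heq q h j hj]) h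
  refine not_nc hZI (⟨u12, u23, u34, u45, u56, u67, u40⟩ : p ∈ Z) ?_ hp.2
  rintro _ ⟨i, hi, rfl⟩ _ ⟨j, hj, rfl⟩ q hq
  rw [heq q hq i hi, heq q hq j hj]

theorem main {t : ℕ → G} (k : ℕ) (R : Rel t (2 * (k + 3) + 1)) :
    Small.{u} (TT t (2 * (k + 3) + 1)) (4 * (k + 3) + 4) := by
  induction k with
  | zero => exact base R
  | succ k ih => exact step (r := k + 3) (by omega) R (ih (R.mono (by omega)))

end MCG


/-- Theorem 1 of the paper, abstracted. Let `ρ ≥ 3` be an integer.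
Let `G` be a group containing elements `t 0, …, t (2ρ+1)` satisfying the
braid/commutation relations of the Humphries–Dehn twist generators of the mapping class
group, generated by `t 0, …, t (2ρ)`, and perfect. Then `G` has no proper subgroup of
finite index at most `4ρ+4`: every subgroup of finite index `≤ 4ρ+4` is all of `G`. -/
theorem mcg_no_small_index_subgroup (ρ : ℕ) (hρ : 3 ≤ ρ) (G : Type*) [Group G] (t : ℕ → G)
    (hcomm : ∀ i j : ℕ, 1 ≤ i → i ≤ 2 * ρ + 1 → 1 ≤ j → j ≤ 2 * ρ + 1 →
      (i + 2 ≤ j ∨ j + 2 ≤ i) → t i * t j = t j * t i)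
    (hbraid : ∀ i : ℕ, 1 ≤ i → i ≤ 2 * ρ →
      t i * t (i + 1) * t i = t (i + 1) * t i * t (i + 1))
    (hcomm0 : ∀ i : ℕ, 1 ≤ i → i ≤ 2 * ρ + 1 → i ≠ 4 → t 0 * t i = t i * t 0)
    (hbraid0 : t 0 * t 4 * t 0 = t 4 * t 0 * t 4)
    (hgen : Subgroup.closure (t '' {i : ℕ | i ≤ 2 * ρ}) = ⊤)
    (hperfect : commutator G = ⊤) :
    ∀ H : Subgroup G, H.index ≠ 0 → H.index ≤ 4 * ρ + 4 → H = ⊤ := by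
  intro H h0 hle
  have R : MCG.Rel t (2 * ρ + 1) := by
    refine ⟨fun i j h1 h2 h3 => hcomm i j h1 (by omega) (by omega) h3 (Or.inl h2),
      fun i h1 h2 => hbraid i h1 (by omega), fun i h1 h2 h3 => hcomm0 i h1 h2 h3, hbraid0⟩
  have hsm := MCG.main (ρ - 3) (by rwa [show 2 * (ρ - 3 + 3) + 1 = 2 * ρ + 1 by omega])
  rw [show ρ - 3 + 3 = ρ by omega] at hsm
  have hfi : H.FiniteIndex := ⟨h0⟩
  have hfin : Finite (G ⧸ H) := Subgroup.finite_quotient_of_finiteIndex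
  have key : ∀ i ≤ 2 * ρ, ∀ p : G ⧸ H, t i • p = t 0 • p := by
    intro i hi p
    refine hsm (G ⧸ H) Set.univ Set.finite_univ ?_ (fun a _ p => by simp) _
      (MCG.memTT t (by omega)) _ (MCG.memTT t (by omega)) p trivial
    rw [Set.ncard_univ]; exact hle
  set φ := MulAction.toPermHom G (G ⧸ H)
  have h1 : ∀ g : G, φ g ∈ Subgroup.zpowers (φ (t 0)) := by
    intro g
    have hg : g ∈ Subgroup.closure (t '' {i : ℕ | i ≤ 2 * ρ}) := by rw [hgen]; trivial
    induction hg using Subgroup.closure_induction with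
    | mem x hx =>
      obtain ⟨i, hi, rfl⟩ := hx
      have : φ (t i) = φ (t 0) := by
        ext p
        exact key i hi p
      rw [this]
      exact Subgroup.mem_zpowers _
    | one => rw [map_one]; exact one_mem _
    | mul x y _ _ hx hy => rw [map_mul]; exact mul_mem hx hy
    | inv x _ hx => rw [map_inv]; exact inv_mem hx
  have h2 : commutator G ≤ φ.ker := by
    rw [commutator_def, Subgroup.commutator_le]
    intro a _ b _
    rw [MonoidHom.mem_ker, map_commutatorElement, commutatorElement_eq_one_iff_mul_comm]
    obtain ⟨i, hi⟩ := h1 a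
    obtain ⟨j, hj⟩ := h1 b
    dsimp only at hi hj
    rw [← hi, ← hj, ← zpow_add, ← zpow_add, add_comm]
  rw [eq_top_iff]
  intro g _
  have h3 : g ∈ φ.ker := h2 (by rw [hperfect]; trivial)
  have h4 : g • ((1 : G) : G ⧸ H) = ((1 : G) : G ⧸ H) := by
    have := congrArg (fun e : Equiv.Perm (G ⧸ H) => e ((1 : G) : G ⧸ H)) (MonoidHom.mem_ker.1 h3)
    exact this
  rw [MulAction.Quotient.smul_coe, smul_eq_mul, mul_one] at h4
  have h5 := QuotientGroup.eq.1 h4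
  rw [mul_one] at h5
  exact (Subgroup.inv_mem_iff H).1 h5
end

section
/- Let n ≥ 7 and let 2 ≤ k < n. Then every transitive homomorphism ψ : B_n → Sym_k is cyclic, i.e. ψ(σ_1) = ψ(σ_2) = … = ψ(σ_{n−1}). -/
/-- The braid relations on `n-1` generators; generator `i : Fin (n-1)` stands for the
Artin generator `σ_{i+1}` (so the indexing is 0-based). The relations are
`σ_i σ_j = σ_j σ_i` for `|i-j| ≥ 2` and `σ_i σ_j σ_i = σ_j σ_i σ_j` for `|i-j| = 1`. -/
def braidRels (n : ℕ) : Set (FreeGroup (Fin (n - 1))) :=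
  { r | ∃ i j : Fin (n - 1), ((i : ℕ) + 2 ≤ (j : ℕ) ∨ (j : ℕ) + 2 ≤ (i : ℕ)) ∧
      r = FreeGroup.of i * FreeGroup.of j * (FreeGroup.of j * FreeGroup.of i)⁻¹ } ∪
  { r | ∃ i j : Fin (n - 1), (j : ℕ) = (i : ℕ) + 1 ∧
      r = FreeGroup.of i * FreeGroup.of j * FreeGroup.of i *
          (FreeGroup.of j * FreeGroup.of i * FreeGroup.of j)⁻¹ }

/-- The braid group `B_n`, given by the Artin presentation. -/
abbrev BraidGroup (n : ℕ) := PresentedGroup (braidRels n)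

/-- The Artin generator `σ_{i+1}` of the braid group `B_n`, for `i : Fin (n-1)`. -/
def σ {n : ℕ} (i : Fin (n - 1)) : BraidGroup n := PresentedGroup.of i

/-- A homomorphism to the symmetric group `Sym_k = Perm (Fin k)` is transitive if its
image acts transitively on the `k` points. -/
def IsTransitiveHom {G : Type*} [Group G] {k : ℕ} (φ : G →* Equiv.Perm (Fin k)) : Prop :=
  ∀ x y : Fin k, ∃ g : G, φ g x = y

/-- A homomorphism from `B_n` is cyclic if it sends all the generators `σ_1, …, σ_{n-1}`
to a single element. -/
def IsCyclicHom {n : ℕ} {H : Type*} [Group H] (ψ : BraidGroup n →* H) : Prop :=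
  ∀ i j : Fin (n - 1), ψ (σ i) = ψ (σ j)

open Equiv in
theorem base4 : ∀ a : Perm (Fin 4), a ≠ 1 → ∀ c, a*c=c*a → ∀ d, a*d=d*a →
    c*d*c=d*c*d → c = d := by decide +kernel

/-- Representatives of the nontrivial conjugacy classes of `Sym_5`. -/
def reps5 : List (Equiv.Perm (Fin 5)) :=
  [Equiv.swap 0 1, Equiv.swap 0 1 * Equiv.swap 2 3, Equiv.swap 0 1 * Equiv.swap 1 2,
    Equiv.swap 0 1 * Equiv.swap 1 2 * Equiv.swap 3 4,
    Equiv.swap 0 1 * Equiv.swap 1 2 * Equiv.swap 2 3,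
    Equiv.swap 0 1 * Equiv.swap 1 2 * Equiv.swap 2 3 * Equiv.swap 3 4]

open Equiv in
theorem exists_rep5 : ∀ a : Perm (Fin 5), a ≠ 1 →
    ∃ r ∈ reps5, a.cycleType = r.cycleType := by
  decide +kernel

set_option synthInstance.maxHeartbeats 400000 in
set_option synthInstance.maxSize 1000 in
open Equiv in
theorem base5' : ∀ a ∈ reps5, ∀ c, a*c=c*a → ∀ d, a*d=d*a → c*d*c=d*c*d →
    c ≠ d → ∀ e, a*e=e*a → d*e*d = e*d*e → c*e=e*c → c=e := by decide +kernel

open Equiv in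
theorem base5_s2 (a : Perm (Fin 5)) (ha : a ≠ 1) (c : Perm (Fin 5)) (hc : a*c=c*a)
    (d : Perm (Fin 5)) (hd : a*d=d*a) (hcd : c*d*c=d*c*d) (hne : c ≠ d)
    (e : Perm (Fin 5)) (he : a*e=e*a) (hde : d*e*d = e*d*e) (hce : c*e=e*c) : c = e := by
  obtain ⟨r, hr, har⟩ := exists_rep5 a ha
  obtain ⟨g, hg⟩ := isConj_iff.1 (Equiv.Perm.isConj_iff_cycleType_eq.2 har)
  have key := base5' (MulAut.conj g a)
    (by rw [MulAut.conj_apply, hg]; exact hr)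
    (MulAut.conj g c) (by simp only [← map_mul, hc])
    (MulAut.conj g d) (by simp only [← map_mul, hd])
    (by simp only [← map_mul, hcd])
    (fun h => hne ((MulAut.conj g).injective h))
    (MulAut.conj g e) (by simp only [← map_mul, he])
    (by simp only [← map_mul, hde]) (by simp only [← map_mul, hce])
  exact (MulAut.conj g).injective key

structure BR {G : Type*} [Group G] (m : ℕ) (s : ℕ → G) : Prop where
  comm : ∀ i j, i + 2 ≤ j → j < m → s i * s j = s j * s i
  braid : ∀ i, i + 1 < m → s i * s (i+1) * s i = s (i+1) * s i * s (i+1)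

theorem braid_comm_eq {G : Type*} [Group G] {a b : G} (h : a * b * a = b * a * b)
    (hc : a * b = b * a) : a = b := by
  rw [hc] at h
  exact mul_left_cancel h

theorem BR.up {G : Type*} [Group G] {m : ℕ} {s : ℕ → G} (h : BR m s) (i : ℕ) (hi : i + 2 < m)
    (e : s i = s (i+1)) : s (i+1) = s (i+2) := by
  apply braid_comm_eq (h.braid (i+1) hi)
  rw [← e]; exact h.comm i (i+2) le_rfl hi

theorem BR.down {G : Type*} [Group G] {m : ℕ} {s : ℕ → G} (h : BR m s) (i : ℕ) (hi : i + 2 < m)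
    (e : s (i+1) = s (i+2)) : s i = s (i+1) := by
  apply braid_comm_eq (h.braid i (by omega))
  rw [e]; exact h.comm i (i+2) le_rfl hi

theorem BR.all {G : Type*} [Group G] {m : ℕ} {s : ℕ → G} (h : BR m s) (i : ℕ) (hi : i + 1 < m)
    (e : s i = s (i+1)) : ∀ j k, j < m → k < m → s j = s k := by
  have h0 : s 0 = s 1 := by
    induction i with
    | zero => exact e
    | succ i ih => exact ih (by omega) (h.down i hi e)
  have h1 : ∀ j, j + 1 < m → s j = s (j+1) := by
    intro j
    induction j with
    | zero => intro _; exact h0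
    | succ j ih => intro hj; exact h.up j hj (ih (by omega))
  have h2 : ∀ j, j < m → s j = s 0 := by
    intro j
    induction j with
    | zero => intro _; rfl
    | succ j ih => intro hj; rw [← h1 j hj]; exact ih (by omega)
  intro j k hj hk
  rw [h2 j hj, h2 k hk]

theorem BR.map {G H : Type*} [Group G] [Group H] {m : ℕ} {s : ℕ → G} (h : BR m s) (f : G →* H) :
    BR m (fun i => f (s i)) :=
  ⟨fun i j hij hj => by simp only [← map_mul, h.comm i j hij hj],
   fun i hi => by simp only [← map_mul, h.braid i hi]⟩

theorem BR.one {G : Type*} [Group G] {m : ℕ} {s : ℕ → G} (h : BR m s) (hm : 1 < m)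
    (h1 : s 0 = 1) : s 0 = s 1 := by
  apply braid_comm_eq (h.braid 0 hm)
  simp [h1]

theorem base_four {X : Type} [Fintype X] (hX : Fintype.card X ≤ 4) (s : ℕ → Equiv.Perm X)
    (h : BR 4 s) : ∀ j k, j < 4 → k < 4 → s j = s k := by
  obtain ⟨ι⟩ := Function.Embedding.nonempty_of_card_le (β := Fin 4) (by simpa using hX)
  have hf := Equiv.Perm.viaEmbeddingHom_injective ι
  have h' := h.map (Equiv.Perm.viaEmbeddingHom ι)
  by_cases h1 : s 0 = 1
  · exact h.all 0 (by omega) (h.one (by omega) h1)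
  · refine h.all 2 (by omega) (hf ?_)
    exact base4 _ (fun e => h1 (hf (e.trans (map_one _).symm))) _
      (h'.comm 0 2 (by omega) (by omega)) _ (h'.comm 0 3 (by omega) (by omega))
      (h'.braid 2 (by omega))

theorem base_five {X : Type} [Fintype X] (hX : Fintype.card X ≤ 5) (s : ℕ → Equiv.Perm X)
    (h : BR 5 s) : ∀ j k, j < 5 → k < 5 → s j = s k := by
  obtain ⟨ι⟩ := Function.Embedding.nonempty_of_card_le (β := Fin 5) (by simpa using hX)
  have hf := Equiv.Perm.viaEmbeddingHom_injective ι
  have h' := h.map (Equiv.Perm.viaEmbeddingHom ι)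
  by_cases h1 : s 0 = 1
  · exact h.all 0 (by omega) (h.one (by omega) h1)
  by_cases h2 : s 2 = s 3
  · exact h.all 2 (by omega) h2
  have h24 : s 2 = s 4 := hf (
    base5_s2 _ (fun e => h1 (hf (e.trans (map_one _).symm))) _
      (h'.comm 0 2 (by omega) (by omega)) _ (h'.comm 0 3 (by omega) (by omega))
      (h'.braid 2 (by omega)) (fun e => h2 (hf e)) _ (h'.comm 0 4 (by omega) (by omega))
      (h'.braid 3 (by omega)) (h'.comm 2 4 (by omega) (by omega)))
  refine h.all 1 (by omega) (braid_comm_eq (h.braid 1 (by omega)) ?_)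
  have := h.comm 1 4 (by omega) (by omega)
  rw [← h24] at this
  exact this

theorem card_cycles {X : Type} [Fintype X] [DecidableEq X] (f : Equiv.Perm X) :
    2 * Fintype.card f.cycleFactorsFinset ≤ Fintype.card X := by
  have h1 : f.cycleType.card • 2 ≤ f.cycleType.sum :=
    Multiset.card_nsmul_le_sum (fun x hx => Equiv.Perm.two_le_of_mem_cycleType hx)
  rw [Equiv.Perm.sum_cycleType] at h1
  have h2 : f.cycleType.card = f.cycleFactorsFinset.card := by
    simp [Equiv.Perm.cycleType]
  have h3 := Finset.card_le_univ f.support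
  rw [Fintype.card_coe]
  rw [h2, smul_eq_mul] at h1
  omega

theorem fixed_iff {X : Type} (a b : Equiv.Perm X) (h : a * b = b * a) (x : X) :
    a (b x) = b x ↔ a x = x := by
  have : a (b x) = b (a x) := by
    rw [← Equiv.Perm.mul_apply, h, Equiv.Perm.mul_apply]
  rw [this]
  exact b.injective.eq_iff

theorem main_aux (m : ℕ) (hm : 4 ≤ m) : ∀ (X : Type) [Fintype X], Fintype.card X ≤ m →
    ∀ s : ℕ → Equiv.Perm X, BR m s → ∀ j k, j < m → k < m → s j = s k := by
  classical
  induction m using Nat.strong_induction_on with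
  | _ m ih =>
  intro X _ hX s h
  by_cases h4 : m = 4
  · subst h4; exact base_four hX s h
  by_cases h5 : m = 5
  · subst h5; exact base_five hX s h
  by_cases h1 : s 0 = 1
  · exact h.all 0 (by omega) (h.one (by omega) h1)
  have IH := ih (m-2) (by omega) (by omega)
  have hc : ∀ i, i + 2 < m → s 0 * s (i+2) = s (i+2) * s 0 :=
    fun i hi => h.comm 0 (i+2) (by omega) hi
  -- fixed points
  have hfix : ∀ x, s 0 x = x → s 4 x = s 5 x := by
    let t : ℕ → Equiv.Perm {x // s 0 x = x} := fun i =>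
      if hi : i + 2 < m then (s (i+2)).subtypePerm (fun x => fixed_iff _ _ (hc i hi) x) else 1
    have hcard : Fintype.card {x // s 0 x = x} ≤ m - 2 := by
      have hs : 1 < (s 0).support.card := by
        by_contra hh
        exact h1 (Equiv.Perm.card_support_le_one.1 (not_lt.1 hh))
      have e1 : Fintype.card {x // s 0 x = x} = (Finset.univ.filter (fun x => s 0 x = x)).card :=
        Fintype.card_subtype _
      have e2 := Finset.card_filter_add_card_filter_not (s := (Finset.univ : Finset X))
        (fun x => s 0 x = x)
      have e3 : (s 0).support = Finset.univ.filter (fun x => ¬ s 0 x = x) := by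
        ext x; simp
      rw [e3] at hs
      rw [Finset.card_univ] at e2
      omega
    have ht : BR (m-2) t := by
      constructor
      · intro i j hij hj
        have hi : i + 2 < m := by omega
        have hj : j + 2 < m := by omega
        ext x
        have := congrArg (fun p => p x.1) (h.comm (i+2) (j+2) (by omega) hj)
        simp only [t, hi, hj, dif_pos]
        exact this
      · intro i hi
        have hi1 : i + 2 < m := by omega
        have hj : i + 1 + 2 < m := by omega
        ext x
        have := congrArg (fun p => p x.1) (h.braid (i+2) (by omega))
        simp only [t, hi1, hj, dif_pos]
        exact this
    have key := IH _ hcard t ht 2 3 (by omega) (by omega)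
    intro x hx
    have := congrArg (fun p => (p ⟨x, hx⟩).1) key
    simpa [t, (by omega : 4 < m), (by omega : 5 < m)] using this
  -- cycles
  have hcyc : ∀ i j, i + 2 < m → j + 2 < m → ∀ x, s 0 x ≠ x →
      (s 0).SameCycle x (((s (i+2))⁻¹ * s (j+2)) x) := by
    have hmem : ∀ i, i + 2 < m → s (i+2) ∈ Subgroup.centralizer {s 0} := by
      intro i hi
      rw [Subgroup.mem_centralizer_singleton_iff]
      first
        | exact hc i hi
        | exact (hc i hi).symm
    let t' : ℕ → Subgroup.centralizer {s 0} := fun i =>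
      if hi : i + 2 < m then ⟨s (i+2), hmem i hi⟩ else 1
    have ht' : BR (m-2) t' := by
      constructor
      · intro i j hij hj
        have hi : i + 2 < m := by omega
        have hj : j + 2 < m := by omega
        apply Subtype.ext
        simpa [t', hi, hj] using h.comm (i+2) (j+2) (by omega) hj
      · intro i hi
        have hi1 : i + 2 < m := by omega
        have hj : i + 1 + 2 < m := by omega
        apply Subtype.ext
        simpa [t', hi1, hj] using h.braid (i+2) (by omega)
    have key := IH _ (by have := card_cycles (s 0); omega) _
      (ht'.map (Equiv.Perm.OnCycleFactors.toPermHom (s 0)))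
    intro i j hi hj x hx
    have hx' : x ∈ (s 0).support := by simpa using hx
    have k1 := congrArg (fun p => (p ⟨(s 0).cycleOf x,
      Equiv.Perm.cycleOf_mem_cycleFactorsFinset_iff.2 hx'⟩).1) (key i j (by omega) (by omega))
    simp only [Equiv.Perm.OnCycleFactors.coe_toPermHom] at k1
    simp only [t', hi, hj, dif_pos] at k1
    have k2 : ((s (i+2))⁻¹ * s (j+2)) * (s 0).cycleOf x * ((s (i+2))⁻¹ * s (j+2))⁻¹
        = (s 0).cycleOf x := by
      calc _ = (s (i+2))⁻¹ * (s (j+2) * (s 0).cycleOf x * (s (j+2))⁻¹) * s (i+2) := by group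
        _ = (s (i+2))⁻¹ * (s (i+2) * (s 0).cycleOf x * (s (i+2))⁻¹) * s (i+2) := by rw [← k1]
        _ = _ := by group
    generalize (s (i+2))⁻¹ * s (j+2) = u at k2 ⊢
    have k3 := mul_inv_eq_iff_eq_mul.1 k2
    have k4 : u x ∈ ((s 0).cycleOf x).support := by
      rw [Equiv.Perm.mem_support]
      rw [Ne, fixed_iff _ _ k3.symm]
      simpa using hx
    exact (Equiv.Perm.mem_support_cycleOf_iff.1 k4).1
  refine h.all 4 (by omega) (braid_comm_eq (h.braid 4 (by omega)) ?_)
  ext x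
  simp only [Equiv.Perm.mul_apply]
  by_cases hx : s 0 x = x
  · have a1 := hfix x hx
    have a2 := hfix (s 4 x) ((fixed_iff _ _ (hc 2 (by omega)) x).2 hx)
    rw [← a1, ← a2]
  · obtain ⟨a, ha⟩ := hcyc 0 2 (by omega) (by omega) x hx
    obtain ⟨b, hb⟩ := hcyc 0 3 (by omega) (by omega) x hx
    have c2 : Commute (s 0) (s 2) := hc 0 (by omega)
    have c4 : Commute (s 0) (s 4) := hc 2 (by omega)
    have c5 : Commute (s 0) (s 5) := hc 3 (by omega)
    have c24 : Commute (s 2) (s 4) := h.comm 2 4 (by omega) (by omega)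
    have c25 : Commute (s 2) (s 5) := h.comm 2 5 (by omega) (by omega)
    simp only [Nat.zero_add, Nat.reduceAdd] at ha hb
    have cu : ∀ z : ℤ, Commute ((s 0)^z) ((s 2)⁻¹ * s 4) := fun z =>
      (c2.inv_right.mul_right c4).zpow_left z
    have cv : ∀ z : ℤ, Commute ((s 0)^z) ((s 2)⁻¹ * s 5) := fun z =>
      (c2.inv_right.mul_right c5).zpow_left z
    have e1 : (((s 2)⁻¹ * s 4) * ((s 2)⁻¹ * s 5)) x = (((s 2)⁻¹ * s 5) * ((s 2)⁻¹ * s 4)) x := by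
      rw [Equiv.Perm.mul_apply, ← hb, ← Equiv.Perm.mul_apply, ← (cu b).eq, Equiv.Perm.mul_apply,
        ← ha]
      rw [Equiv.Perm.mul_apply ((s 2)⁻¹ * s 5), ← ha, ← Equiv.Perm.mul_apply ((s 2)⁻¹ * s 5),
        ← (cv a).eq, Equiv.Perm.mul_apply ((s 0)^a), ← hb]
      rw [← Equiv.Perm.mul_apply, ← Equiv.Perm.mul_apply, ← zpow_add, ← zpow_add, add_comm]
    have e2 : ((s 2)⁻¹ * s 4) * ((s 2)⁻¹ * s 5) = ((s 2)⁻¹ * (s 2)⁻¹) * (s 4 * s 5) := by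
      rw [mul_assoc, ← mul_assoc (s 4), ← c24.inv_left.eq]; group
    have e3 : ((s 2)⁻¹ * s 5) * ((s 2)⁻¹ * s 4) = ((s 2)⁻¹ * (s 2)⁻¹) * (s 5 * s 4) := by
      rw [mul_assoc, ← mul_assoc (s 5), ← c25.inv_left.eq]; group
    rw [e2, e3, Equiv.Perm.mul_apply, Equiv.Perm.mul_apply ((s 2)⁻¹ * (s 2)⁻¹)] at e1
    exact (Equiv.injective _) e1

/-- Artin. Let `n ≥ 7` and `2 ≤ k < n`. Then every transitive
homomorphism `ψ : B_n → Sym_k` is cyclic. -/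
theorem transitive_hom_small_is_cyclic (n k : ℕ) (hn : 7 ≤ n) (hk2 : 2 ≤ k) (hkn : k < n)
    (ψ : BraidGroup n →* Equiv.Perm (Fin k)) (hψ : IsTransitiveHom ψ) :
    IsCyclicHom ψ := by
  intro i j
  let s : ℕ → Equiv.Perm (Fin k) := fun i => if hi : i < n - 1 then ψ (σ ⟨i, hi⟩) else 1
  have hs : BR (n-1) s := by
    constructor
    · intro i j hij hj
      have hi : i < n - 1 := by omega
      simp only [s, hi, hj, dif_pos, ← map_mul]
      congr 1
      have := PresentedGroup.one_of_mem (rels := braidRels n)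
        (Or.inl ⟨⟨i, hi⟩, ⟨j, hj⟩, Or.inl hij, rfl⟩)
      rw [map_mul, map_inv, mul_inv_eq_one] at this
      exact this
    · intro i hj
      have hi : i < n - 1 := by omega
      simp only [s, hi, hj, dif_pos, ← map_mul]
      congr 1
      have := PresentedGroup.one_of_mem (rels := braidRels n)
        (Or.inr ⟨⟨i, hi⟩, ⟨i+1, hj⟩, rfl, rfl⟩)
      rw [map_mul, map_inv, mul_inv_eq_one] at this
      exact this
  have := main_aux (n-1) (by omega) (Fin k) (by simp; omega) s hs i j i.2 j.2
  simpa [s] using this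
end

section
/- Let n ≥ 7. Every transitive homomorphism ψ : B_n → Sym_n is either cyclic or conjugate to the standard homomorphism ρ_S, i.e. either ψ(σ_1) = … = ψ(σ_{n−1}), or there exists u ∈ Sym_n such that ψ(σ_i) = u (i, i+1) u^{−1} for all 1 ≤ i ≤ n−1. -/
/-- The image of the generator `σ_{i+1}` under the standard homomorphism
`ρ_S : B_k → Sym_k`: the transposition of the 0-based points `i` and `i+1`
(that is, of the 1-based points `i+1` and `i+2`). -/
def stdGen (k : ℕ) (i : Fin (k - 1)) : Equiv.Perm (Fin k) :=
  Equiv.swap ⟨i, by have := i.isLt; omega⟩ ⟨(i : ℕ) + 1, by have := i.isLt; omega⟩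

namespace ArtinAux

open Equiv Equiv.Perm

/-- A sequence satisfying the braid relations. -/
structure Br {G : Type*} [Group G] (m : ℕ) (s : ℕ → G) : Prop where
  comm : ∀ i j, i + 2 ≤ j → Commute (s i) (s j)
  braid : ∀ i, i + 1 < m → s i * s (i+1) * s i = s (i+1) * s i * s (i+1)

theorem braid_comm_eq {G : Type*} [Group G] {a b : G} (h : a * b * a = b * a * b)
    (hc : Commute a b) : a = b := by
  have h2 : a * b * a = a * b * b := by rw [h, hc.eq]
  exact mul_left_cancel h2

theorem Br.step_up {G : Type*} [Group G] {m : ℕ} {s : ℕ → G} (h : Br m s) {i : ℕ}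
    (hi : i + 2 < m) (e : s i = s (i+1)) : s (i+1) = s (i+2) := by
  apply braid_comm_eq (h.braid (i+1) (by omega))
  rw [← e]; exact h.comm i (i+2) le_rfl

theorem Br.step_down {G : Type*} [Group G] {m : ℕ} {s : ℕ → G} (h : Br m s) {i : ℕ}
    (hi : i + 2 < m) (e : s (i+1) = s (i+2)) : s i = s (i+1) := by
  apply braid_comm_eq (h.braid i (by omega))
  rw [e]; exact h.comm i (i+2) le_rfl

theorem Br.down {G : Type*} [Group G] {m : ℕ} {s : ℕ → G} (h : Br m s) :
    ∀ i : ℕ, i + 1 < m → s i = s (i+1) → s 0 = s 1 := by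
  intro i
  induction i with
  | zero => intro _ e; exact e
  | succ k ih => intro hk e; exact ih (by omega) (h.step_down (by omega) e)

theorem Br.up {G : Type*} [Group G] {m : ℕ} {s : ℕ → G} (h : Br m s) (e : s 0 = s 1) :
    ∀ i : ℕ, i + 1 < m → s i = s (i+1) := by
  intro i
  induction i with
  | zero => intro _; exact e
  | succ k ih => intro hk; exact h.step_up (by omega) (ih (by omega))

theorem Br.all {G : Type*} [Group G] {m : ℕ} {s : ℕ → G} (h : Br m s) (e : s 0 = s 1) :
    ∀ i : ℕ, i < m → s i = s 0 := by
  intro i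
  induction i with
  | zero => intro _; rfl
  | succ k ih => intro hk; rw [← h.up e k hk]; exact ih (by omega)

theorem Br.map {G H : Type*} [Group G] [Group H] {m : ℕ} {s : ℕ → G} (h : Br m s)
    (f : G →* H) : Br m (fun i => f (s i)) where
  comm i j hij := (h.comm i j hij).map f
  braid i hi := by simp only [← map_mul, h.braid i hi]

theorem Br.one {G : Type*} [Group G] {m : ℕ} {s : ℕ → G} (h : Br m s) (i : ℕ)
    (hi : i + 1 < m) (e : s i = 1 ∨ s (i+1) = 1) : s 0 = s 1 := by
  apply h.down i hi
  apply braid_comm_eq (h.braid i hi)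
  rcases e with e | e <;> rw [e]
  · exact Commute.one_left _
  · exact Commute.one_right _

theorem Br.inj {G : Type*} [Group G] {m : ℕ} (hm : 6 ≤ m) {s : ℕ → G} (h : Br m s)
    (i j : ℕ) (hij : i < j) (hj : j < m) (e : s i = s j) : s 0 = s 1 := by
  rcases Nat.lt_or_ge (i + 2) j with h3 | h3
  · apply h.down i (by omega)
    apply braid_comm_eq (h.braid i (by omega))
    rw [e]
    exact (h.comm (i+1) j (by omega)).symm
  · rcases Nat.lt_or_ge (i + 1) j with h2 | h2
    · obtain rfl : j = i + 2 := by omega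
      rcases Nat.lt_or_ge (i + 3) m with h4 | h4
      · apply h.down (i+2) (by omega)
        apply braid_comm_eq (h.braid (i+2) (by omega))
        rw [← e]
        exact h.comm i (i+3) (by omega)
      · obtain ⟨k, rfl⟩ : ∃ k, i = k + 1 := ⟨i - 1, by omega⟩
        apply h.down k (by omega)
        apply braid_comm_eq (h.braid k (by omega))
        rw [e]
        exact h.comm k (k+1+2) (by omega)
    · obtain rfl : j = i + 1 := by omega
      exact h.down i (by omega) e

set_option maxRecDepth 100000 in
theorem base4 : ∀ s : Equiv.Perm (Fin 4), s ≠ 1 → ∀ a, s * a = a * s → ∀ b,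
    s * b = b * s → a * b * a = b * a * b → a = b := by
  decide +kernel

theorem P4 {α : Type} [Fintype α] (hc : Fintype.card α ≤ 4) {s : ℕ → Perm α}
    (h : Br 4 s) : s 0 = s 1 := by
  obtain ⟨ι⟩ := Function.Embedding.nonempty_of_card_le (α := α) (β := Fin 4) (by simpa using hc)
  have hf := viaEmbeddingHom_injective ι
  have h' := h.map (viaEmbeddingHom ι)
  by_cases h1 : viaEmbeddingHom ι (s 3) = 1
  · have : s 3 = 1 := hf (by rw [h1, map_one])
    exact h.one 2 (by omega) (Or.inr this)
  · exact hf (base4 _ h1 _ (h'.comm 0 3 (by omega)).symm.eq _ (h'.comm 1 3 (by omega)).symm.eq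
      (h'.braid 0 (by omega)))

theorem three_pts {α : Type} {x y : Perm α} {p : α} (h : x (y p) ≠ y (x p)) :
    ∃ a b : α, p ≠ a ∧ p ≠ b ∧ a ≠ b ∧
      (∃ g ∈ Subgroup.closure {x, y}, g p = a) ∧ (∃ g ∈ Subgroup.closure {x, y}, g p = b) := by
  have hx : x ∈ Subgroup.closure {x, y} := Subgroup.subset_closure (by simp)
  have hy : y ∈ Subgroup.closure {x, y} := Subgroup.subset_closure (by simp)
  have hxy := mul_mem hx hy
  have hyx := mul_mem hy hx
  by_cases h1 : x p = p
  · have h2 : y p ≠ p := fun h2 => h (by rw [h2, h1, h2])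
    refine ⟨y p, x (y p), h2.symm, ?_, ?_, ⟨y, hy, rfl⟩, ⟨_, hxy, rfl⟩⟩
    · intro e; apply h2; apply x.injective; rw [← e, h1]
    · intro e; apply h; rw [← e, h1]
  · by_cases h2 : y p = p
    · refine ⟨x p, y (x p), Ne.symm h1, ?_, ?_, ⟨x, hx, rfl⟩, ⟨_, hyx, rfl⟩⟩
      · intro e; apply h1; apply y.injective; rw [← e, h2]
      · intro e; apply h; rw [← e, h2]
    · by_cases h3 : x p = y p
      · by_cases h4 : x (y p) = p
        · refine ⟨x p, y (x p), Ne.symm h1, ?_, ?_, ⟨x, hx, rfl⟩, ⟨_, hyx, rfl⟩⟩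
          · intro e; exact h (by rw [h4, ← e])
          · intro e; apply h1; apply y.injective; rw [← e, h3]
        · refine ⟨x p, x (y p), Ne.symm h1, Ne.symm h4, ?_, ⟨x, hx, rfl⟩, ⟨_, hxy, rfl⟩⟩
          intro e; exact h2 (x.injective e.symm)
      · exact ⟨x p, y p, Ne.symm h1, Ne.symm h2, h3, ⟨x, hx, rfl⟩, ⟨y, hy, rfl⟩⟩

theorem six_le {α : Type} [Fintype α] (hc : Fintype.card α ≤ 5) (a b c d e f : α)
    (h : [a, b, c, d, e, f].Nodup) : False := by
  have := h.length_le_card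
  simp at this
  omega

theorem P5 {α : Type} [Fintype α] (hc : Fintype.card α ≤ 5) {x y u v : Perm α}
    (hxu : Commute x u) (hxv : Commute x v) (hyu : Commute y u) (hyv : Commute y v)
    (hb : u * v * u = v * u * v) : Commute x y ∨ Commute u v := by
  by_contra hcon
  push Not at hcon
  obtain ⟨hn1, hn2⟩ := hcon
  obtain ⟨p, hp⟩ : ∃ p, x (y p) ≠ y (x p) := by
    by_contra hh; push Not at hh; exact hn1 (Equiv.ext hh)
  obtain ⟨q, hq⟩ : ∃ q, u (v q) ≠ v (u q) := by
    by_contra hh; push Not at hh; exact hn2 (Equiv.ext hh)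
  set H1 := Subgroup.closure {x, y} with hH1
  set H2 := Subgroup.closure {u, v} with hH2
  have hu : u ∈ H2 := Subgroup.subset_closure (by simp)
  have hv : v ∈ H2 := Subgroup.subset_closure (by simp)
  have hcomm : ∀ g ∈ H1, ∀ h ∈ H2, ∀ z, g (h z) = h (g z) := by
    have key : H1 ≤ Subgroup.centralizer (H2 : Set (Perm α)) := by
      rw [hH1, Subgroup.closure_le]
      intro g hg
      rw [SetLike.mem_coe, hH2, Subgroup.centralizer_closure, Subgroup.mem_centralizer_iff]
      intro k hk
      rcases hg with rfl | rfl <;> rcases hk with rfl | rfl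
      · exact hxu.symm.eq
      · exact hxv.symm.eq
      · exact hyu.symm.eq
      · exact hyv.symm.eq
    intro g hg h hh z
    have := Subgroup.mem_centralizer_iff.1 (key hg) h hh
    exact (congrArg (fun k : Perm α => k z) this).symm
  obtain ⟨a, b, hpa, hpb, hab, ⟨ga, hga, ea⟩, ⟨gb, hgb, eb⟩⟩ := three_pts hp
  obtain ⟨c, d, hqc, hqd, hcd, ⟨gc, hgc, ec⟩, ⟨gd, hgd, ed⟩⟩ := three_pts hq
  -- the H1-orbit of p
  let O : Set α := {z | ∃ g ∈ H1, g p = z}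
  have hpO : p ∈ O := ⟨1, one_mem _, rfl⟩
  have haO : a ∈ O := ⟨ga, hga, ea⟩
  have hbO : b ∈ O := ⟨gb, hgb, eb⟩
  have hO1 : ∀ g ∈ H1, ∀ z ∈ O, g z ∈ O := by
    rintro g hg _ ⟨k, hk, rfl⟩; exact ⟨g * k, mul_mem hg hk, rfl⟩
  have hO1' : ∀ g ∈ H1, ∀ z, g z ∈ O → z ∈ O := by
    intro g hg z hz
    have := hO1 g⁻¹ (inv_mem hg) _ hz
    simpa using this
  have hO2 : ∀ h ∈ H2, ∀ z ∈ O, h z ∈ O := by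
    intro h hh
    have hhp : h p ∈ O := by
      by_contra hno
      have hno' : ∀ g ∈ H1, g (h p) ∉ O := fun g hg hm => hno (hO1' g hg _ hm)
      have n1 := hno' ga hga
      have n2 := hno' gb hgb
      rw [hcomm ga hga h hh, ea] at n1
      rw [hcomm gb hgb h hh, eb] at n2
      have m1 : ∀ z ∈ O, z ≠ h p := fun z hz e => hno (e ▸ hz)
      have m2 : ∀ z ∈ O, z ≠ h a := fun z hz e => n1 (e ▸ hz)
      have m3 : ∀ z ∈ O, z ≠ h b := fun z hz e => n2 (e ▸ hz)
      apply six_le hc p a b (h p) (h a) (h b)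
      simp [hpa, hpb, hab, m1 p hpO, m2 p hpO, m3 p hpO, m1 a haO, m2 a haO, m3 a haO,
        m1 b hbO, m2 b hbO, m3 b hbO]
    rintro _ ⟨k, hk, rfl⟩
    rw [← hcomm k hk h hh]
    exact hO1 k hk _ hhp
  have hO2' : ∀ g ∈ H2, ∀ z, g z ∈ O → z ∈ O := by
    intro g hg z hz
    have := hO2 g⁻¹ (inv_mem hg) _ hz
    simpa using this
  have hqO : q ∈ O := by
    by_contra hno
    have n1 : c ∉ O := fun hm => hno (hO2' gc hgc _ (ec ▸ hm))
    have n2 : d ∉ O := fun hm => hno (hO2' gd hgd _ (ed ▸ hm))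
    have m1 : ∀ z ∈ O, z ≠ q := fun z hz e => hno (e ▸ hz)
    have m2 : ∀ z ∈ O, z ≠ c := fun z hz e => n1 (e ▸ hz)
    have m3 : ∀ z ∈ O, z ≠ d := fun z hz e => n2 (e ▸ hz)
    apply six_le hc p a b q c d
    simp [hpa, hpb, hab, hqc, hqd, hcd, m1 p hpO, m2 p hpO, m3 p hpO, m1 a haO, m2 a haO,
      m3 a haO, m1 b hbO, m2 b hbO, m3 b hbO]
  have hsemi : ∀ g ∈ H2, ∀ k ∈ H2, ∀ z ∈ O, g z = k z → ∀ w ∈ O, g w = k w := by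
    rintro g hg k hk _ ⟨r, hr, rfl⟩ e _ ⟨t, ht, rfl⟩
    rw [← hcomm r hr g hg, ← hcomm r hr k hk] at e
    rw [← hcomm t ht g hg, ← hcomm t ht k hk, r.injective e]
  have huO := hO2 u hu
  have hvO := hO2 v hv
  have h1 := one_mem H2
  have hbr : ∀ z, u (v (u z)) = v (u (v z)) := fun z => congrArg (fun k : Perm α => k z) hb
  have hu1 : ∀ z ∈ O, u z ≠ z := by
    intro z hz e
    have := hsemi u hu 1 h1 z hz e
    simp only [Perm.one_apply] at this
    exact hq (by rw [this _ (hvO q hqO), this _ hqO])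
  have hv1 : ∀ z ∈ O, v z ≠ z := by
    intro z hz e
    have := hsemi v hv 1 h1 z hz e
    simp only [Perm.one_apply] at this
    exact hq (by rw [this _ (huO q hqO), this _ hqO])
  have huv : ∀ z ∈ O, u z ≠ v z := by
    intro z hz e
    have := hsemi u hu v hv z hz e
    exact hq (by rw [this _ (hvO q hqO), this _ hqO])
  have huv1 : ∀ z ∈ O, u (v z) ≠ z := by
    intro z hz e
    have := hsemi (u * v) (mul_mem hu hv) 1 h1 z hz e
    simp only [Perm.one_apply, Perm.mul_apply] at this
    have h3 := u.injective (this (u q) (huO q hqO))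
    exact hq (by rw [this _ hqO, h3])
  have hvu1 : ∀ z ∈ O, v (u z) ≠ z := by
    intro z hz e
    have := hsemi (v * u) (mul_mem hv hu) 1 h1 z hz e
    simp only [Perm.one_apply, Perm.mul_apply] at this
    have h3 := v.injective (this (v q) (hvO q hqO))
    exact hq (by rw [this _ hqO, h3])
  have huvu1 : ∀ z ∈ O, u (v (u z)) ≠ z := by
    intro z hz e
    have := hsemi (u * v * u) (mul_mem (mul_mem hu hv) hu) 1 h1 z hz e
    simp only [Perm.one_apply, Perm.mul_apply] at this
    -- u v u = 1 and v u v = 1 on O, so u (u v u) = u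
    have e1 := this (u q) (huO q hqO)
    have e2 := u.injective e1
    have e3 := this q hqO
    -- v u u q = q, u v u q = q
    have e4 := this (v q) (hvO q hqO)
    rw [hbr] at e4
    have e5 := v.injective e4
    -- u v v q = q , v u u q = q
    have e6 : u (v (v q)) = u (v (u q)) := by rw [e5, e3]
    exact huv q hqO (v.injective (u.injective e6)).symm
  have quO := huO q hqO
  have qvO := hvO q hqO
  apply six_le hc q (u q) (v q) (u (v q)) (v (u q)) (u (v (u q)))
  have d1 : u q ≠ v (u q) := (hv1 _ quO).symm
  have d2 : v q ≠ u (v q) := (hu1 _ qvO).symm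
  have d3 : u q ≠ u (v q) := fun e => hv1 q hqO (u.injective e).symm
  have d4 : v q ≠ v (u q) := fun e => hu1 q hqO (v.injective e).symm
  have d5 : u q ≠ u (v (u q)) := fun e => hvu1 q hqO (u.injective e).symm
  have d6 : v q ≠ u (v (u q)) := fun e => by
    rw [hbr] at e; exact huv1 q hqO (v.injective e).symm
  have d7 : u (v q) ≠ u (v (u q)) := fun e => hu1 q hqO (v.injective (u.injective e)).symm
  have d8 : v (u q) ≠ u (v (u q)) := fun e => hu1 _ (hvO _ quO) e.symm
  simp [(hu1 q hqO).symm, (hv1 q hqO).symm, (huv1 q hqO).symm, (hvu1 q hqO).symm,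
    (huvu1 q hqO).symm, huv q hqO, d1, d2, d3, d4, d5, d6, d7, d8, hq]

/-- action of the centralizer on the fixed points -/
def fixHom {α : Type} (t : Perm α) : Subgroup.centralizer {t} →* Perm {p // t p = p} where
  toFun k := (k : Perm α).subtypePerm (by
    intro p
    have h : t * k = k * t := Subgroup.mem_centralizer_iff.1 k.2 t rfl
    have h2 : t ((k : Perm α) p) = (k : Perm α) (t p) := congrArg (fun f : Perm α => f p) h
    rw [h2]
    exact (k : Perm α).injective.eq_iff)
  map_one' := by ext; simp
  map_mul' a b := by ext; rfl

theorem comm_of_sameCycle {α : Type} {t x y : Perm α} (hx : Commute t x) (hy : Commute t y)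
    (h1 : ∀ p, t.SameCycle p (x p)) (h2 : ∀ p, t.SameCycle p (y p)) : Commute x y := by
  apply Equiv.ext
  intro p
  obtain ⟨a, ha⟩ := h1 p
  obtain ⟨b, hb⟩ := h2 p
  have hxa : ∀ n : ℤ, ∀ z, x ((t ^ n) z) = (t ^ n) (x z) := fun n z =>
    (congrArg (fun f : Perm α => f z) (hx.zpow_left n).eq).symm
  have hya : ∀ n : ℤ, ∀ z, y ((t ^ n) z) = (t ^ n) (y z) := fun n z =>
    (congrArg (fun f : Perm α => f z) (hy.zpow_left n).eq).symm
  rw [Perm.mul_apply, Perm.mul_apply, ← hb, hxa, ← ha, hya, ← hb, ← Perm.mul_apply,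
    ← Perm.mul_apply, ← zpow_add, ← zpow_add, add_comm]

theorem sameCycle_of {α : Type} [Fintype α] [DecidableEq α] {t : Perm α}
    (x : Subgroup.centralizer {t}) (h1 : fixHom t x = 1) (h2 : OnCycleFactors.toPermHom t x = 1)
    (p : α) : t.SameCycle p ((x : Perm α) p) := by
  by_cases hp : t p = p
  · have : (x : Perm α) p = p := by
      have := congrArg (fun f : Perm {p // t p = p} => (f ⟨p, hp⟩ : α)) h1
      simpa [fixHom] using this
    rw [this]
  · have hk := (OnCycleFactors.mem_ker_toPermHom_iff t x).1 h2 (t.cycleOf p)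
      (cycleOf_mem_cycleFactorsFinset_iff.2 (mem_support.2 hp))
    have : (x : Perm α) p ∈ (t.cycleOf p).support := by
      rw [mem_support]
      intro e
      have e2 := congrArg (fun f : Perm α => f p) hk.eq
      simp only [Perm.mul_apply] at e2
      rw [e] at e2
      have := (x : Perm α).injective e2
      rw [cycleOf_apply_self] at this
      exact hp this
    exact (mem_support_cycleOf_iff.1 this).1

theorem card_cycles {α : Type} [Fintype α] [DecidableEq α] (t : Perm α) :
    2 * Fintype.card t.cycleFactorsFinset ≤ Fintype.card α := by
  have h1 := Multiset.card_nsmul_le_sum (s := t.cycleType) (a := 2)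
    (fun x hx => two_le_of_mem_cycleType hx)
  rw [sum_cycleType] at h1
  have h2 := Finset.card_le_univ t.support
  have h3 : Multiset.card t.cycleType = Fintype.card t.cycleFactorsFinset := by
    rw [cycleType_def]; simp
  rw [h3] at h1
  simp only [smul_eq_mul] at h1
  omega

theorem step {m : ℕ} (hm : 4 ≤ m)
    (IH : ∀ (β : Type) [Fintype β] (s : ℕ → Perm β), Fintype.card β ≤ m → Br m s → s 0 = s 1)
    {α : Type} [Fintype α] [DecidableEq α] (hc : Fintype.card α ≤ m + 3) {s : ℕ → Perm α}
    (h : Br (m + 2) s) (hne : s 0 ≠ s 1) : (s 0).support.card + m + 1 ≤ Fintype.card α := by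
  have hmem : ∀ i, s (i + 2) ∈ Subgroup.centralizer {s 0} := by
    intro i
    rw [Subgroup.mem_centralizer_iff]
    rintro _ rfl
    exact (h.comm 0 (i+2) (by omega)).eq
  let t : ℕ → Subgroup.centralizer {s 0} := fun i => ⟨s (i+2), hmem i⟩
  have ht : Br m t :=
    ⟨fun i j hij => Subtype.ext (h.comm (i+2) (j+2) (by omega)).eq,
     fun i hi => Subtype.ext (h.braid (i+2) (by omega))⟩
  have key : ∀ (β : Type) [Fintype β] (f : Subgroup.centralizer {s 0} →* Perm β),
      Fintype.card β ≤ m → ∀ i < m, f (t 0 * (t i)⁻¹) = 1 := by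
    intro β _ f hb i hi
    have h1 := (ht.map f)
    have h2 := h1.all (IH β _ hb h1) i hi
    rw [map_mul, map_inv, mul_inv_eq_one]
    exact h2.symm
  by_contra hsup
  push Not at hsup
  apply hne
  apply h.down 2 (by omega)
  have hfix : Fintype.card {p // s 0 p = p} ≤ m := by
    have h1 : (s 0).support.card + Fintype.card {p // s 0 p = p} = Fintype.card α := by
      rw [← Finset.card_add_card_compl (s 0).support, Fintype.card_subtype]
      congr 2
      ext p
      simp
    omega
  have hcyc : Fintype.card (s 0).cycleFactorsFinset ≤ m := by
    have := card_cycles (s 0)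
    omega
  have hs : ∀ i < m, ∀ p, (s 0).SameCycle p (((t 0 * (t i)⁻¹ : Subgroup.centralizer {s 0}) : Perm α) p) := by
    intro i hi p
    exact sameCycle_of _ (key _ _ hfix i hi) (key _ _ hcyc i hi) p
  have hcen : ∀ x : Subgroup.centralizer {s 0}, Commute (s 0) (x : Perm α) := fun x =>
    Subgroup.mem_centralizer_iff.1 x.2 _ rfl
  have hxy := comm_of_sameCycle (hcen _) (hcen _) (hs 1 (by omega)) (hs 3 (by omega))
  have e1 : ((t 0 * (t 1)⁻¹ : Subgroup.centralizer {s 0}) : Perm α) = s 2 * (s 3)⁻¹ := rfl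
  have e2 : ((t 0 * (t 3)⁻¹ : Subgroup.centralizer {s 0}) : Perm α) = s 2 * (s 5)⁻¹ := rfl
  rw [e1, e2] at hxy
  apply braid_comm_eq (h.braid 2 (by omega))
  have c25 := h.comm 2 5 (by omega)
  have c35 := h.comm 3 5 (by omega)
  have c5 : Commute (s 2 * (s 3)⁻¹) (s 5) := c25.mul_left c35.inv_left
  have c2 : Commute (s 2 * (s 3)⁻¹) (s 2) := by
    have := hxy.mul_right c5
    simpa [mul_assoc] using this
  have c3 : Commute ((s 2)⁻¹ * (s 2 * (s 3)⁻¹)) (s 2) := (Commute.refl (s 2)).inv_left.mul_left c2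
  rw [inv_mul_cancel_left] at c3
  exact (Commute.inv_left_iff.1 c3).symm

theorem P0 (m : ℕ) (hm : 4 ≤ m) : ∀ (β : Type) [Fintype β] (s : ℕ → Perm β),
    Fintype.card β ≤ m → Br m s → s 0 = s 1 := by
  induction m using Nat.strong_induction_on with
  | _ m ih =>
    intro β _ s hc h
    classical
    rcases Nat.lt_or_ge m 6 with h6 | h6
    · obtain rfl | rfl : m = 4 ∨ m = 5 := by omega
      · exact P4 hc h
      · rcases P5 hc (h.comm 0 3 (by omega)) (h.comm 0 4 (by omega)) (h.comm 1 3 (by omega))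
          (h.comm 1 4 (by omega)) (h.braid 3 (by omega)) with hh | hh
        · exact braid_comm_eq (h.braid 0 (by omega)) hh
        · exact h.down 3 (by omega) (braid_comm_eq (h.braid 3 (by omega)) hh)
    · by_contra hne
      obtain ⟨k, rfl⟩ : ∃ k, m = k + 2 := ⟨m - 2, by omega⟩
      have := step (by omega) (ih k (by omega) (by omega)) (by omega) h hne
      have h1 : s 0 = 1 := card_support_le_one.1 (by omega)
      exact hne (h.one 0 (by omega) (Or.inl h1))

theorem isSwap_eq {α : Type} [DecidableEq α] {x : Perm α} (hx : x.IsSwap) {p : α} (hp : x p ≠ p) :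
    x = swap p (x p) := by
  obtain ⟨a, b, hab, rfl⟩ := hx
  rcases swap_apply_ne_self_iff.1 hp with ⟨_, rfl | rfl⟩
  · rw [swap_apply_left]
  · rw [swap_apply_right, swap_comm]

theorem swap_disj {α : Type} [DecidableEq α] {x y : Perm α} (hx : x.IsSwap) (hy : y.IsSwap)
    (hc : Commute x y) (hne : x ≠ y) (p : α) (hp : x p ≠ p) : y p = p := by
  by_contra hyp
  have e1 := isSwap_eq hx hp
  have e2 := isSwap_eq hy hyp
  have e3 : swap (y p) (y (x p)) = x := by
    rw [swap_apply_apply, ← e1, ← hc.eq, mul_inv_cancel_right]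
  have e4 : x (y p) ≠ y p := by
    rw [← e3, swap_apply_left]
    exact fun h => hp (y.injective h)
  rw [e1] at e4
  rcases swap_apply_ne_self_iff.1 e4 with ⟨_, h | h⟩
  · exact hyp h
  · apply hne; rw [e1, e2, h]

theorem swap_comm_of {α : Type} [DecidableEq α] {x y : Perm α} {p q : α} (hx : x = swap p q)
    (h1 : y p = p) (h2 : y q = q) : Commute x y := by
  have := mul_swap_eq_swap_mul y p q
  rw [h1, h2, ← hx] at this
  exact this.symm

/-- the path of points -/
def path {α : Type} (s : ℕ → Perm α) (p : α) : ℕ → α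
  | 0 => p
  | i + 1 => s i (path s p i)

theorem final {α : Type} [Fintype α] [DecidableEq α] {m : ℕ} (hm : 6 ≤ m)
    (hc : Fintype.card α = m + 1) {s : ℕ → Perm α} (h : Br m s) (hne : s 0 ≠ s 1) :
    ∃ p : ℕ → α, (∀ i < m, s i = swap (p i) (p (i+1))) ∧
      ∀ i j, i < j → j ≤ m → p i ≠ p j := by
  have hs0 : (s 0).IsSwap := by
    obtain ⟨k, rfl⟩ : ∃ k, m = k + 2 := ⟨m - 2, by omega⟩
    have := step (by omega) (P0 k (by omega)) (by omega) h hne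
    rw [← card_support_eq_two]
    by_contra h2
    have h1 : s 0 = 1 := card_support_le_one.1 (by omega)
    exact hne (h.one 0 (by omega) (Or.inl h1))
  have hs : ∀ i < m, (s i).IsSwap := by
    intro i
    induction i with
    | zero => intro _; exact hs0
    | succ i ih =>
      intro hi
      have h1 := h.braid i hi
      have h2 : s (i+1) = (s i * s (i+1)) * s i * (s i * s (i+1))⁻¹ := by
        rw [eq_mul_inv_iff_mul_eq, h1, mul_assoc]
      rw [h2, ← card_support_eq_two, card_support_conj, card_support_eq_two]
      exact ih (by omega)
  have hdisj : ∀ i j, i + 2 ≤ j → j < m → ∀ p, s i p ≠ p → s j p = p := by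
    intro i j hij hj
    exact swap_disj (hs i (by omega)) (hs j hj) (h.comm i j hij)
      (fun e => hne (h.inj hm i j (by omega) hj e))
  have hnc : ∀ i, i + 1 < m → ¬ Commute (s i) (s (i+1)) := by
    intro i hi hcm
    exact hne (h.down i hi (braid_comm_eq (h.braid i hi) hcm))
  obtain ⟨p0, hp0, hp0'⟩ : ∃ p0, s 0 p0 ≠ p0 ∧ s 1 p0 = p0 := by
    by_contra hcon
    push Not at hcon
    obtain ⟨a, b, hab, e⟩ := hs0
    have ha : s 1 a ≠ a := hcon a (by rw [e, swap_apply_left]; exact hab.symm)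
    have hb : s 1 b ≠ b := hcon b (by rw [e, swap_apply_right]; exact hab)
    have e1 := isSwap_eq (hs 1 (by omega)) ha
    rw [e1] at hb
    rcases swap_apply_ne_self_iff.1 hb with ⟨_, h | h⟩
    · exact hab h.symm
    · exact hne (by rw [e, e1, h])
  have key : ∀ i, i < m → s i (path s p0 i) ≠ path s p0 i ∧
      (i + 1 < m → s (i+1) (path s p0 i) = path s p0 i) := by
    intro i
    induction i with
    | zero => intro _; exact ⟨hp0, fun _ => hp0'⟩
    | succ i ih =>
      intro hi
      obtain ⟨h1, h2⟩ := ih (by omega)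
      have h2 := h2 hi
      refine ⟨fun e => ?_, fun hi2 => ?_⟩
      · exact hnc i hi (swap_comm_of (isSwap_eq (hs i (by omega)) h1) h2 e)
      · exact hdisj i (i+2) le_rfl hi2 _ (fun e => h1 ((s i).injective e))
  have hsw : ∀ i < m, s i = swap (path s p0 i) (path s p0 (i+1)) :=
    fun i hi => isSwap_eq (hs i hi) (key i hi).1
  refine ⟨path s p0, hsw, ?_⟩
  intro i j hij hj e
  have hi := (key i (by omega)).1
  obtain ⟨k, rfl⟩ : ∃ k, j = k + 1 := ⟨j - 1, by omega⟩
  have hk : s k (path s p0 (k+1)) ≠ path s p0 (k+1) :=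
    fun e => (key k (by omega)).1 ((s k).injective e)
  rw [← e] at hk
  rcases Nat.lt_or_ge (i+1) k with h1 | h1
  · exact hk (hdisj i k (by omega) (by omega) _ hi)
  · rcases Nat.lt_or_ge i k with h2 | h2
    · obtain rfl : k = i + 1 := by omega
      exact hk ((key i (by omega)).2 (by omega))
    · obtain rfl : k = i := by omega
      exact hi e.symm

end ArtinAux

/-- Artin. Let `n ≥ 7`. Every transitive homomorphism
`ψ : B_n → Sym_n` is either cyclic or conjugate to the standard homomorphism `ρ_S`,
i.e. there is `u ∈ Sym_n` with `ψ(σ_i) = u (i, i+1) u⁻¹` for all `i`. -/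
theorem transitive_hom_to_symn_cyclic_or_standard (n : ℕ) (hn : 7 ≤ n)
    (ψ : BraidGroup n →* Equiv.Perm (Fin n)) (hψ : IsTransitiveHom ψ) :
    IsCyclicHom ψ ∨
      ∃ u : Equiv.Perm (Fin n), ∀ i : Fin (n - 1), ψ (σ i) = u * stdGen n i * u⁻¹ := by
  classical
  obtain ⟨m, rfl⟩ : ∃ m, n = m + 1 := ⟨n - 1, by omega⟩
  let s : ℕ → Equiv.Perm (Fin (m+1)) := fun i => if h : i < m then ψ (σ ⟨i, h⟩) else 1
  have hs : ∀ i (h : i < m), s i = ψ (σ ⟨i, h⟩) := fun i h => dif_pos h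
  have hBr : ArtinAux.Br m s := by
    constructor
    · intro i j hij
      by_cases hj : j < m
      · rw [hs i (by omega), hs j hj, commute_iff_eq, ← map_mul, ← map_mul]
        congr 1
        have := PresentedGroup.one_of_mem (rels := braidRels (m+1))
          (Or.inl ⟨⟨i, by omega⟩, ⟨j, hj⟩, Or.inl hij, rfl⟩)
        rw [map_mul, map_inv, mul_inv_eq_one] at this
        exact this
      · have : s j = 1 := dif_neg hj
        rw [this]; exact Commute.one_right _
    · intro i hi
      rw [hs i (by omega), hs (i+1) hi]
      simp only [← map_mul]
      congr 1
      have := PresentedGroup.one_of_mem (rels := braidRels (m+1))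
        (Or.inr ⟨⟨i, by omega⟩, ⟨i+1, hi⟩, rfl, rfl⟩)
      rw [map_mul, map_inv, mul_inv_eq_one] at this
      exact this
  by_cases h01 : s 0 = s 1
  · left
    intro i j
    have hi := hBr.all h01 i i.2
    have hj := hBr.all h01 j j.2
    rw [hs i i.2] at hi
    rw [hs j j.2] at hj
    exact hi.trans hj.symm
  · right
    obtain ⟨p, hp, hinj⟩ := ArtinAux.final (by omega) (by simp) hBr h01
    have hpi : Function.Injective (fun i : Fin (m+1) => p i) := by
      intro i j e
      rcases lt_trichotomy (i : ℕ) j with h | h | h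
      · exact absurd e (hinj i j h (by omega))
      · exact Fin.ext h
      · exact absurd e.symm (hinj j i h (by omega))
    refine ⟨Equiv.ofBijective _ (Finite.injective_iff_bijective.1 hpi), fun i => ?_⟩
    have h1 := hp i i.2
    rw [hs i i.2] at h1
    rw [stdGen, ← Equiv.swap_apply_apply]
    exact h1
end

section
/- Let n ≥ 7. The assignment σ_i ↦ (i, n+i+1, n+i, i+1) (a 4-cycle in Sym_{2n}), for 1 ≤ i ≤ n−1, induces a well-defined group homomorphism ρ_{L1} : B_n → Sym_{2n}, and ρ_{L1} is transitive. -/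
/-- The transposition `(j, n+j)` (0-based) in `Sym_{2n}`. -/
def tw (n : ℕ) (j : Fin n) : Equiv.Perm (Fin (2 * n)) :=
  Equiv.swap ⟨j, by have := j.isLt; omega⟩ ⟨n + j, by have := j.isLt; omega⟩

/-- The 4-cycle `(a, b, c, d)` sending `a ↦ b ↦ c ↦ d ↦ a` (for pairwise distinct
points), written as the product of transpositions `(a d)(a c)(a b)`. -/
def cyc4 {m : ℕ} (a b c d : Fin m) : Equiv.Perm (Fin m) :=
  Equiv.swap a d * Equiv.swap a c * Equiv.swap a b

/-- `ρ_{L1}(σ_{i+1})`: the 4-cycle `(i, n+i+1, n+i, i+1)` on the 0-based points of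
`Sym_{2n}`, for `i : Fin (n-1)`. -/
def linL1Gen (n : ℕ) (i : Fin (n - 1)) : Equiv.Perm (Fin (2 * n)) :=
  cyc4 ⟨i, by have := i.isLt; omega⟩ ⟨n + i + 1, by have := i.isLt; omega⟩
    ⟨n + i, by have := i.isLt; omega⟩ ⟨(i : ℕ) + 1, by have := i.isLt; omega⟩

/-- The product `∏_{j < i} (j, n+j)` (0-based) in `Sym_{2n}`. -/
def lowTw (n : ℕ) (i : Fin (n - 1)) : Equiv.Perm (Fin (2 * n)) :=
  ((List.finRange n).map (fun j : Fin n => if (j : ℕ) < (i : ℕ) then tw n j else 1)).prod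

/-- The product `∏_{j ≥ i+2} (j, n+j)` (0-based) in `Sym_{2n}`. -/
def highTw (n : ℕ) (i : Fin (n - 1)) : Equiv.Perm (Fin (2 * n)) :=
  ((List.finRange n).map (fun j : Fin n => if (i : ℕ) + 2 ≤ (j : ℕ) then tw n j else 1)).prod

/-- `ρ_{L2}(σ_{i+1}) = ∏_{j<i}(j, n+j) · (i, n+i+1, n+i, i+1) · ∏_{j≥i+2}(j, n+j)`
(0-based) in `Sym_{2n}`. -/
def linL2Gen (n : ℕ) (i : Fin (n - 1)) : Equiv.Perm (Fin (2 * n)) :=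
  lowTw n i * linL1Gen n i * highTw n i

/-- `ρ_{L3}(σ_{i+1}) = ∏_{j<i}(j, n+j) · (i, n+i+1)(i+1, n+i) · ∏_{j≥i+2}(j, n+j)`
(0-based) in `Sym_{2n}`. -/
def linL3Gen (n : ℕ) (i : Fin (n - 1)) : Equiv.Perm (Fin (2 * n)) :=
  lowTw n i *
    (Equiv.swap ⟨i, by have := i.isLt; omega⟩ ⟨n + i + 1, by have := i.isLt; omega⟩ *
     Equiv.swap ⟨(i : ℕ) + 1, by have := i.isLt; omega⟩ ⟨n + i, by have := i.isLt; omega⟩) *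
  highTw n i

theorem linL1Gen_val (n : ℕ) (i : Fin (n - 1)) (x : Fin (2 * n)) :
    ((linL1Gen n i x : Fin (2 * n)) : ℕ) =
      if (x : ℕ) = i then n + i + 1 else if (x : ℕ) = n + i + 1 then n + i
      else if (x : ℕ) = n + i then i + 1 else if (x : ℕ) = i + 1 then i else x := by
  have hi := i.isLt
  have hx := x.isLt
  simp only [linL1Gen, cyc4, Equiv.Perm.mul_apply, Equiv.swap_apply_def, Fin.ext_iff]
  split_ifs <;> simp_all <;> omega

theorem linL1Gen_comm (n : ℕ) (i j : Fin (n - 1)) (h : (i : ℕ) + 2 ≤ j) :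
    linL1Gen n i * linL1Gen n j = linL1Gen n j * linL1Gen n i := by
  have hi := i.isLt
  have hj := j.isLt
  ext x
  have hx := x.isLt
  simp only [Equiv.Perm.mul_apply]
  have h1 := linL1Gen_val n i x
  have h2 := linL1Gen_val n j x
  have h3 := linL1Gen_val n i (linL1Gen n j x)
  have h4 := linL1Gen_val n j (linL1Gen n i x)
  grind (splits := 60)

theorem linL1Gen_braid (n : ℕ) (i j : Fin (n - 1)) (h : (j : ℕ) = i + 1) :
    linL1Gen n i * linL1Gen n j * linL1Gen n i = linL1Gen n j * linL1Gen n i * linL1Gen n j := by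
  have hi := i.isLt
  have hj := j.isLt
  ext x
  have hx := x.isLt
  simp only [Equiv.Perm.mul_apply]
  have h1 := linL1Gen_val n i x
  have h2 := linL1Gen_val n j x
  have h3 := linL1Gen_val n i (linL1Gen n j x)
  have h4 := linL1Gen_val n j (linL1Gen n i x)
  have h5 := linL1Gen_val n j (linL1Gen n i (linL1Gen n j x))
  have h6 := linL1Gen_val n i (linL1Gen n j (linL1Gen n i x))
  grind (splits := 60)

theorem linL1Gen_desc (n : ℕ) (hn : 7 ≤ n) (x : Fin (2 * n)) (hx : 0 < (x : ℕ)) :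
    ∃ i : Fin (n - 1), (linL1Gen n i x : ℕ) < x := by
  have hx2 := x.isLt
  by_cases h1 : (x : ℕ) < n
  · refine ⟨⟨x - 1, by omega⟩, ?_⟩
    rw [linL1Gen_val]
    simp only
    split_ifs <;> omega
  · by_cases h2 : (x : ℕ) = n
    · refine ⟨⟨0, by omega⟩, ?_⟩
      rw [linL1Gen_val]
      simp only
      split_ifs <;> omega
    · refine ⟨⟨x - n - 1, by omega⟩, ?_⟩
      rw [linL1Gen_val]
      simp only
      split_ifs <;> omega

/-- Lin. For `n ≥ 7`, the assignment
`σ_i ↦ (i, n+i+1, n+i, i+1)` induces a well-defined group homomorphism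
`ρ_{L1} : B_n → Sym_{2n}`, and `ρ_{L1}` is transitive. -/
theorem linL1_exists_and_transitive (n : ℕ) (hn : 7 ≤ n) :
    ∃ ρL1 : BraidGroup n →* Equiv.Perm (Fin (2 * n)),
      (∀ i : Fin (n - 1), ρL1 (σ i) = linL1Gen n i) ∧ IsTransitiveHom ρL1 := by
  have hrel : ∀ r ∈ braidRels n, FreeGroup.lift (linL1Gen n) r = 1 := by
    rintro r (⟨i, j, h, rfl⟩ | ⟨i, j, h, rfl⟩)
    · simp only [map_mul, map_inv, FreeGroup.lift_apply_of]
      rw [mul_inv_eq_one]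
      rcases h with h | h
      · exact linL1Gen_comm n i j h
      · exact (linL1Gen_comm n j i h).symm
    · simp only [map_mul, map_inv, FreeGroup.lift_apply_of]
      rw [mul_inv_eq_one]
      exact linL1Gen_braid n i j h
  have hgen : ∀ i : Fin (n - 1),
      (PresentedGroup.toGroup hrel : BraidGroup n →* _) (σ i) = linL1Gen n i :=
    fun i => PresentedGroup.toGroup.of hrel
  refine ⟨PresentedGroup.toGroup hrel, hgen, ?_⟩
  have key : ∀ (k : ℕ) (x : Fin (2 * n)), (x : ℕ) = k → ∃ g : BraidGroup n,
      (PresentedGroup.toGroup hrel : BraidGroup n →* _) g x = ⟨0, by omega⟩ := by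
    intro k
    induction k using Nat.strong_induction_on with
    | _ k ih =>
      intro x hxk
      by_cases h0 : (x : ℕ) = 0
      · exact ⟨1, by rw [map_one]; exact Fin.ext h0⟩
      · obtain ⟨i, hi⟩ := linL1Gen_desc n hn x (by omega)
        obtain ⟨g, hg⟩ := ih _ (by omega) (linL1Gen n i x) rfl
        exact ⟨g * σ i, by rw [map_mul, Equiv.Perm.mul_apply, hgen]; exact hg⟩
  intro x y
  obtain ⟨g, hg⟩ := key _ x rfl
  obtain ⟨h, hh⟩ := key _ y rfl
  exact ⟨h⁻¹ * g, by rw [map_mul, Equiv.Perm.mul_apply, hg, map_inv, ← hh]; exact Equiv.symm_apply_apply _ _⟩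
end
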